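/- arXiv:2002.12053 — 5 statements merged into one kernel-verified Lean document; each statement's English description precedes it below -/
import Mathlib

section
/- Let F_• be a complex of finitely generated graded free R-modules with homogeneous differentials. Then for every integer i there exists a finite subset D(i) ⊆ G such that for every ring homomorphism φ : A → k from A to a field k, all shifts occurring in the minimal graded free resolution of H_i(F_• ⊗_A k) over the graded polynomial ring R ⊗_A k belong to D(i). -/
/-!
The map `ψ` turns all gradings into `ℤ`-gradings with positive weights, so that there are only
finitely many monomials of bounded degree. It suffices to bound, independently of the fibre, the
rank and the shifts of the `n`-th free module of the minimal resolution for each `n` separately: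
by Hilbert's syzygy theorem (`rank_eq_zero`) only `n ≤ r` matter.

The main point is a bound for the degrees of generators of kernels which does not depend on the
field. Given a homogeneous matrix `X` and a submodule `I` of its target generated in bounded degree,
`exists_genLE_comap_aux` bounds the degrees of generators of `X⁻¹(I)` in terms of the shifts only.
By elimination, this follows from a degree bound for a Gröbner basis of the graph of `X` enlarged
by `I`. Such a bound comes from combining two facts. Buchberger's criterion (`exists_lead_of_mem`)
says that, if no new initial monomials appear between a degree `B` and the maximal degree `β` of
S-pairs of elements of degree at most `B`, then a Gröbner basis exists in degrees at most `B`. And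
a compactness version of Dickson's lemma (`exists_uniform_bound`) says that such a `B` exists below a
bound valid for every monomial submodule: the limit along an ultrafilter of a sequence of
counterexamples would be a monomial submodule that is not finitely generated.

Minimality then propagates the bounds (`exists_step`). A shift exceeding the degrees of generators
would belong to a redundant basis element (`shift_le`); the columns of a minimal differential are
linearly independent over the field, with entries of bounded degree, which bounds the rank
(`rank_le`); and, the columns being nonzero, each new shift differs from an old one by the degree of
one of finitely many monomials. The induction starts with the cycles of the fibre complex, a kernel,
to which the augmentation lifts (`exists_lift`).
-/

/-!
STATEMENT 0 (Lemma `finiteshifts`).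
Setup: `A` a commutative ring, `G` an abelian group, `R = A[x_1,…,x_r]` graded
by `G` via weights `w : Fin r → G` (`deg a = 0` for `a ∈ A`), and a `ℤ`-linear
`ψ : G → ℤ` with `ψ (w i) > 0` for all `i`.

Claim: for a complex `F_•` of finitely generated graded free `R`-modules (with
homogeneous differentials) and every integer `i`, there is a finite set
`D(i) ⊆ G` such that for every ring homomorphism `φ : A → K` to a field `K`,
all shifts occurring in a minimal graded free resolution of
`H_i(F_• ⊗_A K)` over `K[x_1,…,x_r]` belong to `D(i)`.

Homology in position `i + 1` of the fibre complex is
`ker (fibreMap i) / im (fibreMap (i+1))`; letting `i` range over `ℤ` captures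
all positions.
-/

open MvPolynomial

/-- A `ℤ`-indexed complex of finitely generated graded free modules over the
`G`-graded polynomial ring `R = A[x_1,…,x_r]`, presented by matrices with
homogeneous entries. `d i` is the matrix of the differential `F (i+1) → F i`. -/
structure GradedFreeComplex (A : Type) [CommRing A] (G : Type) [AddCommGroup G]
    (r : ℕ) (w : Fin r → G) where
  rank : ℤ → ℕ
  shift : ∀ i : ℤ, Fin (rank i) → G
  d : ∀ i : ℤ, Matrix (Fin (rank i)) (Fin (rank (i + 1))) (MvPolynomial (Fin r) A)
  d_homog : ∀ (i : ℤ) (j k), IsWeightedHomogeneous w (d i j k) (shift (i + 1) k - shift i j)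
  d_comp : ∀ i : ℤ, d i * d (i + 1) = 0

/-- The degree-`μ` strand of the graded free module `⊕_j R(-sh j)`. -/
noncomputable def gradedFreeStrand (K : Type) [CommRing K] {G : Type} [AddCommGroup G]
    (r : ℕ) (w : Fin r → G) (n : ℕ) (sh : Fin n → G) (μ : G) :
    Submodule K (Fin n → MvPolynomial (Fin r) K) :=
  Submodule.pi Set.univ fun j => weightedHomogeneousSubmodule K w (μ - sh j)

/-- The differential of the base change `F_• ⊗_A K` along `φ : A →+* K`. -/
noncomputable def GradedFreeComplex.fibreMap {A : Type} [CommRing A] {G : Type}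
    [AddCommGroup G] {r : ℕ} {w : Fin r → G} (F : GradedFreeComplex A G r w)
    {K : Type} [CommRing K] (φ : A →+* K) (i : ℤ) :
    (Fin (F.rank (i + 1)) → MvPolynomial (Fin r) K) →ₗ[MvPolynomial (Fin r) K]
      (Fin (F.rank i) → MvPolynomial (Fin r) K) :=
  Matrix.mulVecLin ((F.d i).map (MvPolynomial.map φ))

/-- The cycles in position `i+1` of the fibre complex. -/
noncomputable abbrev GradedFreeComplex.fibreCycles {A : Type} [CommRing A] {G : Type}
    [AddCommGroup G] {r : ℕ} {w : Fin r → G} (F : GradedFreeComplex A G r w)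
    {K : Type} [CommRing K] (φ : A →+* K) (i : ℤ) :
    Submodule (MvPolynomial (Fin r) K) (Fin (F.rank (i + 1)) → MvPolynomial (Fin r) K) :=
  LinearMap.ker (F.fibreMap φ i)

/-- The boundaries, viewed inside the cycles. -/
noncomputable abbrev GradedFreeComplex.fibreBoundaries {A : Type} [CommRing A] {G : Type}
    [AddCommGroup G] {r : ℕ} {w : Fin r → G} (F : GradedFreeComplex A G r w)
    {K : Type} [CommRing K] (φ : A →+* K) (i : ℤ) :
    Submodule (MvPolynomial (Fin r) K) ↥(F.fibreCycles φ i) :=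
  (LinearMap.range (F.fibreMap φ (i + 1))).comap (F.fibreCycles φ i).subtype

/-- The homology `H_{i+1}(F_• ⊗_A K)` of the fibre complex. -/
noncomputable abbrev GradedFreeComplex.fibreHomology {A : Type} [CommRing A] {G : Type}
    [AddCommGroup G] {r : ℕ} {w : Fin r → G} (F : GradedFreeComplex A G r w)
    {K : Type} [CommRing K] (φ : A →+* K) (i : ℤ) : Type :=
  ↥(F.fibreCycles φ i) ⧸ F.fibreBoundaries φ i

/-- The induced `G`-grading (by `K`-subspaces) on the fibre homology. -/
noncomputable def GradedFreeComplex.fibreHomologyGrading {A : Type} [CommRing A] {G : Type}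
    [AddCommGroup G] {r : ℕ} {w : Fin r → G} (F : GradedFreeComplex A G r w)
    {K : Type} [Field K] (φ : A →+* K) (i : ℤ) (μ : G) :
    Submodule K (F.fibreHomology φ i) :=
  Submodule.map ((F.fibreBoundaries φ i).mkQ.restrictScalars K)
    (Submodule.comap ((F.fibreCycles φ i).subtype.restrictScalars K)
      (gradedFreeStrand K r w (F.rank (i + 1)) (F.shift (i + 1)) μ))

/-- A minimal graded free resolution of a graded module `H` (with grading `ℋ` by
`K`-subspaces) over the `G`-graded polynomial ring `K[x_1,…,x_r]`: free modules
with shifts `shift n`, homogeneous differentials whose entries have vanishing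
constant term (minimality), an augmentation which is surjective, degree-preserving,
and exactness everywhere. -/
structure MinimalGradedFreeResolution (K : Type) [Field K] {G : Type} [AddCommGroup G]
    (r : ℕ) (w : Fin r → G)
    (H : Type) [AddCommGroup H] [Module (MvPolynomial (Fin r) K) H]
    [Module K H] [IsScalarTower K (MvPolynomial (Fin r) K) H]
    (ℋ : G → Submodule K H) where
  rank : ℕ → ℕ
  shift : ∀ n : ℕ, Fin (rank n) → G
  d : ∀ n : ℕ, Matrix (Fin (rank n)) (Fin (rank (n + 1))) (MvPolynomial (Fin r) K)
  d_homog : ∀ (n : ℕ) (j k), IsWeightedHomogeneous w (d n j k) (shift (n + 1) k - shift n j)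
  minimal : ∀ (n : ℕ) (j k), constantCoeff (d n j k) = 0
  aug : (Fin (rank 0) → MvPolynomial (Fin r) K) →ₗ[MvPolynomial (Fin r) K] H
  aug_surjective : Function.Surjective aug
  aug_graded : ∀ (μ : G) (v : Fin (rank 0) → MvPolynomial (Fin r) K),
    (∀ j, v j ∈ weightedHomogeneousSubmodule K w (μ - shift 0 j)) → aug v ∈ ℋ μ
  exact_zero : LinearMap.ker aug = LinearMap.range (Matrix.mulVecLin (d 0))
  exact_succ : ∀ n : ℕ, LinearMap.ker (Matrix.mulVecLin (d n)) =
    LinearMap.range (Matrix.mulVecLin (d (n + 1)))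

namespace FiniteShifts

/-! ### Leading monomials and Buchberger's criterion -/

section Groebner

variable {K : Type} [Field K] {r : ℕ} {ι : Type} [LinearOrder ι]

/-- The position-over-term order on the monomials of a free module: the basis index is compared
first, then the exponents lexicographically. -/
noncomputable def key (δ : ι × (Fin r →₀ ℕ)) :
    ι ×ₗ (MonomialOrder.lex (σ := Fin r)).syn :=
  toLex (δ.1, MonomialOrder.lex.toSyn δ.2)

omit [LinearOrder ι] in
lemma key_injective : Function.Injective (key : ι × (Fin r →₀ ℕ) → _) := by
  rintro ⟨i, a⟩ ⟨j, b⟩ h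
  simpa [key] using h

lemma key_add_lt {i j : ι} {a b : Fin r →₀ ℕ} (c : Fin r →₀ ℕ)
    (h : key (i, a) < key (j, b)) : key (i, c + a) < key (j, c + b) := by
  simp only [key, Prod.Lex.toLex_lt_toLex, map_add, add_lt_add_iff_left] at h ⊢
  exact h

lemma key_add_le {i j : ι} {a b : Fin r →₀ ℕ} (c : Fin r →₀ ℕ)
    (h : key (i, a) ≤ key (j, b)) : key (i, c + a) ≤ key (j, c + b) := by
  rcases h.lt_or_eq with h | h
  · exact (key_add_lt c h).le
  · have := key_injective h
    simp only [Prod.mk.injEq] at this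
    rw [this.1, this.2]

/-- `δ` is the leading monomial of the vector `v`; the zero vector has none. -/
def IsLead (v : ι → MvPolynomial (Fin r) K) (δ : ι × (Fin r →₀ ℕ)) : Prop :=
  coeff δ.2 (v δ.1) ≠ 0 ∧ ∀ ε : ι × (Fin r →₀ ℕ), key δ < key ε → coeff ε.2 (v ε.1) = 0

lemma exists_isLead [Finite ι] {v : ι → MvPolynomial (Fin r) K} (hv : v ≠ 0) :
    ∃ δ, IsLead v δ := by
  let T : Set (ι × (Fin r →₀ ℕ)) := {δ | coeff δ.2 (v δ.1) ≠ 0}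
  have hfin : T.Finite := by
    have : T ⊆ ⋃ i : ι, (fun a => (i, a)) '' ((v i).support : Set (Fin r →₀ ℕ)) := by
      rintro ⟨i, a⟩ h
      simp only [Set.mem_iUnion]
      exact ⟨i, a, by simpa [T] using h, rfl⟩
    exact (Set.finite_iUnion fun i => (Finset.finite_toSet _).image _).subset this
  have hne : T.Nonempty := by
    obtain ⟨i, hi⟩ := Function.ne_iff.mp hv
    obtain ⟨a, ha⟩ := ne_zero_iff.mp hi
    exact ⟨(i, a), ha⟩
  obtain ⟨δ, hδ, hmax⟩ := Set.exists_max_image T key hfin hne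
  refine ⟨δ, hδ, fun ε hε => ?_⟩
  by_contra h
  exact absurd (hmax ε h) (not_le.mpr hε)

lemma IsLead.monomial_smul {v : ι → MvPolynomial (Fin r) K} {δ : ι × (Fin r →₀ ℕ)}
    (h : IsLead v δ) (c : Fin r →₀ ℕ) :
    IsLead (monomial c (1 : K) • v) (δ.1, c + δ.2) := by
  refine ⟨by simpa [coeff_monomial_mul] using h.1, ?_⟩
  rintro ⟨j, b⟩ hb
  simp only [Pi.smul_apply, smul_eq_mul, coeff_monomial_mul', one_mul]
  split_ifs with hc
  · refine h.2 (j, b - c) ?_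
    by_contra hlt
    have := key_add_le c (not_lt.mp hlt)
    rw [add_tsub_cancel_of_le hc] at this
    exact absurd this (not_le.mpr hb)
  · rfl

/-- Subtracting the right multiple of `h` cancels the common leading monomial. -/
lemma IsLead.cancel [Finite ι] {v h : ι → MvPolynomial (Fin r) K} {δ : ι × (Fin r →₀ ℕ)}
    (hv : IsLead v δ) (hh : IsLead h δ) :
    ∃ t : K, v - t • h = 0 ∨ ∃ μ, key μ < key δ ∧ IsLead (v - t • h) μ := by
  refine ⟨coeff δ.2 (v δ.1) / coeff δ.2 (h δ.1), ?_⟩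
  set t := coeff δ.2 (v δ.1) / coeff δ.2 (h δ.1) with ht
  by_cases h0 : v - t • h = 0
  · exact Or.inl h0
  obtain ⟨μ, hμ⟩ := exists_isLead h0
  refine Or.inr ⟨μ, ?_, hμ⟩
  by_contra hlt
  rcases (not_lt.mp hlt).lt_or_eq with h1 | h1
  · apply hμ.1
    simp [hv.2 μ h1, hh.2 μ h1]
  · apply hμ.1
    rw [← key_injective h1]
    simp [ht, hh.1]

lemma IsLead.unique {v : ι → MvPolynomial (Fin r) K} {δ ε : ι × (Fin r →₀ ℕ)}
    (h : IsLead v δ) (h' : IsLead v ε) : δ = ε := by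
  apply key_injective
  rcases lt_trichotomy (key δ) (key ε) with h1 | h1 | h1
  · exact absurd (h.2 ε h1) h'.1
  · exact h1
  · exact absurd (h'.2 δ h1) h.1

/-- The `K`-span of the monomial multiples of elements of `S` whose leading monomial
satisfies `P`. -/
noncomputable def leadSpan (S : Set (ι → MvPolynomial (Fin r) K)) (P : ι × (Fin r →₀ ℕ) → Prop) :
    Submodule K (ι → MvPolynomial (Fin r) K) :=
  Submodule.span K {x | ∃ g ∈ S, ∃ γ, IsLead g γ ∧ ∃ c, P (γ.1, c + γ.2) ∧
    x = monomial c (1 : K) • g}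

lemma leadSpan_mono (S : Set (ι → MvPolynomial (Fin r) K))
    {P Q : ι × (Fin r →₀ ℕ) → Prop} (h : ∀ δ, P δ → Q δ) : leadSpan S P ≤ leadSpan S Q := by
  apply Submodule.span_mono
  rintro x ⟨g, hg, γ, hγ, c, hc, rfl⟩
  exact ⟨g, hg, γ, hγ, c, h _ hc, rfl⟩

lemma smul_mem_leadSpan (S : Set (ι → MvPolynomial (Fin r) K))
    {P Q : ι × (Fin r →₀ ℕ) → Prop} (b : Fin r →₀ ℕ)
    (h : ∀ δ, P δ → Q (δ.1, b + δ.2)) {x : ι → MvPolynomial (Fin r) K}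
    (hx : x ∈ leadSpan S P) : monomial b (1 : K) • x ∈ leadSpan S Q := by
  induction hx using Submodule.span_induction with
  | mem x hx =>
    obtain ⟨g, hg, γ, hγ, c, hc, rfl⟩ := hx
    refine Submodule.subset_span ⟨g, hg, γ, hγ, b + c, ?_, ?_⟩
    · simpa [add_assoc] using h _ hc
    · rw [smul_smul, monomial_mul, one_mul]
  | zero => simp
  | add x y _ _ hx hy => rw [smul_add]; exact add_mem hx hy
  | smul t x _ hx => rw [smul_comm]; exact Submodule.smul_mem _ _ hx

lemma mem_leadSpan_lt (S : Set (ι → MvPolynomial (Fin r) K)) {δ : ι × (Fin r →₀ ℕ)}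
    {x : ι → MvPolynomial (Fin r) K} (hx : x ∈ leadSpan S (fun ε => key ε < key δ)) :
    x = 0 ∨ ∃ ε, key ε < key δ ∧ x ∈ leadSpan S (fun ε' => key ε' ≤ key ε) := by
  induction hx using Submodule.span_induction with
  | mem x hx =>
    obtain ⟨g, hg, γ, hγ, c, hc, rfl⟩ := hx
    exact Or.inr ⟨_, hc, Submodule.subset_span ⟨g, hg, γ, hγ, c, le_rfl, rfl⟩⟩
  | zero => exact Or.inl rfl
  | add x y _ _ hx hy =>
    rcases hx with rfl | ⟨ε, hε, hx⟩
    · simpa using hy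
    rcases hy with rfl | ⟨ε', hε', hy⟩
    · exact Or.inr ⟨ε, hε, by simpa using hx⟩
    right
    rcases le_total (key ε) (key ε') with h | h
    · exact ⟨ε', hε', add_mem (leadSpan_mono S (fun _ h' => h'.trans h) hx) hy⟩
    · exact ⟨ε, hε, add_mem hx (leadSpan_mono S (fun _ h' => h'.trans h) hy)⟩
  | smul t x _ hx =>
    rcases hx with rfl | ⟨ε, hε, hx⟩
    · simp
    · exact Or.inr ⟨ε, hε, Submodule.smul_mem _ _ hx⟩

lemma coeff_eq_zero_of_mem_leadSpan_lt (S : Set (ι → MvPolynomial (Fin r) K))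
    {δ : ι × (Fin r →₀ ℕ)} {x : ι → MvPolynomial (Fin r) K}
    (hx : x ∈ leadSpan S (fun ε => key ε < key δ)) {ε : ι × (Fin r →₀ ℕ)}
    (hε : key δ ≤ key ε) : coeff ε.2 (x ε.1) = 0 := by
  induction hx using Submodule.span_induction with
  | mem x hx =>
    obtain ⟨g, hg, γ, hγ, c, hc, rfl⟩ := hx
    exact (hγ.monomial_smul c).2 ε (hc.trans_le hε)
  | zero => simp
  | add x y _ _ hx hy => simp [hx, hy]
  | smul t x _ hx => simp [hx]

/-- A vector is homogeneous of degree `d` in the graded free module with shifts `s`. -/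
def HomogV (w : Fin r → ℤ) (s : ι → ℤ) (d : ℤ) (v : ι → MvPolynomial (Fin r) K) : Prop :=
  ∀ j, IsWeightedHomogeneous w (v j) (d - s j)

omit [LinearOrder ι] in
lemma HomogV.sub {w : Fin r → ℤ} {s : ι → ℤ} {d : ℤ} {u v : ι → MvPolynomial (Fin r) K}
    (hu : HomogV w s d u) (hv : HomogV w s d v) : HomogV w s d (u - v) :=
  fun j => (hu j).sub (hv j)

omit [LinearOrder ι] in
lemma HomogV.smul {w : Fin r → ℤ} {s : ι → ℤ} {d : ℤ} {v : ι → MvPolynomial (Fin r) K}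
    (hv : HomogV w s d v) (t : K) : HomogV w s d (t • v) := fun j => by
  simpa [smul_eq_C_mul] using (hv j).C_mul t

omit [LinearOrder ι] in
lemma HomogV.monomial_smul {w : Fin r → ℤ} {s : ι → ℤ} {d : ℤ} {v : ι → MvPolynomial (Fin r) K}
    (hv : HomogV w s d v) (c : Fin r →₀ ℕ) :
    HomogV w s (Finsupp.weight w c + d) (monomial c (1 : K) • v) := fun j => by
  have := (isWeightedHomogeneous_monomial w c (1 : K) rfl).mul (hv j)
  simpa [add_sub_assoc] using this

omit [LinearOrder ι] in
lemma HomogV.degree_eq {w : Fin r → ℤ} {s : ι → ℤ} {d : ℤ} {v : ι → MvPolynomial (Fin r) K}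
    (hv : HomogV w s d v) {δ : ι × (Fin r →₀ ℕ)} (h : coeff δ.2 (v δ.1) ≠ 0) :
    s δ.1 + Finsupp.weight w δ.2 = d := by
  have := hv δ.1 h
  lia

/-- The homogeneous elements of degree at most `B` in the submodule `N`. -/
def lowDeg (w : Fin r → ℤ) (s : ι → ℤ) (B : ℤ)
    (N : Submodule (MvPolynomial (Fin r) K) (ι → MvPolynomial (Fin r) K)) :
    Set (ι → MvPolynomial (Fin r) K) :=
  {v | v ∈ N ∧ ∃ d ≤ B, HomogV w s d v}

/-- The leading monomials of the homogeneous elements of `N`. -/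
def initials (w : Fin r → ℤ) (s : ι → ℤ)
    (N : Submodule (MvPolynomial (Fin r) K) (ι → MvPolynomial (Fin r) K)) :
    Set (ι × (Fin r →₀ ℕ)) :=
  {δ | ∃ v ∈ N, (∃ d, HomogV w s d v) ∧ IsLead v δ}

section Criterion

variable [Finite ι] {w : Fin r → ℤ} {s : ι → ℤ} {B β : ℤ}
  {N : Submodule (MvPolynomial (Fin r) K) (ι → MvPolynomial (Fin r) K)}

/-- If every initial monomial of degree at most `β` is divisible by one of degree at most `B`, then
division with remainder by the elements of degree at most `B` succeeds in degrees at most `β`. -/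
lemma mem_leadSpan_of_homog
    (hL : ∀ δ ∈ initials w s N, s δ.1 + Finsupp.weight w δ.2 ≤ β →
      ∃ a ≤ δ.2, (δ.1, a) ∈ initials w s N ∧ s δ.1 + Finsupp.weight w a ≤ B)
    (l : ι ×ₗ (MonomialOrder.lex (σ := Fin r)).syn) :
    ∀ δ, key δ = l → ∀ v ∈ N, ∀ d ≤ β, HomogV w s d v → IsLead v δ →
      v ∈ leadSpan (lowDeg w s B N) (fun ε => key ε ≤ key δ) := by
  induction l using WellFoundedLT.induction with
  | ind l ih =>
    rintro δ rfl v hv d hd hvd hlead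
    have hdeg := hvd.degree_eq hlead.1
    obtain ⟨a, ha, ⟨g, hgN, ⟨e, hge⟩, hglead⟩, haB⟩ :=
      hL δ ⟨v, hv, ⟨d, hvd⟩, hlead⟩ (hdeg.le.trans hd)
    have hedeg := hge.degree_eq hglead.1
    have hgS : g ∈ lowDeg w s B N := ⟨hgN, e, hedeg ▸ haB, hge⟩
    have hca : δ.2 - a + a = δ.2 := tsub_add_cancel_of_le ha
    have hlead' : IsLead (monomial (δ.2 - a) (1 : K) • g) δ := by
      have := hglead.monomial_smul (δ.2 - a)
      rwa [show ((δ.1, a).1, δ.2 - a + (δ.1, a).2) = δ by simp [hca]] at this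
    have hhom : HomogV w s d (monomial (δ.2 - a) (1 : K) • g) := by
      have h1 := hge.monomial_smul (δ.2 - a)
      have h2 : Finsupp.weight w (δ.2 - a) + e = d := by
        rw [← hdeg, ← hedeg, ← hca, map_add]
        simp
        ring
      rwa [h2] at h1
    have hmem : monomial (δ.2 - a) (1 : K) • g ∈
        leadSpan (lowDeg w s B N) (fun ε => key ε ≤ key δ) :=
      Submodule.subset_span ⟨g, hgS, _, hglead, δ.2 - a, by simp [hca], rfl⟩
    obtain ⟨t, ht⟩ := hlead.cancel hlead'
    have key1 : v - t • (monomial (δ.2 - a) (1 : K) • g) ∈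
        leadSpan (lowDeg w s B N) (fun ε => key ε ≤ key δ) := by
      rcases ht with h0 | ⟨μ, hμ, hμl⟩
      · rw [h0]; exact zero_mem _
      · refine leadSpan_mono _ (fun ε hε => hε.trans hμ.le) (ih (key μ) hμ μ rfl _ ?_ d hd ?_ hμl)
        · refine sub_mem hv ?_
          rw [← algebraMap_smul (MvPolynomial (Fin r) K) t]
          exact N.smul_mem _ (N.smul_mem _ hgN)
        · exact hvd.sub (hhom.smul t)
    have := add_mem key1 (Submodule.smul_mem _ t hmem)
    simpa using this

/-- S-pairs of low-degree elements reduce to strictly smaller leading monomials. -/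
lemma spair_mem
    (hβ : ∀ (i : ι) (a a' : Fin r →₀ ℕ), s i + Finsupp.weight w a ≤ B →
      s i + Finsupp.weight w a' ≤ B → s i + Finsupp.weight w (a ⊔ a') ≤ β)
    (hL : ∀ δ ∈ initials w s N, s δ.1 + Finsupp.weight w δ.2 ≤ β →
      ∃ a ≤ δ.2, (δ.1, a) ∈ initials w s N ∧ s δ.1 + Finsupp.weight w a ≤ B)
    {g g' : ι → MvPolynomial (Fin r) K} (hg : g ∈ lowDeg w s B N) (hg' : g' ∈ lowDeg w s B N)
    {i : ι} {a a' c c' b : Fin r →₀ ℕ} (hl : IsLead g (i, a)) (hl' : IsLead g' (i, a'))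
    (hc : c + a = b) (hc' : c' + a' = b) :
    ∃ t : K, monomial c (1 : K) • g - t • (monomial c' (1 : K) • g') ∈
      leadSpan (lowDeg w s B N) (fun ε => key ε < key (i, b)) := by
  obtain ⟨hgN, d, hd, hgd⟩ := hg
  obtain ⟨hgN', d', hd', hgd'⟩ := hg'
  have hda := hgd.degree_eq hl.1
  have hda' := hgd'.degree_eq hl'.1
  simp only at hda hda'
  have hu : (a ⊔ a') - a + a = a ⊔ a' := tsub_add_cancel_of_le le_sup_left
  have hu' : (a ⊔ a') - a' + a' = a ⊔ a' := tsub_add_cancel_of_le le_sup_right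
  have hab : a ≤ b := hc ▸ le_add_self
  have hab' : a' ≤ b := hc' ▸ le_add_self
  have hb : b - (a ⊔ a') + (a ⊔ a') = b := tsub_add_cancel_of_le (sup_le hab hab')
  have hcu : c = b - (a ⊔ a') + ((a ⊔ a') - a) := by
    apply add_right_cancel (b := a)
    rw [add_assoc, hu, hb, hc]
  have hcu' : c' = b - (a ⊔ a') + ((a ⊔ a') - a') := by
    apply add_right_cancel (b := a')
    rw [add_assoc, hu', hb, hc']
  have h1 := hl.monomial_smul ((a ⊔ a') - a)
  have h1' := hl'.monomial_smul ((a ⊔ a') - a')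
  simp only [hu, hu'] at h1 h1'
  have hh := hgd.monomial_smul ((a ⊔ a') - a)
  have hh' := hgd'.monomial_smul ((a ⊔ a') - a')
  have e1 := hh.degree_eq h1.1
  have e2 := hh'.degree_eq h1'.1
  rw [← e1] at hh
  rw [← e2] at hh'
  simp only at hh hh'
  have hle := hβ i a a' (hda.le.trans hd) (hda'.le.trans hd')
  obtain ⟨t, ht⟩ := h1.cancel h1'
  refine ⟨t, ?_⟩
  have key1 : monomial ((a ⊔ a') - a) (1 : K) • g - t • (monomial ((a ⊔ a') - a') (1 : K) • g') ∈
      leadSpan (lowDeg w s B N) (fun ε => key ε < key (i, a ⊔ a')) := by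
    rcases ht with h0 | ⟨μ, hμ, hμl⟩
    · rw [h0]; exact zero_mem _
    · refine leadSpan_mono _ (fun ε hε => lt_of_le_of_lt hε hμ)
        (mem_leadSpan_of_homog hL _ μ rfl _ ?_ _ hle (hh.sub (hh'.smul t)) hμl)
      refine sub_mem (N.smul_mem _ hgN) ?_
      rw [← algebraMap_smul (MvPolynomial (Fin r) K) t]
      exact N.smul_mem _ (N.smul_mem _ hgN')
  have := smul_mem_leadSpan (Q := fun ε => key ε < key (i, b)) _ (b - (a ⊔ a')) (fun δ hδ => by
    have := key_add_lt (b - (a ⊔ a')) hδ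
    rwa [hb] at this) key1
  rwa [smul_sub, smul_comm _ t, smul_smul, smul_smul, monomial_mul, monomial_mul, one_mul,
    ← hcu, ← hcu'] at this

/-- Induction on the bound `δ` for the monomials in a representation: if `δ` occurs, the S-pairs
allow all summands with leading monomial `δ` to be merged into one, which either survives as the
leading term or vanishes, so that `δ` can be lowered. -/
lemma exists_lead_of_mem_leadSpan
    (hβ : ∀ (i : ι) (a a' : Fin r →₀ ℕ), s i + Finsupp.weight w a ≤ B →
      s i + Finsupp.weight w a' ≤ B → s i + Finsupp.weight w (a ⊔ a') ≤ β)
    (hL : ∀ δ ∈ initials w s N, s δ.1 + Finsupp.weight w δ.2 ≤ β →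
      ∃ a ≤ δ.2, (δ.1, a) ∈ initials w s N ∧ s δ.1 + Finsupp.weight w a ≤ B)
    (l : ι ×ₗ (MonomialOrder.lex (σ := Fin r)).syn) :
    ∀ δ, key δ = l → ∀ v ∈ leadSpan (lowDeg w s B N) (fun ε => key ε ≤ key δ), v ≠ 0 →
      ∃ ε, IsLead v ε ∧ ∃ g ∈ lowDeg w s B N, ∃ a ≤ ε.2, IsLead g (ε.1, a) := by
  induction l using WellFoundedLT.induction with
  | ind l ih =>
    rintro δ rfl v hv hv0
    -- everything below `δ` is covered by the induction hypothesis
    have hlow : ∀ u ∈ leadSpan (lowDeg w s B N) (fun ε => key ε < key δ), u ≠ 0 →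
        ∃ ε, IsLead u ε ∧ ∃ g ∈ lowDeg w s B N, ∃ a ≤ ε.2, IsLead g (ε.1, a) := by
      intro u hu hu0
      obtain rfl | ⟨ε, hε, hu⟩ := mem_leadSpan_lt _ hu
      · exact absurd rfl hu0
      · exact ih _ hε ε rfl u hu hu0
    by_cases hex : ∃ g ∈ lowDeg w s B N, ∃ a ≤ δ.2, IsLead g (δ.1, a)
    · obtain ⟨g, hg, a, ha, hga⟩ := hex
      have hca : δ.2 - a + a = δ.2 := tsub_add_cancel_of_le ha
      have hdec : ∃ t : K, v - t • (monomial (δ.2 - a) (1 : K) • g) ∈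
          leadSpan (lowDeg w s B N) (fun ε => key ε < key δ) := by
        clear hv0
        induction hv using Submodule.span_induction with
        | mem x hx =>
          obtain ⟨g', hg', γ, hγ, c, hc, rfl⟩ := hx
          rcases hc.lt_or_eq with h | h
          · refine ⟨0, ?_⟩
            rw [zero_smul, sub_zero]
            exact Submodule.subset_span ⟨g', hg', γ, hγ, c, h, rfl⟩
          · have h1 := key_injective h
            obtain ⟨i, b⟩ := δ
            obtain ⟨j, a'⟩ := γ
            simp only [Prod.mk.injEq] at h1
            obtain ⟨rfl, h1⟩ := h1
            exact spair_mem hβ hL hg' hg hγ hga h1 hca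
        | zero => exact ⟨0, by simp⟩
        | add x y _ _ hx hy =>
          obtain ⟨t, ht⟩ := hx
          obtain ⟨t', ht'⟩ := hy
          refine ⟨t + t', ?_⟩
          rw [add_smul, add_sub_add_comm]
          exact add_mem ht ht'
        | smul z x _ hx =>
          obtain ⟨t, ht⟩ := hx
          refine ⟨z * t, ?_⟩
          rw [mul_smul, ← smul_sub]
          exact Submodule.smul_mem _ _ ht
      obtain ⟨t, ht⟩ := hdec
      by_cases ht0 : t = 0
      · subst ht0
        exact hlow v (by simpa using ht) hv0
      · have hl := hga.monomial_smul (δ.2 - a)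
        simp only [hca] at hl
        refine ⟨δ, ⟨?_, fun ε hε => ?_⟩, g, hg, a, ha, hga⟩
        · have h1 := coeff_eq_zero_of_mem_leadSpan_lt _ ht (le_refl (key δ))
          simp only [Pi.sub_apply, coeff_sub, sub_eq_zero] at h1
          rw [h1]
          simpa [-Pi.smul_apply, Pi.smul_apply t, ht0] using hl.1
        · have h1 := coeff_eq_zero_of_mem_leadSpan_lt _ ht hε.le
          simp only [Pi.sub_apply, coeff_sub, sub_eq_zero] at h1
          rw [h1]
          simpa [-Pi.smul_apply, Pi.smul_apply t, ht0] using hl.2 ε hε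
    · refine hlow v (Submodule.span_mono ?_ hv) hv0
      rintro x ⟨g, hg, γ, hγ, c, hc, rfl⟩
      refine ⟨g, hg, γ, hγ, c, hc.lt_of_ne fun h => hex ?_, rfl⟩
      have h1 := key_injective h
      refine ⟨g, hg, γ.2, ?_, ?_⟩
      · rw [← h1]; exact le_add_self
      · rw [← h1]; exact hγ

omit [Finite ι] in
lemma smul_mem_iUnion_leadSpan (S : Set (ι → MvPolynomial (Fin r) K))
    {x : ι → MvPolynomial (Fin r) K} (p : MvPolynomial (Fin r) K)
    (hx : x = 0 ∨ ∃ δ, x ∈ leadSpan S (fun ε => key ε ≤ key δ)) :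
    p • x = 0 ∨ ∃ δ, p • x ∈ leadSpan S (fun ε => key ε ≤ key δ) := by
  rcases hx with rfl | ⟨δ, hx⟩
  · simp
  induction p using MvPolynomial.induction_on' with
  | monomial a t =>
    refine Or.inr ⟨(δ.1, a + δ.2), ?_⟩
    have h1 : monomial a t • x = t • (monomial a (1 : K) • x) := by
      funext j
      simp only [Pi.smul_apply, smul_eq_mul, smul_eq_C_mul]
      rw [← mul_assoc, C_mul_monomial, mul_one]
    rw [h1]
    exact Submodule.smul_mem _ _ (smul_mem_leadSpan
      (Q := fun ε => key ε ≤ key (δ.1, a + δ.2)) _ a (fun ε hε => key_add_le a hε) hx)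
  | add p q hp hq =>
    rw [add_smul]
    rcases hp with h | ⟨ε, hε⟩
    · rw [h, zero_add]; exact hq
    rcases hq with h | ⟨ε', hε'⟩
    · rw [h, add_zero]; exact Or.inr ⟨ε, hε⟩
    right
    rcases le_total (key ε) (key ε') with h | h
    · exact ⟨ε', add_mem (leadSpan_mono S (fun _ h' => h'.trans h) hε) hε'⟩
    · exact ⟨ε, add_mem hε (leadSpan_mono S (fun _ h' => h'.trans h) hε')⟩

/-- `N` is generated by homogeneous elements of degree at most `B`. -/
def GenLE (w : Fin r → ℤ) (s : ι → ℤ) (B : ℤ)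
    (N : Submodule (MvPolynomial (Fin r) K) (ι → MvPolynomial (Fin r) K)) : Prop :=
  N ≤ Submodule.span (MvPolynomial (Fin r) K) (lowDeg w s B N)

/-- **Buchberger's criterion**, in terms of degrees: `N` is generated in degrees at most `B`, the
least common multiples of two monomials of degree at most `B` have degree at most `β`, and no new
initial monomials appear between `B` and `β`. Then the elements of degree at most `B` contain a
Gröbner basis of `N`. -/
lemma exists_lead_of_mem
    (hβ : ∀ (i : ι) (a a' : Fin r →₀ ℕ), s i + Finsupp.weight w a ≤ B →
      s i + Finsupp.weight w a' ≤ B → s i + Finsupp.weight w (a ⊔ a') ≤ β)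
    (hL : ∀ δ ∈ initials w s N, s δ.1 + Finsupp.weight w δ.2 ≤ β →
      ∃ a ≤ δ.2, (δ.1, a) ∈ initials w s N ∧ s δ.1 + Finsupp.weight w a ≤ B)
    (hN : GenLE w s B N) {v : ι → MvPolynomial (Fin r) K} (hv : v ∈ N) (hv0 : v ≠ 0) :
    ∃ ε, IsLead v ε ∧ ∃ g ∈ lowDeg w s B N, ∃ a ≤ ε.2, IsLead g (ε.1, a) := by
  have h1 : v = 0 ∨ ∃ δ, v ∈ leadSpan (lowDeg w s B N) (fun ε => key ε ≤ key δ) := by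
    have hv' := hN hv
    clear hv0
    induction hv' using Submodule.span_induction with
    | mem x hx =>
      by_cases hx0 : x = 0
      · exact Or.inl hx0
      obtain ⟨γ, hγ⟩ := exists_isLead hx0
      exact Or.inr ⟨γ, Submodule.subset_span ⟨x, hx, γ, hγ, 0, by simp, by simp⟩⟩
    | zero => exact Or.inl rfl
    | add x y hx hy hx' hy' =>
      have hN' : Submodule.span (MvPolynomial (Fin r) K) (lowDeg w s B N) ≤ N :=
        Submodule.span_le.mpr fun _ h => h.1
      rcases hx' (hN' hx) with rfl | ⟨ε, hε⟩
      · simpa using hy' (hN' hy)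
      rcases hy' (hN' hy) with rfl | ⟨ε', hε'⟩
      · exact Or.inr ⟨ε, by simpa using hε⟩
      right
      rcases le_total (key ε) (key ε') with h | h
      · exact ⟨ε', add_mem (leadSpan_mono _ (fun _ h' => h'.trans h) hε) hε'⟩
      · exact ⟨ε, add_mem hε (leadSpan_mono _ (fun _ h' => h'.trans h) hε')⟩
    | smul p x hx hx' =>
      have hN' : Submodule.span (MvPolynomial (Fin r) K) (lowDeg w s B N) ≤ N :=
        Submodule.span_le.mpr fun _ h => h.1
      exact smul_mem_iUnion_leadSpan _ p (hx' (hN' hx))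
  rcases h1 with h0 | ⟨δ, hδ⟩
  · exact absurd h0 hv0
  · exact exists_lead_of_mem_leadSpan hβ hL _ δ rfl v hδ hv0

end Criterion

end Groebner

/-! ### Uniform degree bounds for monomial submodules -/

section Uniform

variable {r : ℕ} {ι : Type} {w : Fin r → ℤ}

lemma weight_nonneg (hw : ∀ i, 0 < w i) (a : Fin r →₀ ℕ) : 0 ≤ Finsupp.weight w a := by
  rw [Finsupp.weight_apply]
  exact Finset.sum_nonneg fun i _ => smul_nonneg (Nat.zero_le _) (hw i).le

lemma le_weight (hw : ∀ i, 0 < w i) (a : Fin r →₀ ℕ) (i : Fin r) :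
    (a i : ℤ) ≤ Finsupp.weight w a := by
  have h1 : Finsupp.weight w (Finsupp.single i (a i)) ≤ Finsupp.weight w a := by
    conv_rhs => rw [← Finsupp.erase_add_single i a, map_add]
    linarith [weight_nonneg hw (a.erase i)]
  refine le_trans ?_ h1
  simp only [Finsupp.weight_single, nsmul_eq_mul]
  nlinarith [hw i, Int.natCast_nonneg (a i)]

lemma finite_weight_le (hw : ∀ i, 0 < w i) (c : ℤ) :
    {a : Fin r →₀ ℕ | Finsupp.weight w a ≤ c}.Finite := by
  refine (Set.finite_Iic (Finsupp.equivFunOnFinite.symm fun _ => c.toNat)).subset ?_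
  intro a ha i
  have := (le_weight hw a i).trans ha
  simp
  lia

/-- A compactness form of Dickson's lemma: for a monomial submodule `L` which is completely
arbitrary, a degree `B` such that no new generators of `L` appear between the degrees `B` and
`β B` can be found below a bound `C` that does not depend on `L`. -/
lemma exists_uniform_bound [Finite ι] (hw : ∀ i, 0 < w i) (s : ι → ℤ) (B₀ : ℤ) (β : ℤ → ℤ) :
    ∃ C : ℤ, ∀ L : Set (ι × (Fin r →₀ ℕ)), (∀ i a b, (i, a) ∈ L → (i, b + a) ∈ L) →
      ∃ B, B₀ ≤ B ∧ B ≤ C ∧ ∀ δ ∈ L, s δ.1 + Finsupp.weight w δ.2 ≤ β B →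
        ∃ a ≤ δ.2, (δ.1, a) ∈ L ∧ s δ.1 + Finsupp.weight w a ≤ B := by
  by_contra! h
  choose L hup hfail using fun n : ℕ => h (B₀ + n)
  -- the limit of a sequence of counterexamples along an ultrafilter
  let U : Ultrafilter ℕ := Filter.hyperfilter ℕ
  let M : Set (ι × (Fin r →₀ ℕ)) := {δ | ∀ᶠ n in (U : Filter ℕ), δ ∈ L n}
  have hgen : ∀ i : ι, ∃ b : ℤ, ∀ a, (i, a) ∈ M → ∃ a' ≤ a, (i, a') ∈ M ∧
      s i + Finsupp.weight w a' ≤ b := by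
    intro i
    let T : Set (Fin r →₀ ℕ) := {a | Minimal (fun a => (i, a) ∈ M) a}
    have hT : T.Finite := WellQuasiOrderedLE.finite_of_isAntichain (setOfPred_minimal_antichain _)
    obtain ⟨b, hb⟩ := (hT.image fun a => s i + Finsupp.weight w a).bddAbove
    refine ⟨b, fun a ha => ?_⟩
    obtain ⟨a', ha', hmin⟩ := exists_minimal_le_of_wellFoundedLT (fun a => (i, a) ∈ M) a ha
    exact ⟨a', ha', hmin.prop, hb ⟨a', hmin, rfl⟩⟩
  choose b hb using hgen
  obtain ⟨b', hb'⟩ := (Set.finite_range b).bddAbove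
  set B := max B₀ b' with hB
  have hfin : ∀ c, {δ : ι × (Fin r →₀ ℕ) | s δ.1 + Finsupp.weight w δ.2 ≤ c}.Finite := by
    intro c
    have : {δ : ι × (Fin r →₀ ℕ) | s δ.1 + Finsupp.weight w δ.2 ≤ c} ⊆
        ⋃ i : ι, (fun a => (i, a)) '' {a | Finsupp.weight w a ≤ c - s i} := by
      rintro ⟨i, a⟩ ha
      simp only [Set.mem_iUnion]
      exact ⟨i, a, by simp at ha ⊢; lia, rfl⟩
    exact (Set.finite_iUnion fun i => (finite_weight_le hw _).image _).subset this
  have hev : ∀ c, ∀ᶠ n in (U : Filter ℕ), ∀ δ ∈ {δ : ι × (Fin r →₀ ℕ) |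
      s δ.1 + Finsupp.weight w δ.2 ≤ c}, (δ ∈ L n ↔ δ ∈ M) := by
    intro c
    rw [Filter.eventually_all_finite (hfin c)]
    intro δ _
    by_cases hδ : δ ∈ M
    · filter_upwards [hδ] with n hn
      simp [hn, hδ]
    · filter_upwards [Ultrafilter.eventually_not.mpr hδ] with n hn
      simp [hn, hδ]
  have hlarge : ∀ᶠ n : ℕ in (U : Filter ℕ), B ≤ B₀ + (n : ℤ) := by
    have : ∀ᶠ n : ℕ in Filter.atTop, B ≤ B₀ + (n : ℤ) := by
      filter_upwards [Filter.eventually_ge_atTop (B - B₀).toNat] with n hn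
      lia
    exact Nat.hyperfilter_le_atTop this
  obtain ⟨n, h1, h2, h3⟩ := (hlarge.and ((hev (β B)).and (hev B))).exists
  obtain ⟨δ, hδ, hδβ, hno⟩ := hfail n B (le_max_left _ _) h1
  obtain ⟨a, ha, haM, hab⟩ := hb δ.1 δ.2 ((h2 δ hδβ).mp hδ)
  have hab' : s δ.1 + Finsupp.weight w a ≤ B :=
    hab.trans ((hb' ⟨_, rfl⟩).trans (le_max_right _ _))
  exact absurd (hno a ha ((h3 (δ.1, a) hab').mpr haM)) (not_lt.mpr hab')

end Uniform

/-! ### Generators of preimages by elimination -/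

section Kernel

variable {r : ℕ} {w : Fin r → ℤ}

lemma initials_upper {K : Type} [Field K] {ι : Type} [LinearOrder ι] (s : ι → ℤ)
    (N : Submodule (MvPolynomial (Fin r) K) (ι → MvPolynomial (Fin r) K)) (i : ι)
    (a b : Fin r →₀ ℕ) (h : (i, a) ∈ initials w s N) : (i, b + a) ∈ initials w s N := by
  obtain ⟨v, hv, ⟨d, hd⟩, hl⟩ := h
  exact ⟨_, N.smul_mem _ hv, ⟨_, hd.monomial_smul b⟩, hl.monomial_smul b⟩

/-- Pairs of vectors as vectors indexed by the lexicographic sum. All monomials in the first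
vector are smaller than those in the second one, so `key` is an elimination order. -/
def pair {R : Type} {p q : ℕ} (v : Fin p → R) (y : Fin q → R) : Fin p ⊕ₗ Fin q → R :=
  fun i => Sum.elim v y (ofLex i)

lemma genLE_mono {K : Type} [Field K] {ι : Type} {s : ι → ℤ} {B C : ℤ} (h : B ≤ C)
    {N : Submodule (MvPolynomial (Fin r) K) (ι → MvPolynomial (Fin r) K)}
    (hN : GenLE w s B N) : GenLE w s C N :=
  hN.trans (Submodule.span_mono fun _ hv => ⟨hv.1, hv.2.imp fun _ hd => ⟨hd.1.trans h, hd.2⟩⟩)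

/-- For fixed shifts, the degrees of the generators of a preimage `X⁻¹(I)` are bounded uniformly in
the field, `X` and `I`. In `N = {(v, y) | y - X v ∈ I}`, which is generated in bounded degree, the
preimage consists of the elements with vanishing second component; as the order eliminates that
component, it is generated by part of a Gröbner basis of `N`. -/
lemma exists_genLE_comap_aux (hw : ∀ i, 0 < w i) (B₀ : ℤ) {p q : ℕ}
    (f : Fin p → ℤ) (e : Fin q → ℤ) :
    ∃ C : ℤ, ∀ (K : Type) [Field K] (X : Matrix (Fin q) (Fin p) (MvPolynomial (Fin r) K))
      (I : Submodule (MvPolynomial (Fin r) K) (Fin q → MvPolynomial (Fin r) K)),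
      (∀ j k, IsWeightedHomogeneous w (X j k) (f k - e j)) → GenLE w e B₀ I →
      GenLE w f C (I.comap X.mulVecLin) := by
  classical
  let s : Fin p ⊕ₗ Fin q → ℤ := pair f e
  obtain ⟨b₁, hb₁⟩ := (Set.finite_range f).bddAbove
  obtain ⟨lo, hlo⟩ := (Set.finite_range s).bddBelow
  obtain ⟨C, hC⟩ := exists_uniform_bound hw s (max B₀ b₁) (fun B => 2 * B - lo)
  refine ⟨C, fun K _ X I hX hI => ?_⟩
  -- the graph of `X`, enlarged by `I` in the target
  let N : Submodule (MvPolynomial (Fin r) K) (Fin p ⊕ₗ Fin q → MvPolynomial (Fin r) K) :=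
    { carrier := {u | (fun j => u (toLex (Sum.inr j))) -
        X.mulVec (fun k => u (toLex (Sum.inl k))) ∈ I}
      add_mem' := by
        intro u v hu hv
        have := I.add_mem hu hv
        rw [← add_sub_add_comm, ← Matrix.mulVec_add] at this
        exact this
      zero_mem' := by
        have : X.mulVec (0 : Fin p → MvPolynomial (Fin r) K) = 0 := Matrix.mulVec_zero X
        show (0 : Fin q → MvPolynomial (Fin r) K) -
          X.mulVec (0 : Fin p → MvPolynomial (Fin r) K) ∈ I
        rw [this, sub_zero]
        exact zero_mem _
      smul_mem' := by
        intro t u hu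
        have := I.smul_mem t hu
        rw [smul_sub, ← Matrix.mulVec_smul] at this
        exact this }
  have hmemN : ∀ (v : Fin p → MvPolynomial (Fin r) K) (y : Fin q → MvPolynomial (Fin r) K),
      pair v y ∈ N ↔ y - X.mulVec v ∈ I := fun v y => Iff.rfl
  have hpair_add : ∀ (v v' : Fin p → MvPolynomial (Fin r) K)
      (y y' : Fin q → MvPolynomial (Fin r) K), pair (v + v') (y + y') = pair v y + pair v' y' := by
    intro v v' y y'
    funext i
    rcases h : ofLex i with k | j <;> simp [pair, h]
  have hpair_smul : ∀ (t : MvPolynomial (Fin r) K) (v : Fin p → MvPolynomial (Fin r) K)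
      (y : Fin q → MvPolynomial (Fin r) K), pair (t • v) (t • y) = t • pair v y := by
    intro t v y
    funext i
    rcases h : ofLex i with k | j <;> simp [pair, h]
  have hpair_homog : ∀ (d : ℤ) (v : Fin p → MvPolynomial (Fin r) K)
      (y : Fin q → MvPolynomial (Fin r) K), HomogV w f d v → HomogV w e d y →
      HomogV w s d (pair v y) := by
    intro d v y hv hy i
    rcases h : ofLex i with k | j
    · simpa [pair, s, h] using hv k
    · simpa [pair, s, h] using hy j
  have hcol : ∀ k, pair (Pi.single k 1) (X.col k) ∈
      Submodule.span (MvPolynomial (Fin r) K) (lowDeg w s (max B₀ b₁) N) := by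
    intro k
    refine Submodule.subset_span ⟨?_, f k, (hb₁ ⟨k, rfl⟩).trans (le_max_right _ _), ?_⟩
    · rw [hmemN]
      simp
    · refine hpair_homog _ _ _ ?_ (fun j => hX j k)
      intro k'
      by_cases hk : k' = k
      · subst hk; simpa using isWeightedHomogeneous_one K w
      · simpa [hk] using isWeightedHomogeneous_zero K w _
  have hIN : ∀ y ∈ I, pair (0 : Fin p → MvPolynomial (Fin r) K) y ∈
      Submodule.span (MvPolynomial (Fin r) K) (lowDeg w s (max B₀ b₁) N) := by
    intro y hy
    have hy' := hI hy
    clear hy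
    induction hy' using Submodule.span_induction with
    | mem y hy =>
      obtain ⟨hyI, d, hd, hyd⟩ := hy
      refine Submodule.subset_span ⟨?_, d, hd.trans (le_max_left _ _),
        hpair_homog _ _ _ (fun k => isWeightedHomogeneous_zero K w _) hyd⟩
      rw [hmemN]
      simpa using hyI
    | zero =>
      have := hpair_smul 0 0 0
      simp only [zero_smul] at this
      rw [this]
      exact zero_mem _
    | add y y' _ _ h h' =>
      have := hpair_add 0 0 y y'
      rw [add_zero] at this
      rw [this]
      exact add_mem h h'
    | smul t y _ h =>
      have := hpair_smul t 0 y
      rw [smul_zero] at this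
      rw [this]
      exact Submodule.smul_mem _ _ h
  have hN : GenLE w s (max B₀ b₁) N := by
    intro u hu
    have h1 : u = ∑ k, u (toLex (Sum.inl k)) • pair (Pi.single k 1) (X.col k) +
        pair 0 ((fun j => u (toLex (Sum.inr j))) - X.mulVec (fun k => u (toLex (Sum.inl k)))) := by
      funext i
      obtain ⟨i, rfl⟩ := toLex.surjective i
      rcases i with k | j
      · simp [pair, Finset.sum_apply, Pi.single_apply]
      · simp [pair, Finset.sum_apply, Matrix.mulVec, dotProduct, mul_comm]
    rw [h1]
    exact add_mem (Submodule.sum_mem _ fun k _ => Submodule.smul_mem _ _ (hcol k)) (hIN _ hu)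
  obtain ⟨B, hB₀, hBC, hL⟩ := hC _ (initials_upper (w := w) s N)
  have hβ : ∀ (i : Fin p ⊕ₗ Fin q) (a a' : Fin r →₀ ℕ), s i + Finsupp.weight w a ≤ B →
      s i + Finsupp.weight w a' ≤ B → s i + Finsupp.weight w (a ⊔ a') ≤ 2 * B - lo := by
    intro i a a' h h'
    have h1 : s i ≥ lo := hlo ⟨i, rfl⟩
    have h2 : Finsupp.weight w (a ⊔ a') ≤ Finsupp.weight w a + Finsupp.weight w a' := by
      have h3 : a ⊔ a' ≤ a + a' := sup_le le_self_add le_add_self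
      rw [← map_add, ← tsub_add_cancel_of_le h3, map_add]
      linarith [weight_nonneg hw (a + a' - a ⊔ a')]
    linarith
  -- subtracting leading terms never leaves the source component
  have main : ∀ l : (Fin p ⊕ₗ Fin q) ×ₗ (MonomialOrder.lex (σ := Fin r)).syn, ∀ δ, key δ = l →
      ∀ v, X.mulVec v ∈ I → IsLead (pair v (0 : Fin q → MvPolynomial (Fin r) K)) δ →
      v ∈ Submodule.span (MvPolynomial (Fin r) K) (lowDeg w f C (I.comap X.mulVecLin)) := by
    intro l
    induction l using WellFoundedLT.induction with
    | ind l ih =>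
      rintro δ rfl v hv hlead
      have hvN : pair v (0 : Fin q → MvPolynomial (Fin r) K) ∈ N := by
        rw [hmemN, zero_sub]
        exact neg_mem hv
      obtain ⟨ε, hε, g, ⟨hgN, d, hd, hgd⟩, a, ha, hga⟩ :=
        exists_lead_of_mem hβ hL (genLE_mono hB₀ hN) hvN (by
          rintro h0
          exact hlead.1 (by simp [h0]))
      obtain rfl := hlead.unique hε
      have hgz : ∀ j : Fin q, g (toLex (Sum.inr j)) = 0 := by
        intro j
        ext b
        refine hga.2 (toLex (Sum.inr j), b) ?_
        rcases h : ofLex δ.1 with k | j'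
        · have hδ : δ.1 = toLex (Sum.inl k) := by rw [← h]; rfl
          rw [hδ]
          exact Prod.Lex.toLex_lt_toLex.mpr (Or.inl (Sum.Lex.inl_lt_inr k j))
        · exact absurd (by simp [pair, h]) hlead.1
      set gv : Fin p → MvPolynomial (Fin r) K := fun k => g (toLex (Sum.inl k)) with hgv
      have hgpair : g = pair gv (0 : Fin q → MvPolynomial (Fin r) K) := by
        funext i
        obtain ⟨i, rfl⟩ := toLex.surjective i
        rcases i with k | j
        · rfl
        · exact hgz j
      have hgI : X.mulVec gv ∈ I := by
        rw [hgpair, hmemN, zero_sub] at hgN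
        simpa using neg_mem hgN
      have hgmem : gv ∈ lowDeg w f C (I.comap X.mulVecLin) :=
        ⟨hgI, d, hd.trans hBC, fun k => hgd (toLex (Sum.inl k))⟩
      have hl := hga.monomial_smul (δ.2 - a)
      simp only [tsub_add_cancel_of_le ha] at hl
      obtain ⟨t, ht⟩ := hlead.cancel hl
      set u : Fin p → MvPolynomial (Fin r) K :=
        (MvPolynomial.C t * monomial (δ.2 - a) 1 : MvPolynomial (Fin r) K) • gv with hu
      have hpu : pair v (0 : Fin q → MvPolynomial (Fin r) K) -
          t • (monomial (δ.2 - a) (1 : K) • g) = pair (v - u) 0 := by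
        rw [hgpair]
        funext i
        rcases h : ofLex i with k | j
        · simp [pair, h, hu, smul_eq_C_mul, mul_assoc]
        · simp [pair, h]
      rw [hpu] at ht
      have hvu : v - u ∈ Submodule.span (MvPolynomial (Fin r) K)
          (lowDeg w f C (I.comap X.mulVecLin)) := by
        rcases ht with h0 | ⟨μ, hμ, hμl⟩
        · have : v - u = 0 := by
            funext k
            exact congrFun h0 (toLex (Sum.inl k))
          rw [this]
          exact zero_mem _
        · refine ih _ hμ μ rfl _ ?_ hμl
          rw [Matrix.mulVec_sub, hu, Matrix.mulVec_smul]
          exact sub_mem hv (I.smul_mem _ hgI)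
      have := add_mem hvu (Submodule.smul_mem _ (MvPolynomial.C t * monomial (δ.2 - a) 1)
        (Submodule.subset_span hgmem))
      rwa [← hu, sub_add_cancel] at this
  intro v hv
  by_cases h0 : pair v (0 : Fin q → MvPolynomial (Fin r) K) = 0
  · have : v = 0 := by
      funext k
      exact congrFun h0 (toLex (Sum.inl k))
    rw [this]
    exact zero_mem _
  · obtain ⟨δ, hδ⟩ := exists_isLead h0
    exact main _ δ rfl v hv hδ

/-- The bound can be chosen uniformly over all modules of bounded rank whose shifts lie in a
given finite set. -/
lemma exists_genLE_comap (hw : ∀ i, 0 < w i) (B₀ : ℤ) (P Q : ℕ) (S T : Finset ℤ) :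
    ∃ C : ℤ, ∀ p ≤ P, ∀ q ≤ Q, ∀ (f : Fin p → ℤ) (e : Fin q → ℤ), (∀ k, f k ∈ S) →
      (∀ j, e j ∈ T) →
      ∀ (K : Type) [Field K] (X : Matrix (Fin q) (Fin p) (MvPolynomial (Fin r) K))
      (I : Submodule (MvPolynomial (Fin r) K) (Fin q → MvPolynomial (Fin r) K)),
      (∀ j k, IsWeightedHomogeneous w (X j k) (f k - e j)) → GenLE w e B₀ I →
      GenLE w f C (I.comap X.mulVecLin) := by
  let Shape := Σ p : Fin (P + 1), Σ q : Fin (Q + 1), (Fin p → S) × (Fin q → T)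
  choose C hC using fun x : Shape => exists_genLE_comap_aux hw B₀
    (fun k => (x.2.2.1 k : ℤ)) (fun j => (x.2.2.2 j : ℤ))
  obtain ⟨C', hC'⟩ := (Set.finite_range C).bddAbove
  refine ⟨C', fun p hp q hq f e hf he K _ X I hX hI => ?_⟩
  let x : Shape := ⟨⟨p, by lia⟩, ⟨q, by lia⟩, fun k => ⟨f k, hf k⟩, fun j => ⟨e j, he j⟩⟩
  have h1 : GenLE w f (C x) (I.comap X.mulVecLin) := hC x K X I hX hI
  exact genLE_mono (hC' ⟨x, rfl⟩) h1

end Kernel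

/-! ### The length of minimal resolutions -/

section Syzygy

variable {K : Type} [Field K]

/-- Setting the first variable to zero. -/
noncomputable def killFirst (r : ℕ) :
    MvPolynomial (Fin (r + 1)) K →ₐ[K] MvPolynomial (Fin r) K :=
  aeval (Fin.cons 0 X)

lemma killFirst_rename (r : ℕ) (p : MvPolynomial (Fin r) K) :
    killFirst r (rename Fin.succ p) = p := by
  rw [killFirst, aeval_rename]
  have : (Fin.cons 0 X : Fin (r + 1) → MvPolynomial (Fin r) K) ∘ Fin.succ = X := by
    funext i; simp
  rw [this]
  simp

lemma exists_of_killFirst_eq_zero {r : ℕ} {p : MvPolynomial (Fin (r + 1)) K}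
    (hp : killFirst r p = 0) : ∃ q, p = X 0 * q := by
  let J : Ideal (MvPolynomial (Fin (r + 1)) K) := Ideal.span {X 0}
  have h : Ideal.Quotient.mkₐ K J =
      ((Ideal.Quotient.mkₐ K J).comp (rename Fin.succ)).comp (killFirst r) := by
    apply MvPolynomial.algHom_ext
    intro i
    refine Fin.cases ?_ (fun i => ?_) i
    · simp [killFirst, J]
    · simp [killFirst]
  have h2 := DFunLike.congr_fun h p
  simp only [AlgHom.comp_apply, hp, map_zero, Ideal.Quotient.mkₐ_eq_mk] at h2
  obtain ⟨q, hq⟩ := Ideal.mem_span_singleton'.mp (Ideal.Quotient.eq_zero_iff_mem.mp h2)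
  exact ⟨q, by rw [← hq, mul_comm]⟩

lemma constantCoeff_killFirst {r : ℕ} (p : MvPolynomial (Fin (r + 1)) K) :
    constantCoeff (killFirst r p) = constantCoeff p := by
  have : ((constantCoeff : MvPolynomial (Fin r) K →+* K).comp (killFirst r).toRingHom) =
      constantCoeff := by
    apply MvPolynomial.ringHom_ext
    · intro a; simp [killFirst]
    · intro i
      refine Fin.cases ?_ (fun i => ?_) i <;> simp [killFirst]
  exact DFunLike.congr_fun this p

/-- **Hilbert's syzygy theorem**: a minimal exact complex over `K[x_1,…,x_r]` vanishes in positions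
beyond `r`. Setting the first variable to zero in the truncated complex preserves minimality and
exactness, which allows induction on `r`. -/
lemma rank_eq_zero (r : ℕ) : ∀ (rank : ℕ → ℕ)
    (d : ∀ n, Matrix (Fin (rank n)) (Fin (rank (n + 1))) (MvPolynomial (Fin r) K)),
    (∀ n j k, constantCoeff (d n j k) = 0) →
    (∀ n, LinearMap.ker (d n).mulVecLin = LinearMap.range (d (n + 1)).mulVecLin) →
    ∀ n, r < n → rank n = 0 := by
  induction r with
  | zero =>
    intro rank d hmin hex n hn
    have hd : ∀ n, d n = 0 := by
      intro n
      ext1 j k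
      rw [eq_C_of_isEmpty (d n j k)]
      have := hmin n j k
      rw [constantCoeff_eq] at this
      simp [this]
    obtain ⟨n, rfl⟩ := Nat.exists_eq_succ_of_ne_zero hn.ne'
    by_contra h0
    have := hex n
    rw [hd n, hd (n + 1)] at this
    simp only [Matrix.mulVecLin_zero, LinearMap.ker_zero, LinearMap.range_zero] at this
    have h1 : (fun _ => 1 : Fin (rank (n + 1)) → MvPolynomial (Fin 0) K) ∈
        (⊥ : Submodule (MvPolynomial (Fin 0) K) _) := this ▸ Submodule.mem_top
    have h2 := congrFun ((Submodule.mem_bot _).mp h1) ⟨0, Nat.pos_of_ne_zero h0⟩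
    simp at h2
  | succ r ih =>
    intro rank d hmin hex n hn
    obtain ⟨n, rfl⟩ := Nat.exists_eq_succ_of_ne_zero (by lia : n ≠ 0)
    have hmap : ∀ n (v : Fin (rank (n + 1)) → MvPolynomial (Fin (r + 1)) K),
        ((d n).map (killFirst r)).mulVec (fun k => killFirst r (v k)) =
          fun j => killFirst r ((d n).mulVec v j) := by
      intro n v
      funext j
      simp [Matrix.mulVec, dotProduct, map_sum]
    have hlift : ∀ m (v : Fin m → MvPolynomial (Fin r) K),
        ∃ v' : Fin m → MvPolynomial (Fin (r + 1)) K, v = fun k => killFirst r (v' k) :=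
      fun m v => ⟨fun k => rename Fin.succ (v k), by simp [killFirst_rename]⟩
    have hdd : ∀ n v, (d n).mulVec ((d (n + 1)).mulVec v) = 0 := by
      intro n v
      have : (d (n + 1)).mulVecLin v ∈ LinearMap.ker (d n).mulVecLin := by
        rw [hex n]; exact ⟨v, rfl⟩
      exact this
    refine ih (fun n => rank (n + 1)) (fun n => (d (n + 1)).map (killFirst r)) ?_ ?_ n (by lia)
    · intro n j k
      simp [constantCoeff_killFirst, hmin]
    · intro n
      ext v
      obtain ⟨v, rfl⟩ := hlift _ v
      simp only [LinearMap.mem_ker, LinearMap.mem_range, Matrix.mulVecLin_apply, hmap]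
      constructor
      · intro hv
        choose u hu using fun j => exists_of_killFirst_eq_zero (congrFun hv j)
        have hu' : (d (n + 1)).mulVec v = (X 0 : MvPolynomial (Fin (r + 1)) K) • u := funext hu
        -- the first variable is a nonzerodivisor on the boundaries of the original complex
        have hu0 : (d n).mulVec u = 0 := by
          have h1 := hdd n v
          rw [hu', Matrix.mulVec_smul] at h1
          exact (smul_eq_zero.mp h1).resolve_left (X_ne_zero 0)
        have h2 : u ∈ LinearMap.ker (d n).mulVecLin := hu0
        rw [hex n] at h2
        obtain ⟨v', hv'⟩ := h2
        have h3 : v - (X 0 : MvPolynomial (Fin (r + 1)) K) • v' ∈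
            LinearMap.ker (d (n + 1)).mulVecLin := by
          simp only [Matrix.mulVecLin_apply] at hv'
          simp only [LinearMap.mem_ker, Matrix.mulVecLin_apply, Matrix.mulVec_sub,
            Matrix.mulVec_smul, hv', hu', sub_self]
        rw [hex (n + 1)] at h3
        obtain ⟨y, hy⟩ := h3
        refine ⟨fun k => killFirst r (y k), ?_⟩
        simp only [Matrix.mulVecLin_apply] at hy
        rw [hmap, hy]
        funext k
        simp [killFirst]
      · rintro ⟨y, hy⟩
        obtain ⟨y, rfl⟩ := hlift _ y
        rw [hmap] at hy
        rw [← hmap, ← hy, hmap]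
        funext j
        simp [hdd (n + 1) y]

end Syzygy

/-! ### One step of a minimal resolution -/

section Step

variable {r : ℕ} {G : Type} [AddCommGroup G] {w : Fin r → G}

lemma weight_comp (ψ : G →+ ℤ) (a : Fin r →₀ ℕ) :
    Finsupp.weight (fun i => ψ (w i)) a = ψ (Finsupp.weight w a) := by
  simp [Finsupp.weight_apply, Finsupp.sum, map_sum, map_nsmul]

lemma isWeightedHomogeneous_comp {K : Type} [Field K] (ψ : G →+ ℤ)
    {p : MvPolynomial (Fin r) K} {g : G} (hp : IsWeightedHomogeneous w p g) :
    IsWeightedHomogeneous (fun i => ψ (w i)) p (ψ g) := fun a ha => by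
  rw [weight_comp, hp ha]

lemma component_mul {K : Type} [Field K] {w : Fin r → ℤ} {m : ℤ} {p : MvPolynomial (Fin r) K}
    (hp : IsWeightedHomogeneous w p m) (n : ℤ) (q : MvPolynomial (Fin r) K) :
    weightedHomogeneousComponent w n (p * q) =
      p * weightedHomogeneousComponent w (n - m) q := by
  induction q using MvPolynomial.induction_on' with
  | monomial a t =>
    have h1 := isWeightedHomogeneous_monomial w a t rfl
    have h2 := hp.mul h1
    rw [weightedHomogeneousComponent_of_mem h1, weightedHomogeneousComponent_of_mem h2]
    by_cases h : n = m + Finsupp.weight w a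
    · rw [if_pos h, if_pos (by lia)]
    · rw [if_neg h, if_neg (by lia), mul_zero]
  | add q q' h h' => rw [mul_add, map_add, map_add, h, h', mul_add]

/-- The homogeneous component of degree `d` of a vector in a graded free module. -/
noncomputable def component {K : Type} [Field K] {p : ℕ} (w : Fin r → ℤ) (s : Fin p → ℤ) (d : ℤ)
    (v : Fin p → MvPolynomial (Fin r) K) : Fin p → MvPolynomial (Fin r) K :=
  fun j => weightedHomogeneousComponent w (d - s j) (v j)

lemma component_mulVec {K : Type} [Field K] {p q : ℕ} {w : Fin r → ℤ} {s : Fin p → ℤ}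
    {s' : Fin q → ℤ} {X : Matrix (Fin p) (Fin q) (MvPolynomial (Fin r) K)}
    (hX : ∀ j k, IsWeightedHomogeneous w (X j k) (s' k - s j)) (d : ℤ)
    (v : Fin q → MvPolynomial (Fin r) K) :
    component w s d (X.mulVec v) = X.mulVec (component w s' d v) := by
  funext j
  simp only [component, Matrix.mulVec, dotProduct, map_sum]
  refine Finset.sum_congr rfl fun k _ => ?_
  rw [component_mul (hX j k)]
  congr 2
  ring_nf

lemma component_of_homogV {K : Type} [Field K] {p : ℕ} {w : Fin r → ℤ} {s : Fin p → ℤ} {d : ℤ}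
    {v : Fin p → MvPolynomial (Fin r) K} (hv : HomogV w s d v) : component w s d v = v := by
  funext j
  exact (hv j).weightedHomogeneousComponent_same

/-- In a minimal presentation, where the columns of `X` generate modulo those of `Y` and relations
have no constant terms, the shifts are bounded by the degrees of the generators. Otherwise the
`j`-th column would be superfluous: in degrees at most `C < s' j` it cannot contribute. -/
lemma shift_le {K : Type} [Field K] {w : Fin r → ℤ} (hw : ∀ i, 0 < w i) {p p' p₂ : ℕ}
    {s : Fin p → ℤ} {s' : Fin p' → ℤ} {s₂ : Fin p₂ → ℤ} {C : ℤ}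
    {X : Matrix (Fin p) (Fin p') (MvPolynomial (Fin r) K)}
    {Y : Matrix (Fin p) (Fin p₂) (MvPolynomial (Fin r) K)}
    (hX : ∀ j k, IsWeightedHomogeneous w (X j k) (s' k - s j))
    (hY : ∀ j k, IsWeightedHomogeneous w (Y j k) (s₂ k - s j))
    (hC : GenLE w s C (LinearMap.range X.mulVecLin ⊔ LinearMap.range Y.mulVecLin))
    (hmin : ∀ v, X.mulVec v ∈ LinearMap.range Y.mulVecLin → ∀ j, constantCoeff (v j) = 0)
    (j : Fin p') : s' j ≤ C := by
  by_contra hj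
  push Not at hj
  let T : Submodule (MvPolynomial (Fin r) K) (Fin p' → MvPolynomial (Fin r) K) :=
    LinearMap.ker (LinearMap.proj j)
  have h1 : Submodule.span (MvPolynomial (Fin r) K)
      (lowDeg w s C (LinearMap.range X.mulVecLin ⊔ LinearMap.range Y.mulVecLin)) ≤
      T.map X.mulVecLin ⊔ LinearMap.range Y.mulVecLin := by
    rw [Submodule.span_le]
    rintro y ⟨hy, d, hd, hyd⟩
    obtain ⟨_, ⟨v, rfl⟩, _, ⟨u, rfl⟩, rfl⟩ := Submodule.mem_sup.mp hy
    simp only [Matrix.mulVecLin_apply] at hyd ⊢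
    have h2 : X.mulVec (component w s' d v) + Y.mulVec (component w s₂ d u) =
        X.mulVec v + Y.mulVec u := by
      rw [← component_mulVec hX, ← component_mulVec hY, ← component_of_homogV hyd]
      funext k
      simp [component]
    rw [← h2]
    refine Submodule.add_mem_sup ⟨_, ?_, rfl⟩ ⟨_, rfl⟩
    show weightedHomogeneousComponent w (d - s' j) (v j) = 0
    -- there are no monomials of negative degree
    ext a
    rw [coeff_weightedHomogeneousComponent, if_neg, coeff_zero]
    have := weight_nonneg hw a
    lia
  have h3 : X.mulVec (Pi.single j 1) ∈ T.map X.mulVecLin ⊔ LinearMap.range Y.mulVecLin :=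
    h1 (hC (Submodule.mem_sup_left ⟨_, rfl⟩))
  obtain ⟨_, ⟨v, hv, rfl⟩, y, hy, hsum⟩ := Submodule.mem_sup.mp h3
  have hv0 : v j = 0 := hv
  have h4 := hmin (Pi.single j 1 - v) (by
    rw [Matrix.mulVec_sub, ← hsum, Matrix.mulVecLin_apply, add_sub_cancel_left]
    exact hy) j
  simp [hv0] at h4

/-- In a minimal presentation the columns are linearly independent over `K`, and their entries
are combinations of boundedly many monomials. -/
lemma rank_le {K : Type} [Field K] {w : Fin r → ℤ} {p p' p₂ : ℕ}
    {s : Fin p → ℤ} {s' : Fin p' → ℤ} {C lo : ℤ}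
    {X : Matrix (Fin p) (Fin p') (MvPolynomial (Fin r) K)}
    {Y : Matrix (Fin p) (Fin p₂) (MvPolynomial (Fin r) K)}
    (hX : ∀ j k, IsWeightedHomogeneous w (X j k) (s' k - s j))
    (hmin : ∀ v, X.mulVec v ∈ LinearMap.range Y.mulVecLin → ∀ j, constantCoeff (v j) = 0)
    (hs' : ∀ k, s' k ≤ C) (hs : ∀ j, lo ≤ s j) (A : Finset (Fin r →₀ ℕ))
    (hA : ∀ a, Finsupp.weight w a ≤ C - lo → a ∈ A) : p' ≤ p * A.card := by
  let L : (Fin p' → K) →ₗ[K] (Fin p × A → K) :=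
    LinearMap.pi fun x => ∑ k, (coeff x.2.1 (X x.1 k)) • LinearMap.proj k
  have hL : ∀ c x, L c x = ∑ k, coeff x.2.1 (X x.1 k) * c k := by
    intro c x
    simp [L]
  have hinj : Function.Injective L := by
    rw [← LinearMap.ker_eq_bot, LinearMap.ker_eq_bot']
    intro c hc
    have h1 : X.mulVec (fun k => MvPolynomial.C (c k)) = 0 := by
      funext j
      ext a
      simp only [Matrix.mulVec, dotProduct, coeff_sum, Pi.zero_apply, coeff_zero]
      simp only [mul_comm _ (MvPolynomial.C _), coeff_C_mul]
      by_cases ha : a ∈ A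
      · have := congrFun hc (j, ⟨a, ha⟩)
        rw [hL] at this
        simpa [mul_comm] using this
      · refine Finset.sum_eq_zero fun k _ => ?_
        have : coeff a (X j k) = 0 := by
          by_contra h
          refine ha (hA a ?_)
          rw [hX j k h]
          linarith [hs' k, hs j]
        rw [this, mul_zero]
    funext k
    simpa using hmin (fun k => MvPolynomial.C (c k)) (by rw [h1]; exact zero_mem _) k
  simpa using LinearMap.finrank_le_finrank_of_injective hinj

/-- One step of a minimal resolution, whose next free module maps by `X` onto a submodule of
`coker Y`: bounds for the rank, the shifts and the degrees of generators yield bounds for the rank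
and the shifts of the next free module and for the generators of the relations on it. The case
`p₂ = 0` covers the later steps, where nothing is divided out. -/
lemma exists_step (ψ : G →+ ℤ) (hψ : ∀ i, 0 < ψ (w i)) (D : Finset G) (N : ℕ) (B C : ℤ) :
    ∃ (D' : Finset G) (N' : ℕ) (C' : ℤ), ∀ (K : Type) [Field K] (p p' p₂ : ℕ)
      (s : Fin p → G) (s' : Fin p' → G) (s₂ : Fin p₂ → G)
      (X : Matrix (Fin p) (Fin p') (MvPolynomial (Fin r) K))
      (Y : Matrix (Fin p) (Fin p₂) (MvPolynomial (Fin r) K)),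
      p ≤ N → (∀ j, s j ∈ D) → (∀ k, ψ (s₂ k) ≤ B) →
      (∀ j k, IsWeightedHomogeneous w (X j k) (s' k - s j)) →
      (∀ j k, IsWeightedHomogeneous w (Y j k) (s₂ k - s j)) →
      GenLE (fun i => ψ (w i)) (fun j => ψ (s j)) C
        (LinearMap.range X.mulVecLin ⊔ LinearMap.range Y.mulVecLin) →
      (∀ v, X.mulVec v ∈ LinearMap.range Y.mulVecLin → ∀ j, constantCoeff (v j) = 0) →
      p' ≤ N' ∧ (∀ j, s' j ∈ D') ∧ GenLE (fun i => ψ (w i)) (fun j => ψ (s' j)) C'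
        ((LinearMap.range Y.mulVecLin).comap X.mulVecLin) := by
  classical
  obtain ⟨lo, hlo⟩ := (D.finite_toSet.image ψ).bddBelow
  let A : Finset (Fin r →₀ ℕ) := (finite_weight_le hψ (C - lo)).toFinset
  have hA : ∀ a, Finsupp.weight (fun i => ψ (w i)) a ≤ C - lo → a ∈ A := by
    intro a ha
    simpa [A] using ha
  let D' : Finset G := (D ×ˢ A).image fun x => x.1 + Finsupp.weight w x.2
  obtain ⟨C', hC'⟩ := exists_genLE_comap hψ B (N * A.card) N (D'.image ψ) (D.image ψ)
  refine ⟨D', N * A.card, C', fun K _ p p' p₂ s s' s₂ X Y hp hs hs₂ hX hY hgen hmin => ?_⟩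
  have hXψ : ∀ j k, IsWeightedHomogeneous (fun i => ψ (w i)) (X j k) (ψ (s' k) - ψ (s j)) := by
    intro j k
    simpa using isWeightedHomogeneous_comp ψ (hX j k)
  have hYψ : ∀ j k, IsWeightedHomogeneous (fun i => ψ (w i)) (Y j k) (ψ (s₂ k) - ψ (s j)) := by
    intro j k
    simpa using isWeightedHomogeneous_comp ψ (hY j k)
  have hshift := shift_le hψ hXψ hYψ hgen hmin
  have hlo' : ∀ j, lo ≤ ψ (s j) := fun j => hlo ⟨s j, hs j, rfl⟩
  have hrank : p' ≤ N * A.card :=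
    (rank_le hXψ hmin hshift hlo' A hA).trans (Nat.mul_le_mul_right _ hp)
  have hD' : ∀ k, s' k ∈ D' := by
    intro k
    -- the `k`-th column is nonzero, so `s' k` differs from some `s j` by the degree of a monomial
    have hne : X.mulVec (Pi.single k 1) ≠ 0 := by
      intro h0
      have := hmin (Pi.single k 1) (by rw [h0]; exact zero_mem _) k
      simp at this
    obtain ⟨j, hj⟩ := Function.ne_iff.mp hne
    simp only [Matrix.mulVec_single_one, Matrix.col_apply, Pi.zero_apply] at hj
    obtain ⟨a, ha⟩ := ne_zero_iff.mp hj
    refine Finset.mem_image.mpr ⟨(s j, a), Finset.mem_product.mpr ⟨hs j, hA a ?_⟩, ?_⟩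
    · rw [hXψ j k ha]
      linarith [hshift k, hlo' j]
    · simp [hX j k ha]
  refine ⟨hrank, hD', ?_⟩
  refine hC' p' hrank p hp (fun k => ψ (s' k)) (fun j => ψ (s j))
    (fun k => Finset.mem_image_of_mem _ (hD' k)) (fun j => Finset.mem_image_of_mem _ (hs j))
    K X _ hXψ ?_
  -- the columns of `Y` generate its range
  rintro _ ⟨u, rfl⟩
  have h1 : Y.mulVecLin u = ∑ k, u k • Y.col k := by
    funext j
    simp [Matrix.mulVec, dotProduct, mul_comm]
  rw [h1]
  refine Submodule.sum_mem _ fun k _ => Submodule.smul_mem _ _ (Submodule.subset_span ?_)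
  exact ⟨⟨Pi.single k 1, by simp⟩, _, hs₂ k, fun j => hYψ j k⟩

end Step

/-! ### Resolutions of the fibre homology -/

section Fibre

variable {A : Type} [CommRing A] {G : Type} [AddCommGroup G] {r : ℕ} {w : Fin r → G}

lemma isWeightedHomogeneous_map {K : Type} [Field K] (φ : A →+* K) {p : MvPolynomial (Fin r) A}
    {g : G} (hp : IsWeightedHomogeneous w p g) :
    IsWeightedHomogeneous w (MvPolynomial.map φ p) g := fun a ha => by
  refine hp fun h => ha ?_
  rw [coeff_map, h, map_zero]

/-- The augmentation of a graded free resolution of the fibre homology lifts to a matrix of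
homogeneous cycles; together with the boundaries its columns generate all cycles. -/
lemma exists_lift {K : Type} [Field K] (F : GradedFreeComplex A G r w) (i : ℤ) (φ : A →+* K)
    (res : MinimalGradedFreeResolution K r w (F.fibreHomology φ i)
      (F.fibreHomologyGrading φ i)) :
    ∃ X : Matrix (Fin (F.rank (i + 1))) (Fin (res.rank 0)) (MvPolynomial (Fin r) K),
      (∀ j k, IsWeightedHomogeneous w (X j k) (res.shift 0 k - F.shift (i + 1) j)) ∧
      LinearMap.range X.mulVecLin ⊔ LinearMap.range (F.fibreMap φ (i + 1)) =
        F.fibreCycles φ i ∧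
      (∀ v, X.mulVec v ∈ LinearMap.range (F.fibreMap φ (i + 1)) ↔ res.aug v = 0) := by
  have h1 : ∀ k, ∃ z : F.fibreCycles φ i,
      (∀ j, IsWeightedHomogeneous w (z.1 j) (res.shift 0 k - F.shift (i + 1) j)) ∧
      (F.fibreBoundaries φ i).mkQ z = res.aug (Pi.single k 1) := by
    intro k
    obtain ⟨z, hz, hzk⟩ := res.aug_graded (res.shift 0 k) (Pi.single k 1) (by
      intro j
      by_cases h : j = k
      · subst h
        simpa using isWeightedHomogeneous_one K w
      · rw [Pi.single_eq_of_ne h]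
        exact zero_mem _)
    exact ⟨z, fun j => hz j trivial, hzk⟩
  choose z hz hzk using h1
  let X : Matrix (Fin (F.rank (i + 1))) (Fin (res.rank 0)) (MvPolynomial (Fin r) K) :=
    fun j k => (z k).1 j
  have hsum : ∀ v, X.mulVec v = ((∑ k, v k • z k : F.fibreCycles φ i) :
      Fin (F.rank (i + 1)) → MvPolynomial (Fin r) K) := by
    intro v
    funext j
    simp [X, Matrix.mulVec, dotProduct, mul_comm]
  have haug : ∀ v, (F.fibreBoundaries φ i).mkQ (∑ k, v k • z k) = res.aug v := by
    intro v
    conv_rhs => rw [pi_eq_sum_univ' v]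
    simp only [map_sum, map_smul, hzk]
  have hle : LinearMap.range (F.fibreMap φ (i + 1)) ≤ F.fibreCycles φ i := by
    rintro _ ⟨u, rfl⟩
    rw [LinearMap.mem_ker]
    simp only [GradedFreeComplex.fibreMap, Matrix.mulVecLin_apply, Matrix.mulVec_mulVec]
    rw [← Matrix.map_mul, F.d_comp]
    simp
  refine ⟨X, fun j k => hz k j, le_antisymm (sup_le ?_ hle) ?_, fun v => ?_⟩
  · rintro _ ⟨v, rfl⟩
    rw [Matrix.mulVecLin_apply, hsum]
    exact Subtype.prop _
  · intro c hc
    obtain ⟨v, hv⟩ := res.aug_surjective ((F.fibreBoundaries φ i).mkQ ⟨c, hc⟩)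
    rw [← haug, ← sub_eq_zero, ← map_sub, Submodule.mkQ_apply,
      Submodule.Quotient.mk_eq_zero] at hv
    have h2 : X.mulVec v - c ∈ LinearMap.range (F.fibreMap φ (i + 1)) := by
      rw [hsum]
      exact hv
    have h3 : c = X.mulVec v + -(X.mulVec v - c) := by abel
    rw [h3]
    exact Submodule.add_mem_sup ⟨v, rfl⟩ (neg_mem h2)
  · rw [← haug, Submodule.mkQ_apply, Submodule.Quotient.mk_eq_zero, hsum]
    rfl

/-- For each `n` the ranks, the shifts and the degrees of the syzygies in step `n` of the minimal
resolutions are bounded independently of the fibre. -/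
lemma exists_bounds (ψ : G →+ ℤ) (hψ : ∀ i, 0 < ψ (w i)) (F : GradedFreeComplex A G r w) (i : ℤ)
    (n : ℕ) :
    ∃ (D : Finset G) (N : ℕ) (C : ℤ), ∀ (K : Type) [Field K] (φ : A →+* K)
      (res : MinimalGradedFreeResolution K r w (F.fibreHomology φ i)
        (F.fibreHomologyGrading φ i)),
      res.rank n ≤ N ∧ (∀ j, res.shift n j ∈ D) ∧
      GenLE (fun i => ψ (w i)) (fun j => ψ (res.shift n j)) C
        (LinearMap.range (res.d n).mulVecLin) := by
  classical
  induction n with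
  | zero =>
    obtain ⟨B, hB⟩ := (Set.finite_range fun k => ψ (F.shift (i + 1 + 1) k)).bddAbove
    obtain ⟨C, hC⟩ := exists_genLE_comap_aux hψ 0 (fun k => ψ (F.shift (i + 1) k))
      (fun j => ψ (F.shift i j))
    obtain ⟨D', N', C', h⟩ := exists_step ψ hψ (Finset.univ.image (F.shift (i + 1)))
      (F.rank (i + 1)) B C
    refine ⟨D', N', C', fun K _ φ res => ?_⟩
    obtain ⟨X, hX, hsup, haug⟩ := exists_lift F i φ res
    have hker : (LinearMap.range (F.fibreMap φ (i + 1))).comap X.mulVecLin =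
        LinearMap.range (res.d 0).mulVecLin := by
      rw [← res.exact_zero]
      ext v
      exact haug v
    rw [← hker]
    refine h K _ _ _ (F.shift (i + 1)) (res.shift 0) (F.shift (i + 1 + 1)) X
      ((F.d (i + 1)).map (MvPolynomial.map φ)) le_rfl
      (fun j => Finset.mem_image_of_mem _ (Finset.mem_univ j)) (fun k => hB ⟨k, rfl⟩) hX
      (fun j k => isWeightedHomogeneous_map φ (F.d_homog (i + 1) j k)) ?_ ?_
    · have := hC K ((F.d i).map (MvPolynomial.map φ)) ⊥ (fun j k => by
        simpa using isWeightedHomogeneous_comp ψ (isWeightedHomogeneous_map φ (F.d_homog i j k)))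
        bot_le
      change GenLE _ _ _ (_ ⊔ LinearMap.range (F.fibreMap φ (i + 1)))
      rw [hsup]
      exact this
    · intro v hv j
      have h1 : v ∈ LinearMap.ker res.aug := (haug v).mp hv
      rw [res.exact_zero] at h1
      obtain ⟨u, rfl⟩ := h1
      simp [Matrix.mulVec, dotProduct, res.minimal]
  | succ n ih =>
    obtain ⟨D, N, C, hD⟩ := ih
    obtain ⟨D', N', C', h⟩ := exists_step ψ hψ D N 0 C
    refine ⟨D', N', C', fun K _ φ res => ?_⟩
    obtain ⟨h1, h2, h3⟩ := hD K φ res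
    let Y : Matrix (Fin (res.rank n)) (Fin 0) (MvPolynomial (Fin r) K) := 0
    have hY : LinearMap.range Y.mulVecLin = ⊥ := by simp [Y]
    have := h K _ _ 0 (res.shift n) (res.shift (n + 1)) Fin.elim0 (res.d n) Y h1 h2
      (fun k => k.elim0) (res.d_homog n) (fun _ k => k.elim0)
      (by rwa [hY, sup_bot_eq])
    rw [hY] at this
    rw [← res.exact_succ]
    refine this fun v hv j => ?_
    have h4 : v ∈ LinearMap.ker (res.d n).mulVecLin := hv
    rw [res.exact_succ] at h4
    obtain ⟨u, rfl⟩ := h4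
    simp [Matrix.mulVec, dotProduct, res.minimal]

end Fibre

end FiniteShifts

theorem finite_shifts_of_minimal_resolutions_of_fibre_homology
    (A : Type) [CommRing A]
    (G : Type) [AddCommGroup G] [DecidableEq G]
    (r : ℕ) (w : Fin r → G) (ψ : G →+ ℤ) (hψ : ∀ i, 0 < ψ (w i))
    (F : GradedFreeComplex A G r w) (i : ℤ) :
    ∃ D : Finset G, ∀ (K : Type) [Field K] (φ : A →+* K)
      (res : MinimalGradedFreeResolution K r w (F.fibreHomology φ i)
        (F.fibreHomologyGrading φ i)),
      ∀ (n : ℕ) (j : Fin (res.rank n)), res.shift n j ∈ D := by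
  choose D N C h using FiniteShifts.exists_bounds ψ hψ F i
  refine ⟨(Finset.range (r + 1)).biUnion D, fun K _ φ res n j => ?_⟩
  by_cases hn : n ≤ r
  · exact Finset.mem_biUnion.mpr ⟨n, by simpa [Nat.lt_succ_iff] using hn, (h n K φ res).2.1 j⟩
  · have h0 := FiniteShifts.rank_eq_zero r res.rank res.d res.minimal res.exact_succ n (by lia)
    exact absurd j.2 (by lia)
end

section
/- Let F_• be a complex of finitely generated graded free R-modules. For every integer i there exists a finite set of degrees D(i) ⊆ G such that for any prime ideal p ∈ Spec(A) the following are equivalent: (a) H_i([F_•]_μ ⊗_A k(p)) = 0 for every μ ∈ D(i), where [F_•]_μ is the degree-μ strand of the complex; (b) H_i(F_• ⊗_A k(p)) = 0. -/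
/-!
The proof bounds the syzygies of the matrix `d i` uniformly over all fibres: there is a finite set
`E` of exponents such that for every ring map from `A` to a field `K`, the kernel of the base
change of `d i` to `K` is generated by vectors involving only monomials with exponent in `E`
(`exists_syzygiesIn`). Given `E`, take `D` to be the set of degrees of the terms `x^a e_k` with
`a ∈ E`. Since the matrix is homogeneous, the homogeneous components of these generators are again
cycles, and their degrees lie in `D`; if they are all boundaries, so is every cycle
(`SyzygiesIn.ker_le`).

For the uniform bound one may replace `A` by the subring generated by the finitely many
coefficients of the matrix, which is Noetherian. Noetherian induction on the spectrum then reduces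
the claim to a Noetherian domain `B` and the ring maps that do not kill some fixed nonzero `f`.
There the argument is Grothendieck's generic freeness, proved through leading terms
(`exists_ker_generic`): by Dickson's lemma, inverting a single `f` makes all leading coefficients
of the image of the matrix `M` invertible (`exists_uniform_lead`). The image then has a `B`-basis of
vectors `M y_e` with distinct leading terms `e` and leading coefficient `f`, and these stay linearly
independent in any fibre where `f` is nonzero. Hence the kernel in such a fibre is spanned by the
base change of the kernel over `B`, which is finitely generated.
-/

/-!
STATEMENT 1 (Lemma `TM`(i)).
Setup: `A` a commutative ring, `G` an abelian group, `R = A[x_1,…,x_r]` graded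
by `G` via weights `w : Fin r → G`, and a `ℤ`-linear `ψ : G → ℤ` with
`ψ (w i) > 0` for all `i`.  For a prime `p`, `k(p)` is the residue field of `p`.

Claim: for a complex `F_•` of finitely generated graded free `R`-modules and
every integer `i` there is a finite set `D(i) ⊆ G` of degrees such that for
every prime `p` the following are equivalent:
(a) `H_i([F_•]_μ ⊗_A k(p)) = 0` for all `μ ∈ D(i)`;
(b) `H_i(F_• ⊗_A k(p)) = 0`.

Homology in position `i+1` of the fibre complex is `ker (fibreMap i) / im (fibreMap (i+1))`
(as `i` ranges over `ℤ` this captures every position); vanishing of the strand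
homology in degree `μ` says that every degree-`μ` cycle is a boundary.
-/

open MvPolynomial

/-- The residue field `k(p)` of a prime `p`. -/
abbrev resField {A : Type} [CommRing A] (p : PrimeSpectrum A) : Type :=
  IsLocalRing.ResidueField (Localization.AtPrime p.asIdeal)

/-- The canonical map `A →+* k(p)`. -/
noncomputable abbrev resHom {A : Type} [CommRing A] (p : PrimeSpectrum A) :
    A →+* resField p :=
  (algebraMap (Localization.AtPrime p.asIdeal) (resField p)).comp
    (algebraMap A (Localization.AtPrime p.asIdeal))

/-! ### Leading terms in a free module -/

/-- The sort key of the term `x^a e_j` of the free module `R^m`, encoded as the pair `(a, j)`: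
lexicographic on monomials, ties broken by the position. It gives a well-order on terms that is
compatible with multiplication by monomials. -/
noncomputable def termKey {r m : ℕ} (e : (Fin r →₀ ℕ) × Fin m) :
    Lex ((MonomialOrder.lex (σ := Fin r)).syn × Fin m) :=
  toLex (MonomialOrder.lex.toSyn e.1, e.2)

lemma termKey_injective {r m : ℕ} : Function.Injective (termKey (r := r) (m := m)) := by
  rintro ⟨a, j⟩ ⟨b, k⟩ h
  simpa [termKey] using h

lemma termKey_add_lt {r m : ℕ} (a b c : Fin r →₀ ℕ) (j k : Fin m) :
    termKey (a + c, j) < termKey (b + c, k) ↔ termKey (a, j) < termKey (b, k) := by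
  simp [termKey, Prod.Lex.toLex_lt_toLex]

/-- All terms of `v` beyond `e` vanish, and `c` is the coefficient of `v` at `e`. When `c ≠ 0` this
says that `c` is the leading coefficient of `v` and `e` its leading term; `c = 0` is allowed. -/
def IsLead {B : Type} [CommRing B] {r m : ℕ} (v : Fin m → MvPolynomial (Fin r) B)
    (e : (Fin r →₀ ℕ) × Fin m) (c : B) : Prop :=
  coeff e.1 (v e.2) = c ∧ ∀ e', termKey e < termKey e' → coeff e'.1 (v e'.2) = 0

lemma exists_isLead {B : Type} [CommRing B] {r m : ℕ} (v : Fin m → MvPolynomial (Fin r) B)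
    (hv : v ≠ 0) : ∃ e c, c ≠ 0 ∧ IsLead v e c := by
  classical
  let s : Finset ((Fin r →₀ ℕ) × Fin m) :=
    (Finset.univ.biUnion fun j => (v j).support) ×ˢ Finset.univ
  let t := s.filter fun e => coeff e.1 (v e.2) ≠ 0
  have ht : ∀ e : (Fin r →₀ ℕ) × Fin m, e ∈ t ↔ coeff e.1 (v e.2) ≠ 0 := by
    intro e
    simp only [t, s, Finset.mem_filter, Finset.mem_product, Finset.mem_biUnion, Finset.mem_univ,
      true_and, and_true, and_iff_right_iff_imp]
    intro h
    exact ⟨e.2, mem_support_iff.2 h⟩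
  have hne : t.Nonempty := by
    obtain ⟨j, hj⟩ := Function.ne_iff.1 hv
    obtain ⟨a, ha⟩ := MvPolynomial.ne_zero_iff.1 hj
    exact ⟨(a, j), (ht _).2 ha⟩
  obtain ⟨e, he, hmax⟩ := t.exists_max_image termKey hne
  refine ⟨e, _, (ht e).1 he, rfl, fun e' h => ?_⟩
  by_contra h'
  exact absurd (hmax e' ((ht e').2 h')) (not_le.2 h)

lemma IsLead.monomial_smul {B : Type} [CommRing B] {r m : ℕ}
    {v : Fin m → MvPolynomial (Fin r) B} {a : Fin r →₀ ℕ} {j : Fin m} {c : B}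
    (h : IsLead v (a, j) c) (b : Fin r →₀ ℕ) (d : B) :
    IsLead (monomial b d • v) (a + b, j) (d * c) := by
  refine ⟨?_, ?_⟩
  · have := h.1
    simp only at this
    simp [coeff_monomial_mul', this]
  · rintro ⟨a', j'⟩ hlt
    simp only [Pi.smul_apply, smul_eq_mul, coeff_monomial_mul']
    split_ifs with hb
    · obtain ⟨a'', rfl⟩ := exists_add_of_le hb
      rw [add_comm b a''] at hlt ⊢
      have := h.2 _ ((termKey_add_lt _ _ _ _ _).1 hlt)
      simp only at this
      simp [this]
    · rfl

/-- Over a domain, a single nonzero `f` is the leading coefficient of an element of `N` at every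
leading term of `N`. By Dickson's lemma the leading terms are generated by finitely many minimal
ones, and `f` is the product of leading coefficients chosen at those. -/
lemma exists_uniform_lead {B : Type} [CommRing B] [IsDomain B] {r m : ℕ}
    (N : Submodule (MvPolynomial (Fin r) B) (Fin m → MvPolynomial (Fin r) B)) :
    ∃ f : B, f ≠ 0 ∧ ∀ e, (∃ v ∈ N, ∃ c, c ≠ 0 ∧ IsLead v e c) → ∃ u ∈ N, IsLead u e f := by
  classical
  let P : Fin m → (Fin r →₀ ℕ) → Prop := fun j a => ∃ v ∈ N, ∃ c, c ≠ 0 ∧ IsLead v (a, j) c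
  have hfin : ∀ j, {a | Minimal (P j) a}.Finite := fun j =>
    WellQuasiOrderedLE.finite_of_isAntichain (setOfPred_minimal_antichain (P j))
  have hc : ∀ j a, ∃ c : B, c ≠ 0 ∧ (P j a → ∃ v ∈ N, IsLead v (a, j) c) := by
    intro j a
    by_cases h : P j a
    · obtain ⟨v, hv, c, hc, hl⟩ := h
      exact ⟨c, hc, fun _ => ⟨v, hv, hl⟩⟩
    · exact ⟨1, one_ne_zero, fun h' => absurd h' h⟩
  choose c hc0 hc using hc
  refine ⟨∏ j, ∏ a ∈ (hfin j).toFinset, c j a, ?_, ?_⟩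
  · exact Finset.prod_ne_zero_iff.2 fun j _ => Finset.prod_ne_zero_iff.2 fun a _ => hc0 j a
  · rintro ⟨a, j⟩ h
    obtain ⟨t, hta, ht⟩ := exists_minimal_le_of_wellFoundedLT (P j) a h
    obtain ⟨v, hv, hl⟩ := hc j t ht.1
    have hdvd : c j t ∣ ∏ j, ∏ a ∈ (hfin j).toFinset, c j a :=
      (Finset.dvd_prod_of_mem _ ((hfin j).mem_toFinset.2 ht)).trans
        (Finset.dvd_prod_of_mem (fun j => ∏ a ∈ (hfin j).toFinset, c j a) (Finset.mem_univ j))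
    obtain ⟨d, hd⟩ := hdvd
    obtain ⟨b, rfl⟩ := exists_add_of_le hta
    refine ⟨monomial b d • v, N.smul_mem _ hv, ?_⟩
    rw [hd, mul_comm]
    exact hl.monomial_smul b d

lemma IsLead.map {B K : Type} [CommRing B] [CommRing K] (φ : B →+* K) {r m : ℕ}
    {v : Fin m → MvPolynomial (Fin r) B} {e : (Fin r →₀ ℕ) × Fin m} {c : B} (h : IsLead v e c) :
    IsLead (fun j => MvPolynomial.map φ (v j)) e (φ c) := by
  refine ⟨by simp [coeff_map, h.1], fun e' he' => by simp [coeff_map, h.2 e' he']⟩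

/-- Vectors with pairwise distinct leading terms are linearly independent. -/
lemma linearIndependent_of_isLead {K : Type} [Field K] {r m : ℕ}
    (s : Set ((Fin r →₀ ℕ) × Fin m)) (u : s → Fin m → MvPolynomial (Fin r) K)
    (f : K) (hf : f ≠ 0) (hu : ∀ e : s, IsLead (u e) e f) : LinearIndependent K u := by
  classical
  rw [linearIndependent_iff]
  intro g hg
  by_contra hne
  obtain ⟨e, he, hmax⟩ := g.support.exists_max_image (fun e : s => termKey e.1)
    (Finsupp.support_nonempty_iff.2 hne)
  have h1 : coeff e.1.1 (Finsupp.linearCombination K u g e.1.2) = g e * f := by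
    rw [Finsupp.linearCombination_apply, Finsupp.sum, Finset.sum_apply, coeff_sum,
      Finset.sum_eq_single e]
    · simp [(hu e).1]
    · intro e' he' hee
      have : termKey e'.1 < termKey e.1 := lt_of_le_of_ne (hmax e' he') fun h =>
        hee (Subtype.ext (termKey_injective h))
      simp [(hu e').2 _ this]
    · exact fun h => absurd he h
  rw [hg] at h1
  simp only [Pi.zero_apply, coeff_zero] at h1
  exact (mul_ne_zero (Finsupp.mem_support_iff.1 he) hf) h1.symm

lemma IsLead.sub_smul {B : Type} [CommRing B] {r m : ℕ}
    {v u : Fin m → MvPolynomial (Fin r) B} {e : (Fin r →₀ ℕ) × Fin m} {c f : B}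
    (hv : IsLead v e c) (hu : IsLead u e f) {e' : (Fin r →₀ ℕ) × Fin m} {c' : B} (hc' : c' ≠ 0)
    (h : IsLead (f • v - c • u) e' c') : termKey e' < termKey e := by
  by_contra hle
  apply hc'
  rw [← h.1]
  rcases (not_lt.1 hle).eq_or_lt with heq | hlt
  · obtain rfl := termKey_injective heq
    simp [hv.1, hu.1, mul_comm]
  · simp [hv.2 _ hlt, hu.2 _ hlt]

/-- Reduction modulo leading terms: if `L (y e)` has leading coefficient `f` at `e`, for each leading
term `e` of the image of `L`, then after inverting `f` the source of `L` is spanned over the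
coefficient ring `B` by `ker L` and the `y e`. -/
lemma exists_pow_smul_mem {B : Type} [CommRing B] {r m n : ℕ}
    (L : (Fin n → MvPolynomial (Fin r) B) →ₗ[MvPolynomial (Fin r) B]
      (Fin m → MvPolynomial (Fin r) B)) (f : B)
    (y : {e | ∃ v ∈ LinearMap.range L, ∃ c, c ≠ 0 ∧ IsLead v e c} →
      Fin n → MvPolynomial (Fin r) B)
    (hy : ∀ e, IsLead (L (y e)) e f) (x : Fin n → MvPolynomial (Fin r) B) :
    ∃ k : ℕ, f ^ k • x ∈
      (LinearMap.ker L).restrictScalars B ⊔ Submodule.span B (Set.range y) := by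
  have key : ∀ κ, ∀ x e c, termKey e = κ → c ≠ 0 → IsLead (L x) e c → ∃ k : ℕ, f ^ k • x ∈
      (LinearMap.ker L).restrictScalars B ⊔ Submodule.span B (Set.range y) := by
    intro κ
    induction κ using WellFoundedLT.induction with
    | ind κ ih =>
      intro x e c he hc hl
      let e₀ : {e | ∃ v ∈ LinearMap.range L, ∃ c, c ≠ 0 ∧ IsLead v e c} :=
        ⟨e, L x, ⟨x, rfl⟩, c, hc, hl⟩
      have hy₀ : c • y e₀ ∈ (LinearMap.ker L).restrictScalars B ⊔
          Submodule.span B (Set.range y) :=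
        Submodule.smul_mem _ _ (Submodule.mem_sup_right (Submodule.subset_span ⟨e₀, rfl⟩))
      -- Subtracting `c • y e₀` from `f • x` cancels the leading term of `L x`.
      have hL : L (f • x - c • y e₀) = f • L x - c • L (y e₀) := by
        rw [map_sub, LinearMap.map_smul_of_tower, LinearMap.map_smul_of_tower]
      have : ∃ k : ℕ, f ^ k • (f • x - c • y e₀) ∈
          (LinearMap.ker L).restrictScalars B ⊔ Submodule.span B (Set.range y) := by
        by_cases h0 : L (f • x - c • y e₀) = 0
        · exact ⟨0, by
            rw [pow_zero, one_smul]
            exact Submodule.mem_sup_left h0⟩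
        · obtain ⟨e', c', hc', hl'⟩ := exists_isLead _ h0
          exact ih _ (he ▸ hl.sub_smul (hy e₀) hc' (hL ▸ hl')) _ e' c' rfl hc' hl'
      obtain ⟨k, hk⟩ := this
      refine ⟨k + 1, ?_⟩
      have h2 := Submodule.add_mem _ hk (Submodule.smul_mem _ (f ^ k) hy₀)
      rwa [← smul_add, sub_add_cancel, smul_smul, ← pow_succ] at h2
  by_cases h0 : L x = 0
  · exact ⟨0, by
      rw [pow_zero, one_smul]
      exact Submodule.mem_sup_left h0⟩
  · obtain ⟨e, c, hc, hl⟩ := exists_isLead _ h0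
    exact key _ x e c rfl hc hl

/-! ### Kernels over the generic point of a domain -/

/-- Coefficientwise base change of vectors of polynomials along `φ`. -/
noncomputable def vecMap {B K : Type} [CommRing B] [CommRing K] (φ : B →+* K) {r : ℕ} (n : ℕ) :
    (Fin n → MvPolynomial (Fin r) B) →+ (Fin n → MvPolynomial (Fin r) K) :=
  (MvPolynomial.map φ).toAddMonoidHom.compLeft (Fin n)

@[simp] lemma vecMap_apply {B K : Type} [CommRing B] [CommRing K] (φ : B →+* K) {r n : ℕ}
    (x : Fin n → MvPolynomial (Fin r) B) (j : Fin n) :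
    vecMap φ n x j = MvPolynomial.map φ (x j) := rfl

lemma vecMap_smul {B K : Type} [CommRing B] [CommRing K] (φ : B →+* K) {r n : ℕ} (b : B)
    (x : Fin n → MvPolynomial (Fin r) B) : vecMap φ n (b • x) = φ b • vecMap φ n x := by
  ext1 j
  simp [smul_eq_C_mul]

lemma mulVec_vecMap {B K : Type} [CommRing B] [CommRing K] (φ : B →+* K) {r m n : ℕ}
    (M : Matrix (Fin m) (Fin n) (MvPolynomial (Fin r) B)) (x : Fin n → MvPolynomial (Fin r) B) :
    (M.map (MvPolynomial.map φ)).mulVec (vecMap φ n x) = vecMap φ m (M.mulVec x) := by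
  ext1 j
  simp [Matrix.mulVec, dotProduct]

lemma span_range_vecMap {B K : Type} [CommRing B] [CommRing K] (φ : B →+* K) (r n : ℕ) :
    Submodule.span K (Set.range (vecMap φ (r := r) n)) = ⊤ := by
  classical
  rw [eq_top_iff]
  rintro x -
  have : x = ∑ j, ∑ a ∈ (x j).support,
      coeff a (x j) • vecMap φ n (Pi.single j (monomial a (1 : B))) := by
    ext1 k
    rw [Finset.sum_apply, Finset.sum_eq_single k]
    · conv_lhs => rw [(x k).as_sum]
      simp [Finset.sum_apply, smul_monomial]
    · intro j _ hj
      simp [Finset.sum_apply, hj.symm]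
    · simp
  rw [this]
  exact Submodule.sum_mem _ fun j _ => Submodule.sum_mem _ fun a _ =>
    Submodule.smul_mem _ _ (Submodule.subset_span ⟨_, rfl⟩)

/-- Over a dense open subset of the spectrum of a domain, forming the kernel of a polynomial matrix
commutes with passage to the fibres. -/
lemma exists_ker_generic {B : Type} [CommRing B] [IsDomain B] {r m n : ℕ}
    (M : Matrix (Fin m) (Fin n) (MvPolynomial (Fin r) B)) :
    ∃ f : B, f ≠ 0 ∧ ∀ (K : Type) [Field K] (φ : B →+* K), φ f ≠ 0 →
      ∀ x, (M.map (MvPolynomial.map φ)).mulVec x = 0 →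
        x ∈ Submodule.span K (vecMap φ n '' {z | M.mulVec z = 0}) := by
  obtain ⟨f, hf, hlead⟩ := exists_uniform_lead (LinearMap.range M.mulVecLin)
  refine ⟨f, hf, fun K _ φ hφ x hx => ?_⟩
  have hy : ∀ e : {e | ∃ v ∈ LinearMap.range M.mulVecLin, ∃ c, c ≠ 0 ∧ IsLead v e c},
      ∃ y, IsLead (M.mulVecLin y) e f := by
    intro e
    obtain ⟨_, ⟨y, rfl⟩, h⟩ := hlead e e.2
    exact ⟨y, h⟩
  choose y hy using hy
  have hspan : x ∈ Submodule.span K (vecMap φ n '' {z | M.mulVec z = 0}) ⊔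
      Submodule.span K (Set.range fun e => vecMap φ n (y e)) := by
    have hall : x ∈ Submodule.span K (Set.range (vecMap φ (r := r) n)) := by
      rw [span_range_vecMap]; trivial
    refine Submodule.span_le.2 ?_ hall
    rintro _ ⟨x, rfl⟩
    obtain ⟨k, hk⟩ := exists_pow_smul_mem M.mulVecLin f y hy x
    have hmem : vecMap φ n (f ^ k • x) ∈ Submodule.span K (vecMap φ n '' {z | M.mulVec z = 0}) ⊔
      Submodule.span K (Set.range fun e => vecMap φ n (y e)) := by
      obtain ⟨z, hz, v, hv, hzv⟩ := Submodule.mem_sup.1 hk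
      rw [← hzv, map_add]
      refine Submodule.add_mem_sup (Submodule.subset_span ⟨z, hz, rfl⟩) ?_
      clear hzv
      induction hv using Submodule.span_induction with
      | mem v h =>
        obtain ⟨e, rfl⟩ := h
        exact Submodule.subset_span ⟨e, rfl⟩
      | zero => simp
      | add v v' _ _ h h' => rw [map_add]; exact Submodule.add_mem _ h h'
      | smul b v _ h => rw [vecMap_smul]; exact Submodule.smul_mem _ _ h
    rw [vecMap_smul, map_pow] at hmem
    exact (Submodule.smul_mem_iff _ (pow_ne_zero k hφ)).1 hmem
  obtain ⟨z, hz, v, hv, rfl⟩ := Submodule.mem_sup.1 hspan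
  have hzker : (M.map (MvPolynomial.map φ)).mulVec z = 0 := by
    clear hspan hx
    induction hz using Submodule.span_induction with
    | mem z h =>
      obtain ⟨z, h, rfl⟩ := h
      rw [mulVec_vecMap, show M.mulVec z = 0 from h, map_zero]
    | zero => simp
    | add v v' _ _ h h' => rw [Matrix.mulVec_add, h, h', add_zero]
    | smul b v _ h => rw [Matrix.mulVec_smul, h, smul_zero]
  have hvker : (M.map (MvPolynomial.map φ)).mulVec v = 0 := by
    rwa [Matrix.mulVec_add, hzker, zero_add] at hx
  obtain ⟨g, rfl⟩ := Finsupp.mem_span_range_iff_exists_finsupp.1 hv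
  have hind : LinearIndependent K fun e => vecMap φ m (M.mulVec (y e)) :=
    linearIndependent_of_isLead _ _ (φ f) hφ fun e => (hy e).map φ
  -- The leading coefficient `φ f` survives in `K`, so no combination of the `y e` is a syzygy.
  have hg : g = 0 := by
    rw [linearIndependent_iff] at hind
    apply hind
    rw [Finsupp.linearCombination_apply, ← hvker, Finsupp.sum, Finsupp.sum, Matrix.mulVec_sum]
    simp [Matrix.mulVec_smul, mulVec_vecMap]
  simpa [hg] using hz

/-! ### Uniformly bounded syzygies -/

/-- The kernel of `M` is generated by vectors all of whose monomials have exponent in `E`. -/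
def SyzygiesIn {K : Type} [CommRing K] {r m n : ℕ}
    (M : Matrix (Fin m) (Fin n) (MvPolynomial (Fin r) K)) (E : Finset (Fin r →₀ ℕ)) : Prop :=
  ∀ x, M.mulVec x = 0 → x ∈ Submodule.span (MvPolynomial (Fin r) K)
    {z | M.mulVec z = 0 ∧ ∀ j, (z j).support ⊆ E}

lemma SyzygiesIn.mono {K : Type} [CommRing K] {r m n : ℕ}
    {M : Matrix (Fin m) (Fin n) (MvPolynomial (Fin r) K)} {E E' : Finset (Fin r →₀ ℕ)}
    (h : SyzygiesIn M E) (hE : E ⊆ E') : SyzygiesIn M E' := fun x hx =>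
  Submodule.span_mono (t := {z | M.mulVec z = 0 ∧ ∀ j, (z j).support ⊆ E'})
    (fun _ hz => ⟨hz.1, fun j => (hz.2 j).trans hE⟩) (h x hx)

lemma exists_syzygiesIn_generic {B : Type} [CommRing B] [IsDomain B] [IsNoetherianRing B]
    {r m n : ℕ} (M : Matrix (Fin m) (Fin n) (MvPolynomial (Fin r) B)) :
    ∃ f : B, f ≠ 0 ∧ ∃ E : Finset (Fin r →₀ ℕ), ∀ (K : Type) [Field K] (φ : B →+* K),
      φ f ≠ 0 → SyzygiesIn (M.map (MvPolynomial.map φ)) E := by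
  classical
  obtain ⟨f, hf, h⟩ := exists_ker_generic M
  obtain ⟨S, hS⟩ : (LinearMap.ker M.mulVecLin).FG := IsNoetherian.noetherian _
  refine ⟨f, hf, S.biUnion fun z => Finset.univ.biUnion fun j => (z j).support,
    fun K _ φ hφ x hx => ?_⟩
  have hx' := Submodule.span_le_restrictScalars K (MvPolynomial (Fin r) K) _ (h K φ hφ x hx)
  rw [Submodule.restrictScalars_mem] at hx'
  refine Submodule.span_le.2 ?_ hx'
  rintro _ ⟨z, hz, rfl⟩
  have hz' : z ∈ Submodule.span (MvPolynomial (Fin r) B) (S : Set _) := by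
    rw [hS]; exact hz
  clear hz hx' hx
  induction hz' using Submodule.span_induction with
  | mem z hz =>
    refine Submodule.subset_span (Set.mem_ofPred.2 ⟨?_, fun j => ?_⟩)
    · have : z ∈ LinearMap.ker M.mulVecLin := hS ▸ Submodule.subset_span hz
      rw [mulVec_vecMap, show M.mulVec z = 0 from this, map_zero]
    · refine (support_map_subset φ (z j)).trans fun a ha => ?_
      exact Finset.mem_biUnion.2 ⟨z, hz, Finset.mem_biUnion.2 ⟨j, Finset.mem_univ _, ha⟩⟩
  | zero => simp
  | add v v' _ _ h h' => rw [map_add]; exact Submodule.add_mem _ h h'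
  | smul p v _ h =>
    have : vecMap φ n (p • v) = MvPolynomial.map φ p • vecMap φ n v := by
      ext1 j; simp
    rw [this]
    exact Submodule.smul_mem _ _ h

/-- Noetherian induction on the closed subset of `Spec B` that contains the kernel of `φ`: the
generic bound handles a dense open part of an irreducible closed set. -/
lemma exists_syzygiesIn_noetherian {B : Type} [CommRing B] [IsNoetherianRing B]
    {r m n : ℕ} (M : Matrix (Fin m) (Fin n) (MvPolynomial (Fin r) B)) :
    ∃ E : Finset (Fin r →₀ ℕ), ∀ (K : Type) [Field K] (φ : B →+* K),
      SyzygiesIn (M.map (MvPolynomial.map φ)) E := by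
  classical
  suffices H : ∀ I : Ideal B, ∃ E : Finset (Fin r →₀ ℕ), ∀ (K : Type) [Field K] (φ : B →+* K),
      I ≤ RingHom.ker φ → SyzygiesIn (M.map (MvPolynomial.map φ)) E by
    obtain ⟨E, hE⟩ := H ⊥
    exact ⟨E, fun K _ φ => hE K φ bot_le⟩
  intro I
  induction I using WellFoundedGT.induction with
  | ind I ih =>
  have ih' : ∀ a ∉ I, ∃ E : Finset (Fin r →₀ ℕ), ∀ (K : Type) [Field K] (φ : B →+* K),
      I ≤ RingHom.ker φ → φ a = 0 → SyzygiesIn (M.map (MvPolynomial.map φ)) E := by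
    intro a ha
    obtain ⟨E, hE⟩ := ih (I ⊔ Ideal.span {a})
      (left_lt_sup.2 fun h => ha ((Ideal.span_singleton_le_iff_mem I).1 h))
    exact ⟨E, fun K _ φ hI hφ => hE K φ
      (sup_le hI ((Ideal.span_singleton_le_iff_mem _).2 hφ))⟩
  by_cases hI : I.IsPrime
  · obtain ⟨f, hf, E₁, hE₁⟩ :=
      exists_syzygiesIn_generic (M.map (MvPolynomial.map (Ideal.Quotient.mk I)))
    obtain ⟨f, rfl⟩ := Ideal.Quotient.mk_surjective f
    obtain ⟨E₂, hE₂⟩ := ih' f fun h => hf (Ideal.Quotient.eq_zero_iff_mem.2 h)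
    refine ⟨E₁ ∪ E₂, fun K _ φ hφ => ?_⟩
    by_cases hf0 : φ f = 0
    · exact (hE₂ K φ hφ hf0).mono Finset.subset_union_right
    · have hφ' : ∀ a ∈ I, φ a = 0 := fun a ha => hφ ha
      have := hE₁ K (Ideal.Quotient.lift I φ hφ') (by
        rwa [Ideal.Quotient.lift_mk])
      rw [Matrix.map_map, ← RingHom.coe_comp] at this
      have hcomp : (MvPolynomial.map (Ideal.Quotient.lift I φ hφ')).comp
          (MvPolynomial.map (σ := Fin r) (Ideal.Quotient.mk I)) = MvPolynomial.map φ := by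
        refine MvPolynomial.ringHom_ext (fun b => ?_) fun k => by simp
        rw [RingHom.comp_apply, map_C, map_C, map_C, Ideal.Quotient.lift_mk]
      rw [hcomp] at this
      exact this.mono Finset.subset_union_left
  · rcases Ideal.not_isPrime_iff.1 hI with rfl | ⟨a, ha, b, hb, hab⟩
    · refine ⟨∅, fun K _ φ hφ => ?_⟩
      have : (1 : B) ∈ RingHom.ker φ := hφ trivial
      simp [RingHom.mem_ker] at this
    · obtain ⟨E₁, hE₁⟩ := ih' a ha
      obtain ⟨E₂, hE₂⟩ := ih' b hb
      refine ⟨E₁ ∪ E₂, fun K _ φ hφ => ?_⟩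
      have : φ a * φ b = 0 := by rw [← map_mul]; exact hφ hab
      rcases mul_eq_zero.1 this with h | h
      · exact (hE₁ K φ hφ h).mono Finset.subset_union_left
      · exact (hE₂ K φ hφ h).mono Finset.subset_union_right

/-- The exponents needed to generate the syzygies of a polynomial matrix are bounded uniformly
over all fibres. The finitely many coefficients of `M` lie in a finitely generated, hence
Noetherian, subring of `A`. -/
lemma exists_syzygiesIn {A : Type} [CommRing A]
    {r m n : ℕ} (M : Matrix (Fin m) (Fin n) (MvPolynomial (Fin r) A)) :
    ∃ E : Finset (Fin r →₀ ℕ), ∀ (K : Type) [Field K] (φ : A →+* K),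
      SyzygiesIn (M.map (MvPolynomial.map φ)) E := by
  classical
  let S : Finset A := Finset.univ.biUnion fun j => Finset.univ.biUnion fun k => (M j k).coeffs
  let B := Algebra.adjoin ℤ (S : Set A)
  have : Algebra.FiniteType ℤ B :=
    (Subalgebra.fg_iff_finiteType _).1 (Subalgebra.fg_adjoin_finset S)
  have : IsNoetherianRing B := Algebra.FiniteType.isNoetherianRing ℤ B
  have hM : ∀ j k, ∃ q : MvPolynomial (Fin r) B,
      MvPolynomial.map (algebraMap B A) q = M j k := by
    intro j k
    refine mem_range_map_iff_coeffs_subset.2 fun a ha => ?_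
    refine ⟨⟨a, Algebra.subset_adjoin ?_⟩, rfl⟩
    exact Finset.mem_biUnion.2
      ⟨j, Finset.mem_univ _, Finset.mem_biUnion.2 ⟨k, Finset.mem_univ _, ha⟩⟩
  choose M' hM' using hM
  obtain ⟨E, hE⟩ := exists_syzygiesIn_noetherian (Matrix.of M')
  refine ⟨E, fun K _ φ => ?_⟩
  have h := hE K (φ.comp (algebraMap B A))
  convert h using 1
  ext1 j k
  simp [← hM', MvPolynomial.map_map]

/-! ### Passage to homogeneous components -/

lemma weightedHomogeneousComponent_mul {K : Type} [CommRing K] {G : Type} [AddCommGroup G]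
    {r : ℕ} {w : Fin r → G} {q : MvPolynomial (Fin r) K} {d : G}
    (hq : IsWeightedHomogeneous w q d) (p : MvPolynomial (Fin r) K) (ν : G) :
    q * weightedHomogeneousComponent w ν p = weightedHomogeneousComponent w (d + ν) (q * p) := by
  classical
  ext e
  have key : ∀ x ∈ Finset.HasAntidiagonal.antidiagonal e,
      coeff x.1 q * coeff x.2 (weightedHomogeneousComponent w ν p) =
        if Finsupp.weight w e = d + ν then coeff x.1 q * coeff x.2 p else 0 := by
    rintro ⟨a, b⟩ hab
    obtain rfl := Finset.HasAntidiagonal.mem_antidiagonal.1 hab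
    by_cases ha : coeff a q = 0
    · simp [ha]
    · simp only [coeff_weightedHomogeneousComponent, map_add, hq ha, add_right_inj]
      split_ifs <;> simp
  rw [coeff_weightedHomogeneousComponent, coeff_mul, coeff_mul, Finset.sum_congr rfl key]
  split_ifs <;> simp

/-- For a homogeneous matrix, the homogeneous components of a syzygy are syzygies. Hence a submodule
`P` contains the whole kernel once it contains the syzygies of degree `μ`, for `μ` among the
degrees of the terms with exponent in `E`. -/
lemma SyzygiesIn.ker_le {K : Type} [CommRing K] {G : Type} [AddCommGroup G]
    {r m n : ℕ} {w : Fin r → G} {M : Matrix (Fin m) (Fin n) (MvPolynomial (Fin r) K)}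
    {s : Fin m → G} {t : Fin n → G}
    (hM : ∀ j k, IsWeightedHomogeneous w (M j k) (t k - s j))
    {E : Finset (Fin r →₀ ℕ)} (hE : SyzygiesIn M E) {D : Finset G}
    (hD : ∀ a ∈ E, ∀ k, Finsupp.weight w a + t k ∈ D)
    (P : Submodule (MvPolynomial (Fin r) K) (Fin n → MvPolynomial (Fin r) K))
    (hP : ∀ μ ∈ D, ∀ x, M.mulVec x = 0 → x ∈ gradedFreeStrand K r w n t μ → x ∈ P) :
    LinearMap.ker M.mulVecLin ≤ P := by
  classical
  intro x hx
  refine Submodule.span_le.2 ?_ (hE x hx)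
  rintro z ⟨hz, hzE⟩
  let c : G → Fin n → MvPolynomial (Fin r) K :=
    fun μ k => weightedHomogeneousComponent w (μ - t k) (z k)
  have hsum : z = ∑ μ ∈ D, c μ := by
    ext k a
    rw [Finset.sum_apply, coeff_sum, Finset.sum_eq_single (Finsupp.weight w a + t k)]
    · simp [c, coeff_weightedHomogeneousComponent]
    · intro μ _ hμ
      rw [coeff_weightedHomogeneousComponent, if_neg]
      rintro h
      exact hμ (by rw [h, sub_add_cancel])
    · intro h
      have ha : a ∉ (z k).support := fun ha => h (hD a (hzE k ha) k)
      simp [c, coeff_weightedHomogeneousComponent, notMem_support_iff.1 ha]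
  rw [hsum]
  refine Submodule.sum_mem _ fun μ hμ => hP μ hμ _ ?_ ?_
  · ext1 j
    have hj : ∑ k, M j k * z k = 0 := congrFun hz j
    calc ∑ k, M j k * c μ k
        = ∑ k, weightedHomogeneousComponent w (μ - s j) (M j k * z k) := by
          refine Finset.sum_congr rfl fun k _ => ?_
          rw [weightedHomogeneousComponent_mul (hM j k)]
          congr 2
          abel
      _ = 0 := by rw [← map_sum, hj, map_zero]
  · exact fun k _ => weightedHomogeneousComponent_isWeightedHomogeneous _ _

theorem finite_degree_test_for_fibre_homology_vanishing
    (A : Type) [CommRing A]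
    (G : Type) [AddCommGroup G] [DecidableEq G]
    (r : ℕ) (w : Fin r → G) (ψ : G →+ ℤ) (hψ : ∀ i, 0 < ψ (w i))
    (F : GradedFreeComplex A G r w) (i : ℤ) :
    ∃ D : Finset G, ∀ p : PrimeSpectrum A,
      ((∀ μ ∈ D, ∀ x, x ∈ LinearMap.ker (F.fibreMap (resHom p) i) →
          x ∈ gradedFreeStrand (resField p) r w (F.rank (i + 1)) (F.shift (i + 1)) μ →
          x ∈ LinearMap.range (F.fibreMap (resHom p) (i + 1)))
        ↔ LinearMap.ker (F.fibreMap (resHom p) i) ≤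
            LinearMap.range (F.fibreMap (resHom p) (i + 1))) := by
  obtain ⟨E, hE⟩ := exists_syzygiesIn (F.d i)
  let D : Finset G :=
    Finset.image₂ (fun a k => Finsupp.weight w a + F.shift (i + 1) k) E Finset.univ
  have hD : ∀ a ∈ E, ∀ k, Finsupp.weight w a + F.shift (i + 1) k ∈ D := fun a ha k =>
    Finset.mem_image₂_of_mem ha (Finset.mem_univ k)
  refine ⟨D, fun p => ⟨fun h => ?_, fun h _ _ x hx _ => h hx⟩⟩
  refine (hE (resField p) (resHom p)).ker_le (w := w) (s := F.shift i) (t := F.shift (i + 1))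
    (fun j k a ha => ?_) hD _ h
  rw [Matrix.map_apply, coeff_map] at ha
  exact F.d_homog i j k fun h0 => ha (by rw [h0, map_zero])
end

section
/- Let F_• be a complex of finitely generated graded free R-modules. For every integer i, the set { p ∈ Spec(A) : H_i(F_• ⊗_A k(p)) = 0 } is open in Spec(A) with the Zariski topology. -/
/-!
Homogeneity makes the fibre complex split by degree, and (after applying `ψ`) the part of degree at
most `n` is a complex of *finite* free modules, given by matrices over `A` that do not depend on the
prime. Exactness of a fixed finite complex is an open condition (`isOpen_exact_locus`): a
contracting homotopy at `p`, which exists over the field `k(p)`, lifts to `A` after clearing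
denominators, and remains good enough at every prime where the determinant of `d' s + t d` does not
vanish.

It remains to see that one single `n` suffices for all primes at once, because an infinite
intersection of open sets need not be open. The kernel of the differential over `k(p)[x]` is
generated by vectors whose total degree is bounded in terms of the size of the matrix, the number of
variables and the degree of the entries only, and not of the field. This is Hermann's theorem
(`syzBound`), proved by induction on the number of variables. Several equations are treated one at a
time (`syzBound_rows`). For one equation `∑ f j * u j = 0` with some `f j₀ ≠ 0`, Nagata's change of
variables makes the leading coefficient of `f j₀` in `x₀` a unit; modulo the Koszul syzygies
`f j₀ e_j - f j e_{j₀}` every solution then has bounded degree in `x₀` (`koszul_reduction`), and the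
solutions of bounded degree are those of a linear system over the polynomial ring in the remaining
variables (`syzBound_succ`).
-/

/-!
STATEMENT 2 (Lemma `TM`(ii)).
Setup: `A` a commutative ring, `G` an abelian group, `R = A[x_1,…,x_r]` graded
by `G` via weights `w : Fin r → G` (`deg a = 0` for `a ∈ A`), and a `ℤ`-linear
`ψ : G → ℤ` with `ψ (w i) > 0` for all `i`.  For a prime `p`, `k(p)` denotes the
residue field of `p`.

Claim: for a (`ℤ`-indexed) complex `F_•` of finitely generated graded free
`R`-modules and every integer `i`, the set
`{ p ∈ Spec A : H_i(F_• ⊗_A k(p)) = 0 }` is Zariski-open.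

Here homology in position `i + 1` of the fibre complex is
`ker (F.fibreMap φ i) / im (F.fibreMap φ (i+1))`; as `i` ranges over `ℤ` this
captures the homology in every position, and vanishing of homology is
expressed as `ker ≤ range`.
-/

open MvPolynomial

/-! ### Nagata's change of variables -/

section Shift

variable {k : Type} [Field k] {n : ℕ}

/-- The substitution fixing `x₀` and sending `x_i` to `x_i + c x₀ ^ (N ^ i)` for `i ≠ 0`. -/
noncomputable def shiftHom (N : ℕ) (c : k) :
    MvPolynomial (Fin (n + 1)) k →ₐ[k] MvPolynomial (Fin (n + 1)) k :=
  aeval fun i ↦ if i = 0 then X 0 else X i + c • X 0 ^ (N ^ (i : ℕ))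

lemma shiftHom_comp_neg (N : ℕ) (c : k) :
    (shiftHom (n := n) N c).comp (shiftHom N (-c)) = AlgHom.id _ _ := by
  rw [shiftHom, shiftHom, comp_aeval, ← MvPolynomial.aeval_X_left]
  ext i v
  cases i using Fin.cases <;> simp

/-- The automorphism `shiftHom N 1`, with inverse `shiftHom N (-1)`. -/
noncomputable def shiftEquiv (N : ℕ) :
    MvPolynomial (Fin (n + 1)) k ≃ₐ[k] MvPolynomial (Fin (n + 1)) k :=
  AlgEquiv.ofAlgHom (shiftHom N 1) (shiftHom N (-1))
    (shiftHom_comp_neg N 1) (by simpa using shiftHom_comp_neg N (-1 : k))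

/-- The substitution `shiftEquiv N` followed by the identification of `k[x₀, …, x_n]` with the
polynomials in `x₀` over `k[x₁, …, x_n]`. -/
noncomputable def nagata (N : ℕ) :
    MvPolynomial (Fin (n + 1)) k ≃ₐ[k] Polynomial (MvPolynomial (Fin n) k) :=
  (shiftEquiv N).trans (finSuccEquiv k n)

lemma nagata_X_zero (N : ℕ) : nagata N (X 0 : MvPolynomial (Fin (n + 1)) k) = Polynomial.X := by
  simp [nagata, shiftEquiv, shiftHom, finSuccEquiv_X_zero]

lemma nagata_X_succ (N : ℕ) (i : Fin n) :
    nagata N (X i.succ : MvPolynomial (Fin (n + 1)) k) =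
      Polynomial.X ^ (N ^ (i.succ : ℕ)) + Polynomial.C (X i) := by
  simp [nagata, shiftEquiv, shiftHom, finSuccEquiv_X_zero, finSuccEquiv_X_succ, add_comm]

lemma nagata_C (N : ℕ) (a : k) :
    nagata N (C a : MvPolynomial (Fin (n + 1)) k) = Polynomial.C (C a) := by
  rw [← MvPolynomial.algebraMap_eq, AlgEquiv.commutes]; rfl

lemma nagata_X_monic (N : ℕ) (i : Fin (n + 1)) (hN : 0 < N) :
    (nagata N (X i : MvPolynomial (Fin (n + 1)) k)).Monic ∧
    (nagata N (X i : MvPolynomial (Fin (n + 1)) k)).natDegree = N ^ (i : ℕ) := by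
  cases i using Fin.cases with
  | zero => simp [nagata_X_zero, Polynomial.monic_X]
  | succ i =>
    rw [nagata_X_succ]
    exact ⟨Polynomial.monic_X_pow_add_C _ (by positivity), Polynomial.natDegree_X_pow_add_C⟩

lemma nagata_monomial (N : ℕ) (hN : 0 < N) (v : Fin (n + 1) →₀ ℕ) (a : k) :
    ∃ p : Polynomial (MvPolynomial (Fin n) k), p.Monic ∧
      p.natDegree = ∑ i : Fin (n + 1), N ^ (i : ℕ) * v i ∧
      nagata N (monomial v a) = Polynomial.C (C a) * p := by
  refine ⟨∏ i, nagata N (X i) ^ v i, ?_, ?_, ?_⟩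
  · exact Polynomial.monic_prod_of_monic _ _ fun i _ => (nagata_X_monic N i hN).1.pow _
  · rw [Polynomial.natDegree_prod_of_monic _ _ fun i _ => (nagata_X_monic N i hN).1.pow _]
    refine Finset.sum_congr rfl fun i _ => ?_
    rw [(nagata_X_monic N i hN).1.natDegree_pow, (nagata_X_monic N i hN).2, mul_comm]
  · rw [monomial_eq, Finsupp.prod_pow, map_mul, nagata_C, map_prod]
    simp

/-- Uniqueness of the expansion in base `N`. -/
lemma nagata_weight_inj (N : ℕ) (hN : 1 < N) (v w : Fin (n + 1) →₀ ℕ)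
    (hv : ∀ i, v i < N) (hw : ∀ i, w i < N)
    (h : ∑ i : Fin (n + 1), N ^ (i : ℕ) * v i = ∑ i : Fin (n + 1), N ^ (i : ℕ) * w i) : v = w := by
  refine Finsupp.ext <| congrFun <| List.ofFn_inj.mp ?_
  apply Nat.ofDigits_inj_of_len_eq hN (by simp) (by simpa only [List.forall_mem_ofFn_iff] using hv)
    (by simpa only [List.forall_mem_ofFn_iff] using hw)
  simpa only [Nat.ofDigits_eq_sum_mapIdx, List.mapIdx_eq_ofFn, List.get_ofFn, List.length_ofFn,
    Fin.val_cast, mul_comm, List.sum_ofFn] using! h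

/-- When `N` exceeds the total degree, distinct monomials of `f` acquire distinct degrees in `x₀`,
so the leading coefficient of the image of `f` is a coefficient of `f`. -/
lemma nagata_isUnit_leadingCoeff (N : ℕ) (hN : 1 < N) (f : MvPolynomial (Fin (n + 1)) k)
    (hf : f ≠ 0) (hd : f.totalDegree < N) : IsUnit (nagata N f).leadingCoeff := by
  have h0 : 0 < N := by omega
  have hlt : ∀ v ∈ f.support, ∀ i, v i < N := fun v hv i =>
    ((monomial_le_degreeOf i hv).trans (degreeOf_le_totalDegree f i)).trans_lt hd
  choose p hp hpd hpe using fun v => nagata_monomial (k := k) (n := n) N h0 v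
  obtain ⟨v, vin, vs⟩ := Finset.exists_max_image f.support
    (fun v => ∑ i : Fin (n + 1), N ^ (i : ℕ) * v i) (support_nonempty.mpr hf)
  have hcv : coeff v f ≠ 0 := mem_support_iff.mp vin
  have hlead : (nagata N (monomial v (coeff v f))).leadingCoeff = C (coeff v f) := by
    rw [hpe, Polynomial.leadingCoeff_mul_monic (hp _ _), Polynomial.leadingCoeff_C]
  have hne : ∀ w, coeff w f ≠ 0 → (nagata N (monomial w (coeff w f))).degree
      = ((∑ i : Fin (n + 1), N ^ (i : ℕ) * w i : ℕ) : WithBot ℕ) := by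
    intro w hw
    rw [hpe, Polynomial.degree_C_mul_of_isUnit ((isUnit_iff_ne_zero.2 hw).map C),
      Polynomial.degree_eq_natDegree (hp _ _).ne_zero, hpd]
  have hsum : f = ∑ w ∈ f.support \ {v}, monomial w (coeff w f) + monomial v (coeff v f) := by
    conv_lhs => rw [← f.support_sum_monomial_coeff]
    rw [Finset.sum_eq_add_sum_sdiff_singleton_of_mem vin]
    exact add_comm _ _
  have key : (nagata N f).leadingCoeff = C (coeff v f) := by
    rw [← hlead]
    conv_lhs => rw [hsum]
    rw [map_add, map_sum]
    apply Polynomial.leadingCoeff_add_of_degree_lt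
    refine (Polynomial.degree_sum_le _ _).trans_lt ?_
    rw [hne v hcv, Finset.sup_lt_iff (WithBot.bot_lt_coe _)]
    intro w hw
    obtain ⟨hw1, hw2⟩ := Finset.mem_sdiff.mp hw
    rw [hne w (mem_support_iff.mp hw1)]
    refine WithBot.coe_lt_coe.2 (lt_of_le_of_ne (vs w hw1) fun h => hw2 ?_)
    exact Finset.mem_singleton.2 (nagata_weight_inj N hN w v (hlt w hw1) (hlt v vin) h)
  rw [key]
  exact (isUnit_iff_ne_zero.2 hcv).map C

end Shift

/-! ### Degree bounds for the change of variables -/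

section Degrees

variable {k : Type} [Field k] {n : ℕ}

lemma totalDegree_aeval_le {σ τ : Type} (g : σ → MvPolynomial τ k) (E : ℕ)
    (hg : ∀ i, (g i).totalDegree ≤ E) (p : MvPolynomial σ k) :
    (aeval g p).totalDegree ≤ p.totalDegree * E := by
  rw [MvPolynomial.aeval_def, MvPolynomial.eval₂_eq]
  refine totalDegree_finsetSum_le fun v hv => ?_
  refine (totalDegree_mul _ _).trans ?_
  rw [MvPolynomial.algebraMap_eq, totalDegree_C, zero_add]
  refine (totalDegree_finsetProd _ _).trans ?_
  calc ∑ i ∈ v.support, (g i ^ v i).totalDegree ≤ ∑ i ∈ v.support, v i * E :=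
        Finset.sum_le_sum fun i _ => (totalDegree_pow _ _).trans (Nat.mul_le_mul_left _ (hg i))
    _ = (v.sum fun _ e => e) * E := by rw [Finsupp.sum, Finset.sum_mul]
    _ ≤ _ := Nat.mul_le_mul_right _ (le_totalDegree hv)

lemma totalDegree_shiftHom_le (N : ℕ) (c : k) (p : MvPolynomial (Fin (n + 1)) k) :
    (shiftHom N c p).totalDegree ≤ p.totalDegree * (N + 1) ^ n := by
  refine totalDegree_aeval_le _ _ (fun i => ?_) p
  have h1 : 1 ≤ (N + 1) ^ n := Nat.one_le_pow _ _ (by omega)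
  split_ifs with h
  · simpa using h1
  · refine (totalDegree_add _ _).trans (max_le (by simpa using h1) ?_)
    refine (totalDegree_smul_le _ _).trans ?_
    rw [totalDegree_X_pow]
    calc N ^ (i : ℕ) ≤ (N + 1) ^ (i : ℕ) := Nat.pow_le_pow_left (by omega) _
      _ ≤ (N + 1) ^ n := Nat.pow_le_pow_right (by omega) (by omega)

lemma natDegree_nagata_le (N : ℕ) (p : MvPolynomial (Fin (n + 1)) k) :
    (nagata N p).natDegree ≤ p.totalDegree * (N + 1) ^ n := by
  change (finSuccEquiv k n (shiftHom N 1 p)).natDegree ≤ _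
  rw [natDegree_finSuccEquiv]
  exact (degreeOf_le_totalDegree _ _).trans (totalDegree_shiftHom_le N 1 p)

lemma totalDegree_coeff_nagata_le (N : ℕ) (p : MvPolynomial (Fin (n + 1)) k) (i : ℕ) :
    ((nagata N p).coeff i).totalDegree ≤ p.totalDegree * (N + 1) ^ n := by
  change ((finSuccEquiv k n (shiftHom N 1 p)).coeff i).totalDegree ≤ _
  by_cases h : (finSuccEquiv k n (shiftHom N 1 p)).coeff i = 0
  · simp [h]
  · have := totalDegree_coeff_finSuccEquiv_add_le _ _ h
    have := totalDegree_shiftHom_le N 1 p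
    omega

lemma finSuccEquiv_rename_succ (p : MvPolynomial (Fin n) k) :
    finSuccEquiv k n (rename Fin.succ p) = Polynomial.C p := by
  induction p using MvPolynomial.induction_on with
  | C a => rw [rename_C, ← MvPolynomial.algebraMap_eq, AlgEquiv.commutes]; rfl
  | add p q hp hq => simp only [map_add, hp, hq]
  | mul_X p i hp => rw [map_mul, map_mul, rename_X, finSuccEquiv_X_succ, hp, map_mul]

lemma totalDegree_nagata_symm_le (N B D : ℕ) (y : Fin D → MvPolynomial (Fin n) k)
    (hy : ∀ a, (y a).totalDegree ≤ B) :
    ((nagata N).symm (∑ a, Polynomial.C (y a) * Polynomial.X ^ (a : ℕ))).totalDegree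
      ≤ (B + D) * (N + 1) ^ n := by
  change (shiftHom N (-1) ((finSuccEquiv k n).symm _)).totalDegree ≤ _
  refine (totalDegree_shiftHom_le N (-1) _).trans (Nat.mul_le_mul_right _ ?_)
  have : (finSuccEquiv k n).symm (∑ a, Polynomial.C (y a) * Polynomial.X ^ (a : ℕ))
      = ∑ a, rename Fin.succ (y a) * X 0 ^ (a : ℕ) := by
    rw [AlgEquiv.symm_apply_eq]
    simp only [map_sum, map_mul, map_pow, finSuccEquiv_rename_succ, finSuccEquiv_X_zero]
  rw [this]
  refine totalDegree_finsetSum_le fun a _ => (totalDegree_mul _ _).trans ?_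
  rw [totalDegree_X_pow]
  exact add_le_add ((totalDegree_rename_le _ _).trans (hy a)) a.2.le

end Degrees

/-! ### Reduction modulo Koszul syzygies -/

section Koszul

variable {ι : Type} [Fintype ι] [DecidableEq ι]

/-- The Koszul syzygy `f j₀ e_j - f j e_{j₀}` of the row `f`; it is zero for `j = j₀`. -/
def koszul {S : Type} [CommRing S] (f : ι → S) (j₀ j : ι) : ι → S := fun i =>
  (if i = j then f j₀ else 0) - (if i = j₀ then f j else 0)

lemma sum_mul_koszul {S : Type} [CommRing S] (f : ι → S) (j₀ j : ι) :
    ∑ i, f i * koszul f j₀ j i = 0 := by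
  simp [koszul, mul_sub, mul_comm]

lemma sum_koszul {S : Type} [CommRing S] (f q : ι → S) (j₀ i : ι) :
    ∑ j, q j * koszul f j₀ j i = q i * f j₀ - if i = j₀ then ∑ j, f j * q j else 0 := by
  simp only [koszul, mul_sub, Finset.sum_sub_distrib, mul_ite, mul_zero, Finset.sum_ite_eq,
    Finset.mem_univ, if_true]
  split_ifs <;> simp [mul_comm]

/-- If `f j₀` has a unit as leading coefficient, every syzygy of `f` is congruent modulo Koszul
syzygies to one of bounded degree: division by `f j₀` bounds every entry except the one at `j₀`, and
the relation itself then bounds that one. -/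
lemma koszul_reduction {T : Type} [CommRing T] [IsDomain T] (f : ι → Polynomial T) (j₀ : ι)
    (hunit : IsUnit (f j₀).leadingCoeff) (D : ℕ) (hD : ∀ j, (f j).natDegree ≤ D)
    (u : ι → Polynomial T) (hu : ∑ j, f j * u j = 0) :
    ∃ q v : ι → Polynomial T, (∀ i, (v i).natDegree ≤ 2 * D) ∧ ∑ j, f j * v j = 0 ∧
      ∀ i, u i = ∑ j, q j * koszul f j₀ j i + v i := by
  obtain ⟨c, hc⟩ := hunit
  have hf0 : f j₀ ≠ 0 := by
    intro h
    rw [h, Polynomial.leadingCoeff_zero] at hc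
    exact c.ne_zero hc
  -- division with remainder by `f j₀`
  have hdiv : ∀ p : Polynomial T, ∃ q, (p - q * f j₀).natDegree ≤ D := by
    intro p
    set g := Polynomial.C (↑c⁻¹ : T) * f j₀ with hg
    have hgm : g.Monic := by
      rw [Polynomial.Monic, hg, Polynomial.leadingCoeff_mul, Polynomial.leadingCoeff_C, ← hc]
      simp
    refine ⟨(p /ₘ g) * Polynomial.C (↑c⁻¹ : T), ?_⟩
    have : p - (p /ₘ g) * Polynomial.C (↑c⁻¹ : T) * f j₀ = p %ₘ g := by
      rw [Polynomial.modByMonic_eq_sub_mul_div, hg]; ring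
    rw [this]
    refine (Polynomial.natDegree_modByMonic_le p hgm).trans ?_
    refine (Polynomial.natDegree_C_mul_le _ _).trans (hD j₀)
  choose q hq using fun j => hdiv (u j)
  set v : ι → Polynomial T := fun i => u i - ∑ j, q j * koszul f j₀ j i with hv
  have hfv : ∑ j, f j * v j = 0 := by
    simp only [hv, mul_sub, Finset.sum_sub_distrib, hu, Finset.mul_sum, zero_sub, neg_eq_zero]
    rw [Finset.sum_comm]
    refine Finset.sum_eq_zero fun j _ => ?_
    have := sum_mul_koszul f j₀ j
    calc ∑ i, f i * (q j * koszul f j₀ j i) = q j * ∑ i, f i * koszul f j₀ j i := by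
          rw [Finset.mul_sum]; exact Finset.sum_congr rfl fun _ _ => by ring
      _ = 0 := by rw [this, mul_zero]
  have hvi : ∀ i, i ≠ j₀ → (v i).natDegree ≤ D := by
    intro i hi
    simp only [hv, sum_koszul, if_neg hi, sub_zero]
    exact hq i
  refine ⟨q, v, fun i => ?_, hfv, fun i => by simp [hv]⟩
  by_cases hi : i = j₀
  · subst hi
    by_cases hv0 : v i = 0
    · simp [hv0]
    have h1 : f i * v i = - ∑ j ∈ Finset.univ.erase i, f j * v j := by
      rw [eq_neg_iff_add_eq_zero, Finset.add_sum_erase _ (fun j => f j * v j) (Finset.mem_univ i),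
        hfv]
    have h2 : (f i * v i).natDegree ≤ 2 * D := by
      rw [h1, Polynomial.natDegree_neg]
      refine Polynomial.natDegree_sum_le_of_forall_le _ _ fun j hj => ?_
      refine Polynomial.natDegree_mul_le.trans ?_
      have := hD j
      have := hvi j (Finset.ne_of_mem_erase hj)
      omega
    rw [Polynomial.natDegree_mul hf0 hv0] at h2
    omega
  · have := hvi i hi
    omega

end Koszul

/-! ### Degree bounds for syzygies, uniform in the field -/

section Bounds

/-- For `m × ι` matrices with entries of total degree at most `d` in `r` variables over a field,
the syzygies have a generating family whose index type `ι'` and degree bound `B` depend neither on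
the matrix nor on the field. -/
def SyzBound (r m : ℕ) : Prop :=
  ∀ (ι : Type) [Fintype ι] (d : ℕ), ∃ (ι' : Type) (_ : Fintype ι') (B : ℕ),
    ∀ (k : Type) [Field k] (f : Fin m → ι → MvPolynomial (Fin r) k),
      (∀ i j, (f i j).totalDegree ≤ d) →
      ∃ g : ι' → ι → MvPolynomial (Fin r) k,
        (∀ x i, ∑ j, f i j * g x j = 0) ∧ (∀ x j, (g x j).totalDegree ≤ B) ∧
        ∀ u : ι → MvPolynomial (Fin r) k, (∀ i, ∑ j, f i j * u j = 0) →
          ∃ c : ι' → MvPolynomial (Fin r) k, ∀ j, u j = ∑ x, c x * g x j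

/-- Substituting generators for the solutions of the first equation into the remaining equations
reduces a system to systems with one equation less. -/
lemma syzBound_rows {r : ℕ} (h : SyzBound r 1) (m : ℕ) : SyzBound r m := by
  classical
  induction m with
  | zero =>
    intro ι _ d
    refine ⟨ι, inferInstance, 0, fun k _ f _ =>
      ⟨fun x j => if j = x then 1 else 0, fun x i => i.elim0, fun x j => ?_, fun u _ =>
        ⟨u, fun j => by simp⟩⟩⟩
    dsimp only
    split_ifs <;> simp
  | succ m ih =>
    intro ι _ d
    obtain ⟨ι₁, _, B₁, h₁⟩ := h ι d
    obtain ⟨ι₂, _, B₂, h₂⟩ := ih ι₁ (d + B₁)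
    refine ⟨ι₂, inferInstance, B₂ + B₁, fun k _ f hf => ?_⟩
    obtain ⟨g₁, hg₁, hd₁, hs₁⟩ := h₁ k (fun _ => f 0) (fun _ j => hf 0 j)
    obtain ⟨g₂, hg₂, hd₂, hs₂⟩ := h₂ k (fun i x => ∑ j, f i.succ j * g₁ x j) (fun i x =>
      totalDegree_finsetSum_le fun j _ => (totalDegree_mul _ _).trans
        (add_le_add (hf _ _) (hd₁ _ _)))
    have hcomp : ∀ (c : ι₁ → MvPolynomial (Fin r) k) (i : Fin (m + 1)),
        ∑ j, f i j * ∑ x, c x * g₁ x j = ∑ x, (∑ j, f i j * g₁ x j) * c x := by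
      intro c i
      simp only [Finset.mul_sum, Finset.sum_mul]
      rw [Finset.sum_comm]
      exact Finset.sum_congr rfl fun _ _ => Finset.sum_congr rfl fun _ _ => by ring
    refine ⟨fun y j => ∑ x, g₂ y x * g₁ x j, fun y i => ?_, fun y j => ?_, fun u hu => ?_⟩
    · rw [hcomp]
      cases i using Fin.cases with
      | zero => exact Finset.sum_eq_zero fun x _ => by rw [hg₁ x 0, zero_mul]
      | succ i => exact hg₂ y i
    · exact totalDegree_finsetSum_le fun x _ => (totalDegree_mul _ _).trans
        (add_le_add (hd₂ _ _) (hd₁ _ _))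
    · obtain ⟨c₁, hc₁⟩ := hs₁ u fun _ => hu 0
      obtain ⟨c₂, hc₂⟩ := hs₂ c₁ fun i => by
        rw [← hcomp c₁ i.succ, ← hu i.succ]
        exact Finset.sum_congr rfl fun j _ => by rw [← hc₁ j]
      refine ⟨c₂, fun j => ?_⟩
      rw [hc₁ j]
      simp only [hc₂, Finset.mul_sum, Finset.sum_mul]
      rw [Finset.sum_comm]
      exact Finset.sum_congr rfl fun _ _ => Finset.sum_congr rfl fun _ _ => by ring

lemma syzBound_zero : SyzBound 0 1 := by
  classical
  intro ι _ d
  refine ⟨ι, inferInstance, 0, fun k _ f _ => ?_⟩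
  have hdeg : ∀ p : MvPolynomial (Fin 0) k, p.totalDegree ≤ 0 := fun p => by
    rw [eq_C_of_isEmpty p, totalDegree_C]
  by_cases h : ∃ j₀, f 0 j₀ ≠ 0
  · obtain ⟨j₀, hj₀⟩ := h
    obtain ⟨b, hb⟩ : ∃ b, b * f 0 j₀ = 1 := by
      have : IsUnit (f 0 j₀) := by
        rw [eq_C_of_isEmpty (f 0 j₀)]
        refine (isUnit_iff_ne_zero.2 fun h => hj₀ ?_).map C
        rw [eq_C_of_isEmpty (f 0 j₀), h, C_0]
      exact this.exists_left_inv
    refine ⟨koszul (f 0) j₀, fun x i => ?_, fun _ _ => hdeg _, fun u hu => ⟨fun j => b * u j,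
      fun i => ?_⟩⟩
    · rw [Subsingleton.elim i 0]; exact sum_mul_koszul _ _ _
    · rw [sum_koszul]
      have : ∑ j, f 0 j * (b * u j) = b * ∑ j, f 0 j * u j := by
        rw [Finset.mul_sum]; exact Finset.sum_congr rfl fun _ _ => by ring
      rw [this, hu 0, mul_zero, ite_self, sub_zero]
      linear_combination (- u i) * hb
  · push Not at h
    refine ⟨fun x j => if j = x then 1 else 0, fun x i => ?_, fun _ _ => hdeg _,
      fun u _ => ⟨u, fun j => by simp⟩⟩
    rw [Subsingleton.elim i 0]; simp [h]

lemma eq_sum_coeff {T : Type} [CommRing T] (p : Polynomial T) (E : ℕ) (h : p.natDegree < E) :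
    p = ∑ a : Fin E, Polynomial.C (p.coeff a) * Polynomial.X ^ (a : ℕ) := by
  conv_lhs => rw [Polynomial.as_sum_range_C_mul_X_pow' p h]
  rw [Finset.sum_range]

/-- Induction step on the number of variables for one equation. The generators are the Koszul
syzygies, together with the generators of degree less than `E` in `x₀`, which come from a linear
system in the coefficients over the polynomial ring in `r` variables. -/
lemma syzBound_succ {r : ℕ} (h : ∀ m, SyzBound r m) : SyzBound (r + 1) 1 := by
  classical
  intro ι _ d
  -- `D` bounds the degrees after the change of variables; `E` is the number of coefficients of a
  -- reduced syzygy, and `3 * D + 1` the number of coefficients of the resulting relation.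
  set N := d + 2 with hN
  set D := d * (N + 1) ^ r with hD
  set E := 2 * D + 1 with hE
  obtain ⟨ι', _, B, hB⟩ := h (3 * D + 1) (ι × Fin E) D
  refine ⟨ι ⊕ ι', inferInstance, d + (B + E) * (N + 1) ^ r, fun k _ f hf => ?_⟩
  by_cases h0 : ∃ j₀, f 0 j₀ ≠ 0
  swap
  · push Not at h0
    refine ⟨Sum.elim (fun x j => if j = x then 1 else 0) (fun _ _ => 0), fun x i => ?_,
      fun x j => ?_, fun u _ => ⟨Sum.elim u 0, fun j => by simp⟩⟩
    · rw [Subsingleton.elim i 0]; simp [h0]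
    · rcases x with x | x
      · simp only [Sum.elim_inl]
        split_ifs <;> simp
      · simp
  obtain ⟨j₀, hj₀⟩ := h0
  set Θ := nagata (k := k) (n := r) N
  set F : ι → Polynomial (MvPolynomial (Fin r) k) := fun j => Θ (f 0 j) with hF
  have hFD : ∀ j, (F j).natDegree ≤ D := fun j =>
    (natDegree_nagata_le N _).trans (Nat.mul_le_mul_right _ (hf 0 j))
  have hFc : ∀ j c, ((F j).coeff c).totalDegree ≤ D := fun j c =>
    (totalDegree_coeff_nagata_le N _ c).trans (Nat.mul_le_mul_right _ (hf 0 j))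
  have hunit : IsUnit (F j₀).leadingCoeff :=
    nagata_isUnit_leadingCoeff N (by omega) _ hj₀ (by have := hf 0 j₀; omega)
  -- the polynomial vector with coefficients `y`
  let hat : (ι × Fin E → MvPolynomial (Fin r) k) → ι → Polynomial (MvPolynomial (Fin r) k) :=
    fun y j => ∑ a : Fin E, Polynomial.C (y (j, a)) * Polynomial.X ^ (a : ℕ)
  have hcoeff : ∀ y c, (∑ j, F j * hat y j).coeff c
      = ∑ x : ι × Fin E, (F x.1 * Polynomial.X ^ (x.2 : ℕ)).coeff c * y x := by
    intro y c
    simp only [hat, Finset.mul_sum, Polynomial.finsetSum_coeff, Fintype.sum_prod_type]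
    refine Finset.sum_congr rfl fun j _ => Finset.sum_congr rfl fun a _ => ?_
    rw [mul_left_comm, Polynomial.coeff_C_mul, mul_comm]
  have hzero : ∀ y, ∑ j, F j * hat y j = 0 ↔ ∀ c : Fin (3 * D + 1),
      ∑ x : ι × Fin E, (F x.1 * Polynomial.X ^ (x.2 : ℕ)).coeff c * y x = 0 := by
    intro y
    constructor
    · intro h c
      rw [← hcoeff, h, Polynomial.coeff_zero]
    · intro h
      ext1 c
      rw [Polynomial.coeff_zero]
      by_cases hc : c < 3 * D + 1
      · rw [hcoeff]; exact h ⟨c, hc⟩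
      · rw [hcoeff]
        refine Finset.sum_eq_zero fun x _ => ?_
        rw [Polynomial.coeff_eq_zero_of_natDegree_lt, zero_mul]
        refine Polynomial.natDegree_mul_le.trans_lt ?_
        have := hFD x.1
        have := x.2.2
        rw [Polynomial.natDegree_X_pow]
        omega
  obtain ⟨g, hg, hgd, hgs⟩ := hB k
    (fun c x => (F x.1 * Polynomial.X ^ (x.2 : ℕ)).coeff c) (fun c x => by
      rw [Polynomial.coeff_mul_X_pow']
      split_ifs
      · exact hFc _ _
      · simp)
  refine ⟨Sum.elim (koszul (f 0) j₀) (fun x j => Θ.symm (hat (g x) j)), fun x i => ?_,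
    fun x j => ?_, fun u hu => ?_⟩
  · rw [Subsingleton.elim i 0]
    rcases x with x | x
    · exact sum_mul_koszul _ _ _
    · apply Θ.injective
      simpa [hF] using (hzero (g x)).2 (hg x)
  · rcases x with x | x
    · refine le_trans ?_ (Nat.le_add_right _ _)
      simp only [Sum.elim_inl, koszul]
      refine (totalDegree_sub _ _).trans (max_le ?_ ?_)
      · split_ifs
        · exact hf _ _
        · simp
      · split_ifs
        · exact hf _ _
        · simp
    · exact (totalDegree_nagata_symm_le N B E _ fun a => hgd x (j, a)).trans (Nat.le_add_left _ _)
  · obtain ⟨q, v, hvd, hfv, huv⟩ := koszul_reduction F j₀ hunit D hFD (fun j => Θ (u j)) (by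
      have := congrArg Θ (hu 0)
      simpa [hF] using this)
    have hvhat : v = hat fun x => (v x.1).coeff x.2 := by
      ext1 j
      exact eq_sum_coeff (v j) E (by have := hvd j; omega)
    obtain ⟨c, hc⟩ := hgs (fun x => (v x.1).coeff x.2) (by
      rw [← hzero, ← hvhat]; exact hfv)
    refine ⟨Sum.elim (fun j => Θ.symm (q j)) (fun x => Θ.symm (Polynomial.C (c x))), fun j => ?_⟩
    apply Θ.injective
    have hk : ∀ x, Θ (koszul (f 0) j₀ x j) = koszul F j₀ x j := by
      intro x
      simp only [koszul, map_sub, hF]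
      split_ifs <;> simp
    rw [huv j]
    simp only [Fintype.sum_sum_type, Sum.elim_inl, Sum.elim_inr, map_add, map_sum, map_mul,
      AlgEquiv.apply_symm_apply, hk]
    congr 1
    rw [hvhat]
    simp only [hat, hc, map_sum, Finset.mul_sum, Finset.sum_mul, map_mul]
    rw [Finset.sum_comm]
    exact Finset.sum_congr rfl fun _ _ => Finset.sum_congr rfl fun _ _ => by ring

/-- **Hermann's theorem**: uniform degree bounds for syzygies over polynomial rings. -/
theorem syzBound (r m : ℕ) : SyzBound r m := by
  induction r generalizing m with
  | zero => exact syzBound_rows syzBound_zero m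
  | succ r ih => exact syzBound_rows (syzBound_succ ih) m

end Bounds

/-! ### Openness of the exactness locus of a finite complex -/

section Homotopy

open Matrix

variable {I J L : Type} [Fintype I] [Fintype J] [Fintype L] [DecidableEq J]

/-- Over a field, `ker D ≤ im D'` yields a contracting homotopy: choose a generalised inverse `t` of
`D`, and lift `1 - t D`, whose values lie in `ker D`, through `D'`. -/
lemma exists_homotopy [DecidableEq I] {K : Type} [Field K] (D : Matrix I J K) (D' : Matrix J L K)
    (h : ∀ y, D *ᵥ y = 0 → ∃ z, D' *ᵥ z = y) :
    ∃ (s : Matrix L J K) (t : Matrix J I K), D' * s + t * D = 1 := by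
  obtain ⟨t₀, ht₀⟩ := (D.mulVecLin.rangeRestrict).exists_rightInverse_of_surjective
    (LinearMap.range_rangeRestrict _)
  obtain ⟨t, ht⟩ := LinearMap.exists_extend t₀
  have hDt : ∀ y, D *ᵥ (t (D *ᵥ y)) = D *ᵥ y := by
    intro y
    have h1 : t (D *ᵥ y) = t₀ (D.mulVecLin.rangeRestrict y) :=
      LinearMap.congr_fun ht (D.mulVecLin.rangeRestrict y)
    have h2 := congrArg Subtype.val (LinearMap.congr_fun ht₀ (D.mulVecLin.rangeRestrict y))
    rw [h1]
    exact h2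
  have hs : ∀ j : J, ∃ z, D' *ᵥ z = Pi.single j 1 - t (D *ᵥ Pi.single j 1) := fun j =>
    h _ (by rw [mulVec_sub, hDt, sub_self])
  choose s hs using hs
  refine ⟨Matrix.of fun l j => s j l, LinearMap.toMatrix' t, ?_⟩
  refine Matrix.ext_of_mulVec_single fun j => ?_
  have h1 : (Matrix.of fun l j => s j l) *ᵥ Pi.single j (1 : K) = s j := by
    ext l; simp
  rw [add_mulVec, ← mulVec_mulVec, ← mulVec_mulVec, h1, hs, LinearMap.toMatrix'_mulVec,
    one_mulVec, sub_add_cancel]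

/-- Conversely it suffices that `φ = D' s + t D` is invertible. Indeed `φ` maps `im D'` into itself,
hence onto itself by dimension, and maps `ker D` into `im D'`. -/
lemma exact_of_det_ne_zero {K : Type} [Field K] (D : Matrix I J K) (D' : Matrix J L K)
    (hDD : D * D' = 0) (s : Matrix L J K) (t : Matrix J I K)
    (hdet : (D' * s + t * D).det ≠ 0) (y : J → K) (hy : D *ᵥ y = 0) :
    ∃ z, D' *ᵥ z = y := by
  set φ := D' * s + t * D with hφ
  have hinj : Function.Injective φ.mulVecLin :=
    Matrix.mulVec_injective_iff_isUnit.2 ((Matrix.isUnit_iff_isUnit_det _).2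
      (isUnit_iff_ne_zero.2 hdet))
  have hle : (LinearMap.range D'.mulVecLin).map φ.mulVecLin ≤ LinearMap.range D'.mulVecLin := by
    rintro _ ⟨_, ⟨z, rfl⟩, rfl⟩
    refine ⟨s *ᵥ (D' *ᵥ z), ?_⟩
    simp only [mulVecLin_apply, hφ, add_mulVec, ← mulVec_mulVec]
    rw [mulVec_mulVec z D D', hDD, zero_mulVec, mulVec_zero, add_zero]
  have heq := Submodule.eq_of_le_of_finrank_eq hle
    (LinearEquiv.finrank_eq (Submodule.equivMapOfInjective _ hinj _)).symm
  have hmem : φ *ᵥ y ∈ LinearMap.range D'.mulVecLin :=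
    ⟨s *ᵥ y, by simp [hφ, add_mulVec, ← mulVec_mulVec, hy]⟩
  rw [← heq] at hmem
  obtain ⟨y', ⟨z, hz⟩, hy'⟩ := hmem
  exact ⟨z, hz.trans (hinj hy')⟩

lemma resHom_eq_zero_iff {A : Type} [CommRing A] (p : PrimeSpectrum A) (a : A) :
    resHom p a = 0 ↔ a ∈ p.asIdeal := by
  change IsLocalRing.residue _ (algebraMap A _ a) = 0 ↔ _
  rw [IsLocalRing.residue_eq_zero_iff, IsLocalization.AtPrime.to_map_mem_maximal_iff _ p.asIdeal]

/-- A finite family in `k(p)` lifts to `A` up to a common denominator outside `p`. -/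
lemma exists_common_denominator {A : Type} [CommRing A] (p : PrimeSpectrum A) {X : Type}
    [Finite X] (f : X → resField p) :
    ∃ a : A, resHom p a ≠ 0 ∧ ∃ g : X → A, ∀ x, resHom p (g x) = resHom p a * f x := by
  choose f' hf' using fun x => IsLocalRing.residue_surjective (f x)
  obtain ⟨b, hb⟩ := IsLocalization.exist_integer_multiples_of_finite p.asIdeal.primeCompl f'
  choose g hg using hb
  refine ⟨b, fun h => b.2 ((resHom_eq_zero_iff p _).1 h), g, fun x => ?_⟩
  have := congrArg (IsLocalRing.residue (Localization.AtPrime p.asIdeal)) (hg x)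
  rw [Algebra.smul_def, map_mul, hf'] at this
  exact this

lemma isOpen_exact_locus {A : Type} [CommRing A] (D : Matrix I J A) (D' : Matrix J L A)
    (hDD : D * D' = 0) :
    IsOpen {p : PrimeSpectrum A | ∀ y, D.map (resHom p) *ᵥ y = 0 →
      ∃ z, D'.map (resHom p) *ᵥ z = y} := by
  rw [isOpen_iff_forall_mem_open]
  intro p hp
  classical
  obtain ⟨s, t, hst⟩ := exists_homotopy _ _ hp
  obtain ⟨a, ha, g, hg⟩ := exists_common_denominator p
    (Sum.elim (fun x : L × J => s x.1 x.2) (fun x : J × I => t x.1 x.2))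
  set S : Matrix L J A := Matrix.of fun l j => g (Sum.inl (l, j))
  set T : Matrix J I A := Matrix.of fun j i => g (Sum.inr (j, i))
  have hS : S.map (resHom p) = resHom p a • s := by
    ext l j; exact hg (Sum.inl (l, j))
  have hT : T.map (resHom p) = resHom p a • t := by
    ext l j; exact hg (Sum.inr (l, j))
  have hmap : ∀ q : PrimeSpectrum A, resHom q (D' * S + T * D).det =
      (D'.map (resHom q) * S.map (resHom q) + T.map (resHom q) * D.map (resHom q)).det := by
    intro q
    rw [RingHom.map_det, RingHom.mapMatrix_apply, Matrix.map_add _ (map_add _), Matrix.map_mul,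
      Matrix.map_mul]
  refine ⟨PrimeSpectrum.basicOpen (D' * S + T * D).det, fun q hq => ?_,
    (PrimeSpectrum.basicOpen _).isOpen, ?_⟩
  · refine exact_of_det_ne_zero _ _ ?_ (S.map (resHom q)) (T.map (resHom q)) ?_
    · rw [← Matrix.map_mul, hDD]; ext; simp
    · rw [← hmap, Ne, resHom_eq_zero_iff]; exact hq
  · change _ ∉ p.asIdeal
    rw [← resHom_eq_zero_iff, hmap, hS, hT, Matrix.mul_smul, Matrix.smul_mul, ← smul_add, hst,
      Matrix.det_smul, Matrix.det_one, mul_one]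
    exact pow_ne_zero _ ha

end Homotopy

/-! ### Truncation of a graded complex -/

section Truncation

open Matrix

variable {r : ℕ} (w : Fin r → ℤ)

/-- The vector `v`, whose basis vector at `k` has degree `b k`, is supported in degrees
satisfying `P`. -/
def InDeg {ι K : Type} [CommRing K] (b : ι → ℤ) (P : ℤ → Prop)
    (v : ι → MvPolynomial (Fin r) K) : Prop :=
  ∀ k e, coeff e (v k) ≠ 0 → P (b k + Finsupp.weight w e)

/-- The matrix `d` is a map of degree zero from the graded free module with basis in degrees `b` to
the one with basis in degrees `a`. -/
def HomogMat {ι κ K : Type} [CommRing K] (a : κ → ℤ) (b : ι → ℤ)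
    (d : Matrix κ ι (MvPolynomial (Fin r) K)) : Prop :=
  ∀ j k e, coeff e (d j k) ≠ 0 → Finsupp.weight w e = b k - a j

/-- The monomials `x ^ e` times basis vector `k` of degree at most `n`. -/
abbrev Mon {ι : Type} (b : ι → ℤ) (n : ℤ) : Type :=
  {x : ι × (Fin r →₀ ℕ) // b x.1 + Finsupp.weight w x.2 ≤ n}

variable {w}

lemma finite_mon {ι : Type} [Finite ι] (hw : ∀ i, 0 < w i) (b : ι → ℤ) (n : ℤ) :
    Finite (Mon w b n) := by
  have := Fintype.ofFinite ι
  obtain ⟨M, hM⟩ : ∃ M : ℕ, ∀ k, n - b k ≤ M :=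
    ⟨∑ k, (n - b k).natAbs, fun k => by
      have := Finset.single_le_sum (f := fun k => (n - b k).natAbs) (fun _ _ => Nat.zero_le _)
        (Finset.mem_univ k)
      omega⟩
  have hfin : (Set.univ ×ˢ Set.Iic (Finsupp.equivFunOnFinite.symm fun _ : Fin r => M) :
      Set (ι × (Fin r →₀ ℕ))).Finite := Set.finite_univ.prod (Set.finite_Iic _)
  refine (hfin.subset ?_ : Set.Finite {x : ι × (Fin r →₀ ℕ) | b x.1 + Finsupp.weight w x.2 ≤ n})
  rintro ⟨k, e⟩ h
  refine ⟨trivial, fun i => ?_⟩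
  have h1 : Finsupp.weight w e = ∑ l, (e l : ℤ) * w l := by
    rw [Finsupp.weight_apply, Finsupp.sum_fintype _ _ (by simp)]; simp
  have h2 : (e i : ℤ) * w i ≤ ∑ l, (e l : ℤ) * w l :=
    Finset.single_le_sum (f := fun l => (e l : ℤ) * w l)
      (fun l _ => mul_nonneg (by positivity) (hw l).le) (Finset.mem_univ i)
  have h3 : (e i : ℤ) ≤ e i * w i := le_mul_of_one_le_right (by positivity) (hw i)
  have h4 := hM k
  simp only [Set.mem_ofPred_eq] at h
  simp only [Finsupp.equivFunOnFinite_symm_apply_apply]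
  have : (e i : ℤ) ≤ M := by omega
  exact_mod_cast this

variable {ι κ μ K : Type} [CommRing K]

lemma InDeg.mulVec [Fintype ι] {a : κ → ℤ} {b : ι → ℤ} {d : Matrix κ ι (MvPolynomial (Fin r) K)}
    (hd : HomogMat w a b d) {P : ℤ → Prop} {v : ι → MvPolynomial (Fin r) K}
    (hv : InDeg w b P v) : InDeg w a P (d *ᵥ v) := by
  classical
  intro j e he
  rw [Matrix.mulVec, dotProduct, coeff_sum] at he
  obtain ⟨k, -, hk⟩ := Finset.exists_ne_zero_of_sum_ne_zero he
  rw [coeff_mul] at hk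
  obtain ⟨⟨e₁, e₂⟩, hmem, h⟩ := Finset.exists_ne_zero_of_sum_ne_zero hk
  rw [Finset.HasAntidiagonal.mem_antidiagonal] at hmem
  have h1 := hd j k e₁ (left_ne_zero_of_mul h)
  have h2 := hv k e₂ (right_ne_zero_of_mul h)
  rw [← hmem]
  dsimp only
  rw [map_add, h1]
  convert h2 using 1
  ring

lemma InDeg.sub {b : ι → ℤ} {P : ℤ → Prop} {u v : ι → MvPolynomial (Fin r) K}
    (hu : InDeg w b P u) (hv : InDeg w b P v) : InDeg w b P (u - v) := by
  intro k e h
  by_cases h1 : coeff e (u k) = 0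
  · refine hv k e fun h2 => h ?_
    simp [h1, h2]
  · exact hu k e h1

lemma InDeg.eq_zero {b : ι → ℤ} {P : ℤ → Prop} {v : ι → MvPolynomial (Fin r) K}
    (h1 : InDeg w b P v) (h2 : InDeg w b (fun x => ¬ P x) v) : v = 0 := by
  ext k e
  by_contra h
  exact h2 k e h (h1 k e h)

variable (w) in
/-- The coefficients of `v` at the monomials of degree at most `n`. -/
def coefs (b : ι → ℤ) (n : ℤ) (v : ι → MvPolynomial (Fin r) K) : Mon w b n → K :=
  fun x => coeff x.1.2 (v x.1.1)

variable (w) in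
/-- The vector with prescribed coefficients in degree at most `n`, and none in larger degree. -/
noncomputable def ofCoefs [DecidableEq ι] (b : ι → ℤ) (n : ℤ) [Fintype (Mon w b n)]
    (y : Mon w b n → K) : ι → MvPolynomial (Fin r) K :=
  fun k => ∑ x : Mon w b n, if x.1.1 = k then monomial x.1.2 (y x) else 0

lemma coeff_ofCoefs [DecidableEq ι] (b : ι → ℤ) (n : ℤ) [Fintype (Mon w b n)]
    (y : Mon w b n → K) (k : ι) (e : Fin r →₀ ℕ) : coeff e (ofCoefs w b n y k) =
      if h : b k + Finsupp.weight w e ≤ n then y ⟨(k, e), h⟩ else 0 := by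
  classical
  rw [ofCoefs, coeff_sum]
  split_ifs with h
  · rw [Finset.sum_eq_single ⟨(k, e), h⟩]
    · simp
    · rintro ⟨⟨k', e'⟩, h'⟩ - hne
      by_cases hk : k' = k
      · subst hk
        rw [if_pos rfl, coeff_monomial, if_neg]
        rintro rfl
        exact hne rfl
      · simp [hk]
    · simp
  · refine Finset.sum_eq_zero ?_
    rintro ⟨⟨k', e'⟩, h'⟩ -
    by_cases hk : k' = k
    · subst hk
      rw [if_pos rfl, coeff_monomial, if_neg]
      rintro rfl
      exact h h'
    · simp [hk]

section

variable [DecidableEq ι] (b : ι → ℤ) (n : ℤ) [Fintype (Mon w b n)]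

lemma coefs_ofCoefs (y : Mon w b n → K) : coefs w b n (ofCoefs w b n y) = y := by
  ext ⟨⟨k, e⟩, h⟩
  rw [coefs, coeff_ofCoefs, dif_pos h]

lemma ofCoefs_inDeg (y : Mon w b n → K) : InDeg w b (· ≤ n) (ofCoefs w b n y) := by
  intro k e h
  rw [coeff_ofCoefs] at h
  by_contra h'
  exact h (dif_neg h')

lemma ofCoefs_coefs {v : ι → MvPolynomial (Fin r) K} (hv : InDeg w b (· ≤ n) v) :
    ofCoefs w b n (coefs w b n v) = v := by
  ext k e
  rw [coeff_ofCoefs]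
  split_ifs with h
  · rfl
  · by_contra h'
    exact h (hv k e (Ne.symm h'))

lemma sub_ofCoefs_coefs (v : ι → MvPolynomial (Fin r) K) :
    InDeg w b (fun x => ¬ x ≤ n) (v - ofCoefs w b n (coefs w b n v)) := by
  intro k e h h'
  apply h
  rw [Pi.sub_apply, coeff_sub, coeff_ofCoefs, dif_pos h', coefs, sub_self]

end

variable (w) in
/-- The matrix over `K` of `d` in degrees at most `n`, in the bases of monomials. -/
noncomputable def truncMat (a : κ → ℤ) (b : ι → ℤ) (n : ℤ)
    (d : Matrix κ ι (MvPolynomial (Fin r) K)) : Matrix (Mon w a n) (Mon w b n) K :=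
  Matrix.of fun x y => coeff x.1.2 (d x.1.1 y.1.1 * monomial y.1.2 1)

lemma truncMat_map {K' : Type} [CommRing K'] (φ : K →+* K') (a : κ → ℤ) (b : ι → ℤ) (n : ℤ)
    (d : Matrix κ ι (MvPolynomial (Fin r) K)) :
    truncMat w a b n (d.map (MvPolynomial.map φ)) = (truncMat w a b n d).map φ := by
  ext x y
  simp only [truncMat, Matrix.of_apply, Matrix.map_apply, ← coeff_map, map_mul, map_monomial,
    map_one]

lemma truncMat_mulVec [Fintype ι] [DecidableEq ι] (a : κ → ℤ) (b : ι → ℤ) (n : ℤ)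
    [Fintype (Mon w b n)] (d : Matrix κ ι (MvPolynomial (Fin r) K)) (y : Mon w b n → K) :
    truncMat w a b n d *ᵥ y = coefs w a n (d *ᵥ ofCoefs w b n y) := by
  ext x
  simp only [Matrix.mulVec, dotProduct, coefs, ofCoefs, truncMat, Matrix.of_apply, Finset.mul_sum,
    coeff_sum]
  rw [Finset.sum_comm]
  refine Finset.sum_congr rfl fun z _ => ?_
  rw [Finset.sum_eq_single z.1.1]
  · have h : monomial z.1.2 (y z) = C (y z) * monomial z.1.2 1 := by rw [C_mul_monomial, mul_one]
    rw [if_pos rfl, h, mul_left_comm, coeff_C_mul, mul_comm]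
  · intro k _ hk
    rw [if_neg (Ne.symm hk), mul_zero, coeff_zero]
  · simp

variable [Fintype ι] [Fintype μ] [DecidableEq ι] [DecidableEq μ]
  {a : κ → ℤ} {b : ι → ℤ} {c : μ → ℤ} (n : ℤ)
  [Fintype (Mon w b n)] [Fintype (Mon w c n)]
  {d : Matrix κ ι (MvPolynomial (Fin r) K)} {d' : Matrix ι μ (MvPolynomial (Fin r) K)}

lemma truncMat_mul (hd' : HomogMat w b c d') (hdd : d * d' = 0) :
    truncMat w a b n d * truncMat w b c n d' = 0 := by
  classical
  refine Matrix.ext_of_mulVec_single fun j => ?_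
  rw [← mulVec_mulVec, truncMat_mulVec, truncMat_mulVec,
    ofCoefs_coefs _ _ ((ofCoefs_inDeg c n _).mulVec hd'), mulVec_mulVec, hdd, zero_mulVec,
    zero_mulVec]
  ext; simp [coefs]

/-- Exactness passes to truncations, since the part of a preimage in degree larger than `n` maps to
zero. -/
lemma exact_truncMat [DecidableEq κ] [Fintype (Mon w a n)] (hd : HomogMat w a b d)
    (hd' : HomogMat w b c d')
    (hex : ∀ v, d *ᵥ v = 0 → ∃ u, d' *ᵥ u = v) (y : Mon w b n → K)
    (hy : truncMat w a b n d *ᵥ y = 0) : ∃ z, truncMat w b c n d' *ᵥ z = y := by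
  have hv := ofCoefs_inDeg b n y
  rw [truncMat_mulVec] at hy
  obtain ⟨u, hu⟩ := hex (ofCoefs w b n y) (by
    rw [← ofCoefs_coefs a n (hv.mulVec hd), hy]
    ext k e
    simp [coeff_ofCoefs])
  refine ⟨coefs w c n u, ?_⟩
  rw [truncMat_mulVec]
  have h1 := (sub_ofCoefs_coefs c n u).mulVec hd'
  rw [mulVec_sub, hu] at h1
  have h2 := (hv.sub ((ofCoefs_inDeg c n (coefs w c n u)).mulVec hd')).eq_zero h1
  rw [← sub_eq_zero.1 h2, coefs_ofCoefs]

/-- Exactness of the truncation gives exactness at vectors supported in degree at most `n`. -/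
lemma exists_preimage_of_exact_truncMat (hd' : HomogMat w b c d')
    (hex : ∀ y, truncMat w a b n d *ᵥ y = 0 → ∃ z, truncMat w b c n d' *ᵥ z = y)
    (v : ι → MvPolynomial (Fin r) K) (hv : InDeg w b (· ≤ n) v) (hdv : d *ᵥ v = 0) :
    ∃ u, d' *ᵥ u = v := by
  obtain ⟨z, hz⟩ := hex (coefs w b n v) (by
    rw [truncMat_mulVec, ofCoefs_coefs b n hv, hdv]; ext; simp [coefs])
  refine ⟨ofCoefs w c n z, ?_⟩
  rw [truncMat_mulVec] at hz
  rw [← ofCoefs_coefs b n hv, ← hz, ofCoefs_coefs b n ((ofCoefs_inDeg c n z).mulVec hd')]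

end Truncation

lemma inDeg_of_totalDegree_le {r : ℕ} {w : Fin r → ℤ} (hw : ∀ i, 0 < w i) {ι K : Type}
    [Fintype ι] [CommRing K] (b : ι → ℤ) (B : ℕ) (v : ι → MvPolynomial (Fin r) K)
    (hv : ∀ k, (v k).totalDegree ≤ B) :
    InDeg w b (· ≤ ∑ k, |b k| + B * ∑ l, w l) v := by
  intro k e he
  have h1 : b k ≤ ∑ k, |b k| := (le_abs_self _).trans
    (Finset.single_le_sum (f := fun k => |b k|) (fun _ _ => abs_nonneg _) (Finset.mem_univ k))
  have h2 : Finsupp.weight w e = ∑ l, (e l : ℤ) * w l := by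
    rw [Finsupp.weight_apply, Finsupp.sum_fintype _ _ (by simp)]; simp
  have h3 : ∀ l, (e l : ℤ) ≤ B := fun l => by
    have := (monomial_le_degreeOf l (mem_support_iff.2 he)).trans
      ((degreeOf_le_totalDegree _ l).trans (hv k))
    exact_mod_cast this
  rw [h2, Finset.mul_sum]
  exact add_le_add h1 (Finset.sum_le_sum fun l _ =>
    mul_le_mul_of_nonneg_right (h3 l) (hw l).le)

/-! ### The vanishing locus -/

theorem isOpen_homology_fibre_vanishing_locus
    (A : Type) [CommRing A]
    (G : Type) [AddCommGroup G] [DecidableEq G]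
    (r : ℕ) (w : Fin r → G) (ψ : G →+ ℤ) (hψ : ∀ i, 0 < ψ (w i))
    (F : GradedFreeComplex A G r w) (i : ℤ) :
    IsOpen {p : PrimeSpectrum A |
      LinearMap.ker (F.fibreMap (resHom p) i) ≤
        LinearMap.range (F.fibreMap (resHom p) (i + 1))} := by
  classical
  set w' : Fin r → ℤ := fun l => ψ (w l)
  have hweight : ∀ e : Fin r →₀ ℕ, Finsupp.weight w' e = ψ (Finsupp.weight w e) := by
    intro e
    simp [Finsupp.weight_apply, Finsupp.sum, map_sum, w']
  let sh : ∀ j : ℤ, Fin (F.rank j) → ℤ := fun j k => ψ (F.shift j k)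
  have hhom : ∀ j, HomogMat w' (sh j) (sh (j + 1)) (F.d j) := by
    intro j x y e h
    rw [hweight, F.d_homog j x y h, map_sub]
  have hhom' : ∀ (p : PrimeSpectrum A) (j), HomogMat w' (sh j) (sh (j + 1))
      ((F.d j).map (MvPolynomial.map (resHom p))) := by
    intro p j x y e h
    refine hhom j x y e fun h0 => h ?_
    rw [Matrix.map_apply, coeff_map, h0, map_zero]
  -- a bound, uniform in `p`, for the degrees of generators of the kernel
  set D : ℕ := Finset.univ.sup fun x : Fin (F.rank i) × Fin (F.rank (i + 1)) =>
    (F.d i x.1 x.2).totalDegree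
  obtain ⟨ι', _, B, hB⟩ := syzBound r (F.rank i) (Fin (F.rank (i + 1))) D
  set n : ℤ := ∑ k, |sh (i + 1) k| + B * ∑ l, w' l
  have hfin : ∀ j, Fintype (Mon w' (sh j) n) := fun j =>
    @Fintype.ofFinite _ (finite_mon hψ (sh j) n)
  have hcomp : truncMat w' (sh i) (sh (i + 1)) n (F.d i) *
      truncMat w' (sh (i + 1)) (sh (i + 1 + 1)) n (F.d (i + 1)) = 0 :=
    truncMat_mul n (hhom (i + 1)) (F.d_comp i)
  convert isOpen_exact_locus _ _ hcomp using 1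
  ext p
  rw [Set.mem_ofPred_eq, Set.mem_ofPred_eq, ← truncMat_map, ← truncMat_map]
  constructor
  · intro h
    exact exact_truncMat n (hhom' p i) (hhom' p (i + 1)) fun v hv => h hv
  · intro h v hv
    obtain ⟨g, hg, hgd, hgs⟩ := hB (resField p)
      (fun j k => MvPolynomial.map (resHom p) (F.d i j k)) (fun j k => by
        refine le_trans ?_ (Finset.le_sup (f := fun x : Fin (F.rank i) × Fin (F.rank (i + 1)) =>
          (F.d i x.1 x.2).totalDegree) (Finset.mem_univ (j, k)))
        exact Finset.sup_mono (support_map_subset _ _))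
    obtain ⟨c, hc⟩ := hgs v fun j => congrFun hv j
    have hmem : ∀ x, g x ∈ LinearMap.range (F.fibreMap (resHom p) (i + 1)) := fun x =>
      exists_preimage_of_exact_truncMat n (hhom' p (i + 1)) h (g x)
        (inDeg_of_totalDegree_le hψ _ B _ (hgd x)) (funext fun j => hg x j)
    have hv' : v = ∑ x, c x • g x := by
      ext1 j
      simp [hc j]
    rw [hv']
    exact Submodule.sum_mem _ fun x _ => Submodule.smul_mem _ _ (hmem x)
end

section
/- Let P_• be a (chain) complex of A-modules and let s ≥ 0 be an integer. Assume that P_i is a flat A-module for every 0 ≤ i ≤ s and that the homology H_i(P_•) is a flat A-module for every 0 ≤ i ≤ s. Then, for any A-module N and any 0 ≤ i ≤ s, there is an isomorphism H_i(P_• ⊗_A N) ≅ H_i(P_•) ⊗_A N. -/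
/-!
Let `C_j = P_j / im d_j` be the cokernels of the differentials. The exact sequences
`0 → im d_j → P_j → C_j → 0` and `0 → H_{j+1} → C_{j+1} → im d_j → 0` show by induction on `j`,
starting from `C_{-1} = 0`, that `C_j` and `im d_j` are flat for `-1 ≤ j ≤ s`: the kernel of a
surjection between flat modules is flat (`flat_left_of_exact`), and so is an extension of flat
modules (`flat_middle_of_exact`).

A short exact sequence with flat last term stays exact after `- ⊗ N`. Applied to
`0 → ker d_j → P_{j+1} → im d_j → 0` and `0 → im d_j → P_j → C_j → 0`, this identifies
`ker d_j ⊗ N` with `ker (d_j ⊗ N)`, and right exactness of the tensor product then identifies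
`H_{j+1} ⊗ N` with the homology of the tensored complex (`homology_rTensor`).
-/

/-!
STATEMENT 4 (Lemma `flatexchange`).
Let `A` be a commutative ring and `P_•` a chain complex of `A`-modules
`⋯ → P_1 → P_0` (so `P i = 0` for `i < 0`), with differentials
`d i : P (i+1) →ₗ[A] P i` satisfying `d i ∘ d (i+1) = 0`.  Assume that for
`0 ≤ i ≤ s` the modules `P i` and the homology modules `H_i(P_•)` are flat
over `A`.  Then for every `A`-module `N` and every `0 ≤ i ≤ s` one has
`H_i(P_• ⊗_A N) ≅ H_i(P_•) ⊗_A N`.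

We index homology as follows: for `j : ℤ`, the homology in position `j + 1`
is `ker (d j) / im (d (j+1))`; letting `j` range over integers with
`-1 ≤ j` and `j + 1 ≤ s` captures exactly `H_i` for `0 ≤ i ≤ s`
(the case `j = -1` being `H_0`, using that `P i = 0` for `i < 0`).
-/

open TensorProduct

/-- The homology module `ker f / im g` of a composable pair `g : K → M`, `f : M → N`
(with `f ∘ g = 0` in applications). -/
abbrev ModuleHomology {A K M N : Type} [CommRing A] [AddCommGroup K] [AddCommGroup M]
    [AddCommGroup N] [Module A K] [Module A M] [Module A N]
    (g : K →ₗ[A] M) (f : M →ₗ[A] N) : Type :=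
  ↥(LinearMap.ker f) ⧸ (LinearMap.range g).comap (LinearMap.ker f).subtype

/-- In a short exact sequence whose last two terms are flat, the first term is flat. -/
lemma flat_left_of_exact {A X Y Z : Type} [CommRing A] [AddCommGroup X] [AddCommGroup Y]
    [AddCommGroup Z] [Module A X] [Module A Y] [Module A Z] [Module.Flat A Y] [Module.Flat A Z]
    (f : X →ₗ[A] Y) (g : Y →ₗ[A] Z) (hf : Function.Injective f) (hg : Function.Surjective g)
    (h : Function.Exact f g) : Module.Flat A X := by
  rw [Module.Flat.iff_rTensor_preserves_injective_linearMap]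
  intro N N' _ _ _ _ u hu
  have h1 : Function.Injective (u.rTensor Y ∘ₗ f.lTensor N) :=
    (Module.Flat.rTensor_preserves_injective_linearMap u hu).comp
      (LinearMap.lTensor_injective_of_exact_of_flat g hg f hf h N)
  rw [LinearMap.rTensor_comp_lTensor, ← LinearMap.lTensor_comp_rTensor, LinearMap.coe_comp] at h1
  exact h1.of_comp

/-- An extension of flat modules is flat. -/
lemma flat_middle_of_exact {A X Y Z : Type} [CommRing A] [AddCommGroup X] [AddCommGroup Y]
    [AddCommGroup Z] [Module A X] [Module A Y] [Module A Z] [Module.Flat A X] [Module.Flat A Z]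
    (f : X →ₗ[A] Y) (g : Y →ₗ[A] Z) (hf : Function.Injective f) (hg : Function.Surjective g)
    (h : Function.Exact f g) : Module.Flat A Y := by
  rw [Module.Flat.iff_rTensor_preserves_injective_linearMap]
  intro N N' _ _ _ _ u hu
  rw [injective_iff_map_eq_zero]
  intro y hy
  have hgy : g.lTensor N y = 0 := by
    apply Module.Flat.rTensor_preserves_injective_linearMap (M := Z) u hu
    rw [← LinearMap.comp_apply, LinearMap.rTensor_comp_lTensor, ← LinearMap.lTensor_comp_rTensor,
      LinearMap.comp_apply, hy, map_zero, map_zero]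
  obtain ⟨x, rfl⟩ := (lTensor_exact N h hg y).mp hgy
  rw [← LinearMap.comp_apply, LinearMap.rTensor_comp_lTensor, ← LinearMap.lTensor_comp_rTensor,
    LinearMap.comp_apply] at hy
  have hx : u.rTensor X x = 0 :=
    LinearMap.lTensor_injective_of_exact_of_flat g hg f hf h N' (by rw [hy, map_zero])
  have : x = 0 := Module.Flat.rTensor_preserves_injective_linearMap u hu (by rw [hx, map_zero])
  rw [this, map_zero]

section

variable {A K M L : Type} [CommRing A] [AddCommGroup K] [AddCommGroup M] [AddCommGroup L]
  [Module A K] [Module A M] [Module A L]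

lemma flat_range (f : M →ₗ[A] L) [Module.Flat A L] [Module.Flat A (L ⧸ LinearMap.range f)] :
    Module.Flat A (LinearMap.range f) :=
  flat_left_of_exact (LinearMap.range f).subtype (LinearMap.range f).mkQ
    (Submodule.injective_subtype _) (Submodule.mkQ_surjective _)
    (LinearMap.exact_subtype_mkQ _)

/-- Flatness of cokernels passes up a complex, by the exact sequence
`0 → ker f / im g → M / im g → im f → 0`. -/
lemma flat_coker (g : K →ₗ[A] M) (f : M →ₗ[A] L) (hfg : f ∘ₗ g = 0)
    [Module.Flat A (LinearMap.range f)] [Module.Flat A (ModuleHomology g f)] :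
    Module.Flat A (M ⧸ LinearMap.range g) := by
  have hle : LinearMap.range g ≤ LinearMap.ker f.rangeRestrict := by
    rw [LinearMap.ker_rangeRestrict]
    exact LinearMap.range_le_ker_iff.mpr hfg
  refine flat_middle_of_exact (X := ModuleHomology g f) (Z := LinearMap.range f)
    (Submodule.mapQ _ (LinearMap.range g) (LinearMap.ker f).subtype le_rfl)
    ((LinearMap.range g).liftQ f.rangeRestrict hle) ?_ ?_ ?_
  · rw [← LinearMap.ker_eq_bot, Submodule.mapQ, Submodule.ker_liftQ_eq_bot]
    rw [LinearMap.ker_comp, Submodule.ker_mkQ]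
  · intro y
    obtain ⟨x, rfl⟩ := f.surjective_rangeRestrict y
    exact ⟨Submodule.Quotient.mk x, rfl⟩
  · intro y
    obtain ⟨y, rfl⟩ := Submodule.Quotient.mk_surjective _ y
    constructor
    · intro hy
      exact ⟨Submodule.Quotient.mk ⟨y, congrArg Subtype.val hy⟩, rfl⟩
    · rintro ⟨z, hz⟩
      obtain ⟨z, rfl⟩ := Submodule.Quotient.mk_surjective _ z
      rw [← hz]
      exact Subtype.ext z.2

/-- If the image and the cokernel of `f` are flat, forming the homology of `g`, `f` commutes with
`- ⊗ N`: then `ker f ⊗ N → M ⊗ N` is injective with image `ker (f ⊗ N)`. -/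
lemma homology_rTensor (g : K →ₗ[A] M) (f : M →ₗ[A] L) (hfg : f ∘ₗ g = 0)
    [Module.Flat A (LinearMap.range f)] [Module.Flat A (L ⧸ LinearMap.range f)]
    (N : Type) [AddCommGroup N] [Module A N] :
    Nonempty (ModuleHomology (g.rTensor N) (f.rTensor N) ≃ₗ[A]
      TensorProduct A (ModuleHomology g f) N) := by
  have hex : Function.Exact (LinearMap.ker f).subtype f.rangeRestrict := by
    rw [LinearMap.exact_iff, LinearMap.ker_rangeRestrict, Submodule.range_subtype]
  have hinj : Function.Injective ((LinearMap.ker f).subtype.rTensor N) := by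
    rw [← LinearMap.lTensor_inj_iff_rTensor_inj]
    exact LinearMap.lTensor_injective_of_exact_of_flat _ f.surjective_rangeRestrict _
      (Submodule.injective_subtype _) hex N
  have hinj' : Function.Injective ((LinearMap.range f).subtype.rTensor N) := by
    rw [← LinearMap.lTensor_inj_iff_rTensor_inj]
    exact LinearMap.lTensor_injective_of_exact_of_flat _ (Submodule.mkQ_surjective _) _
      (Submodule.injective_subtype _) (LinearMap.exact_subtype_mkQ _) N
  have hrange : LinearMap.range ((LinearMap.ker f).subtype.rTensor N) =
      LinearMap.ker (f.rTensor N) := by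
    have h1 := LinearMap.exact_iff.mp (rTensor_exact N hex f.surjective_rangeRestrict)
    have h2 : f.rTensor N = (LinearMap.range f).subtype.rTensor N ∘ₗ f.rangeRestrict.rTensor N := by
      rw [← LinearMap.rTensor_comp]
      rfl
    rw [← h1, h2, LinearMap.ker_comp, LinearMap.ker_eq_bot.mpr hinj']
    rfl
  let e : TensorProduct A (LinearMap.ker f) N ≃ₗ[A] LinearMap.ker (f.rTensor N) :=
    LinearEquiv.ofInjective _ hinj ≪≫ₗ LinearEquiv.ofEq _ _ hrange
  have he : ∀ z, (e z : TensorProduct A M N) = (LinearMap.ker f).subtype.rTensor N z :=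
    fun z => rfl
  let g' : K →ₗ[A] LinearMap.ker f := g.codRestrict _ fun x => LinearMap.congr_fun hfg x
  have hg' : Function.Exact g' ((LinearMap.range g).comap (LinearMap.ker f).subtype).mkQ := by
    rw [LinearMap.exact_iff, Submodule.ker_mkQ]
    exact (LinearMap.range_codRestrict _ _ _).symm
  have hcomp : ∀ x, (LinearMap.ker f).subtype.rTensor N (g'.rTensor N x) = g.rTensor N x := by
    intro x
    rw [← LinearMap.comp_apply, ← LinearMap.rTensor_comp]
    rfl
  have hmap : (LinearMap.range (g'.rTensor N)).map e.toLinearMap =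
      (LinearMap.range (g.rTensor N)).comap (LinearMap.ker (f.rTensor N)).subtype := by
    ext z
    constructor
    · rintro ⟨_, ⟨x, rfl⟩, rfl⟩
      exact ⟨x, ((he _).trans (hcomp x)).symm⟩
    · rintro ⟨x, hx⟩
      exact ⟨_, ⟨x, rfl⟩, Subtype.ext (((he _).trans (hcomp x)).trans hx)⟩
  exact ⟨(Submodule.Quotient.equiv _ _ e hmap).symm ≪≫ₗ
    rTensor.equiv N hg' (Submodule.mkQ_surjective _)⟩

end

theorem generic_flat_homology_base_change
    (A : Type) [CommRing A]
    (P : ℤ → Type) [∀ i, AddCommGroup (P i)] [∀ i, Module A (P i)]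
    (d : ∀ i : ℤ, P (i + 1) →ₗ[A] P i)
    (hcomplex : ∀ i : ℤ, (d i).comp (d (i + 1)) = 0)
    (hbot : ∀ i : ℤ, i < 0 → Subsingleton (P i))
    (s : ℕ)
    (hflatP : ∀ i : ℤ, 0 ≤ i → i ≤ (s : ℤ) → Module.Flat A (P i))
    (hflatH : ∀ j : ℤ, -1 ≤ j → j + 1 ≤ (s : ℤ) →
      Module.Flat A (ModuleHomology (d (j + 1)) (d j)))
    (N : Type) [AddCommGroup N] [Module A N] :
    ∀ j : ℤ, -1 ≤ j → j + 1 ≤ (s : ℤ) →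
      Nonempty
        ((ModuleHomology (LinearMap.rTensor N (d (j + 1))) (LinearMap.rTensor N (d j)))
          ≃ₗ[A] (TensorProduct A (ModuleHomology (d (j + 1)) (d j)) N)) := by
  have hP : ∀ i : ℤ, -1 ≤ i → i ≤ (s : ℤ) → Module.Flat A (P i) := by
    intro i _ hi'
    rcases lt_or_ge i 0 with h | h
    · have := hbot i h
      infer_instance
    · exact hflatP i h hi'
  have hC : ∀ j : ℤ, -1 ≤ j → j ≤ (s : ℤ) → Module.Flat A (P j ⧸ LinearMap.range (d j)) := by
    intro j hj
    induction j, hj using Int.leInduction with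
    | base =>
      intro _
      have := hbot (-1) (by norm_num)
      infer_instance
    | succ j hj ih =>
      intro hjs
      have := ih (by omega)
      have := hP j hj (by omega)
      have := flat_range (d j)
      have := hflatH j hj hjs
      exact flat_coker (d (j + 1)) (d j) (hcomplex j)
  intro j hj hjs
  have := hC j hj (by omega)
  have := hP j hj (by omega)
  have := flat_range (d j)
  exact homology_rTensor (d (j + 1)) (d j) (hcomplex j) N
end

section
/- Assume A is a reduced Noetherian ring and let M be a finitely generated graded R-module. Then there exists an element a ∈ A avoiding all minimal primes of A such that the localization M_a = M ⊗_A A_a is a projective A_a-module. -/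
/-!
The statement is a form of generic freeness for finitely generated `A[x₁, …, x_r]`-modules, proved
by induction on the number of variables.

For `r = 0` the module `M` is finitely presented over `A`, so its free locus is open. It contains
every minimal prime `p`, because `A_p` is a field when `A` is reduced. By prime avoidance (there
are finitely many minimal primes) some basic open set `D(a)` with `a` outside all minimal primes
lies in the free locus, and then `M_a` is projective.

For the step from `B` to `B[X]`, let `N ⊆ M` be a finite `B`-submodule generating `M` over `B[X]`
and put `F n = ∑_{i < n} X^i N`. These submodules exhaust `M`, and multiplication by `X ^ n`
identifies `F (n + 1) / F n` with `N / K n`, where `K n = {y ∈ N | X ^ n y ∈ F n}`. The `K n` increase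
and `N` is Noetherian, so only finitely many quotients `N / K n` occur. By induction a single `a`
makes all of them projective after localization. Then `M_a` has an exhaustive filtration
with projective subquotients, hence is isomorphic to their direct sum and is projective.
-/

open MvPolynomial

open TensorProduct in
/-- `M` becomes projective over `A` after inverting one element outside all minimal primes of `A`.
The localization is encoded as the base change `A_a ⊗ M`. -/
def GenericallyProjective (A M : Type) [CommRing A] [AddCommGroup M] [Module A M] : Prop :=
  ∃ a : A, (∀ p ∈ minimalPrimes A, a ∉ p) ∧
    Module.Projective (Localization.Away a) (Localization.Away a ⊗[A] M)

/-- A module with an exhaustive filtration `F` such that `F (n + 1) / F n` is projective is projective.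
The subquotients are given as projective modules `P n` with injective maps `h n` whose image is a
complement of `F n` in `F (n + 1)`; then `M` is the direct sum of the `P n`. -/
theorem projective_of_filtration {S M : Type} [CommRing S] [AddCommGroup M] [Module S M]
    (P : ℕ → Type) [∀ n, AddCommGroup (P n)] [∀ n, Module S (P n)]
    [∀ n, Module.Projective S (P n)] (h : ∀ n, P n →ₗ[S] M) (F : ℕ → Submodule S M)
    (hF : Monotone F) (h0 : F 0 = ⊥) (htop : ⨆ n, F n = ⊤)
    (hmem : ∀ n x, h n x ∈ F (n + 1)) (hle : ∀ n, F (n + 1) ≤ F n ⊔ LinearMap.range (h n))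
    (hinj : ∀ n x, h n x ∈ F n → x = 0) : Module.Projective S M := by
  classical
  let Φ : (Π₀ n, P n) →ₗ[S] M := DFinsupp.lsum ℕ h
  have hinjΦ : Function.Injective Φ := by
    rw [injective_iff_map_eq_zero]
    intro v hv
    by_contra hne
    have hs : v.support.Nonempty := by
      rwa [Finset.nonempty_iff_ne_empty, Ne, DFinsupp.support_eq_empty]
    set n := v.support.max' hs
    have hn : n ∈ v.support := v.support.max'_mem hs
    have hsum : ∑ i ∈ v.support, h i (v i) = 0 := by
      rw [← hv]
      simp [Φ, DFinsupp.sumAddHom_apply, DFinsupp.sum]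
    -- The term of highest index lies in `F n`, since all the others do.
    rw [← Finset.add_sum_erase _ _ hn] at hsum
    refine (DFinsupp.mem_support_iff.mp hn) (hinj n _ ?_)
    rw [eq_neg_of_add_eq_zero_left hsum]
    refine Submodule.neg_mem _ (Submodule.sum_mem _ fun i hi ↦ ?_)
    have hi' := Finset.mem_erase.mp hi
    have : i < n := lt_of_le_of_ne (v.support.le_max' i hi'.2) hi'.1
    exact hF this (hmem i _)
  have hrange (n : ℕ) : F n ≤ LinearMap.range Φ := by
    induction n with
    | zero => simp [h0]
    | succ n ih =>
      refine (hle n).trans (sup_le ih ?_)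
      rintro _ ⟨x, rfl⟩
      exact ⟨DFinsupp.single n x, by simp [Φ]⟩
  have hsurj : Function.Surjective Φ := by
    rw [← LinearMap.range_eq_top, ← top_le_iff, ← htop]
    exact iSup_le hrange
  exact Module.Projective.of_equiv' (LinearEquiv.ofBijective Φ ⟨hinjΦ, hsurj⟩)

open TensorProduct in
/-- Let `M` be exhausted by submodules `F n`, each obtained from the previous one by adding the image
of `g n : N → M`, so that `F (n + 1) / F n ≅ N / (g n)⁻¹ (F n)`. If these quotients become
projective after a flat base change, so does `M`. -/
theorem projective_baseChange_of_filtration {A S M N : Type} [CommRing A] [CommRing S] [Algebra A S]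
    [Module.Flat A S] [AddCommGroup M] [Module A M] [AddCommGroup N] [Module A N]
    (F : ℕ → Submodule A M) (g : ℕ → N →ₗ[A] M) (h0 : F 0 = ⊥) (htop : ⨆ n, F n = ⊤)
    (hsucc : ∀ n, F (n + 1) = F n ⊔ LinearMap.range (g n))
    (hP : ∀ n, Module.Projective S (S ⊗[A] (N ⧸ (F n).comap (g n)))) :
    Module.Projective S (S ⊗[A] M) := by
  have hF : Monotone F := monotone_nat_of_le_succ fun n ↦ (hsucc n).symm ▸ le_sup_left
  let gbar (n : ℕ) : (N ⧸ (F n).comap (g n)) →ₗ[A] M ⧸ F n := Submodule.mapQ _ _ (g n) le_rfl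
  have gbar_inj (n : ℕ) : Function.Injective (gbar n) := by
    rw [← LinearMap.ker_eq_bot, Submodule.ker_mapQ, Submodule.mkQ_map_self]
  let q (n : ℕ) : S ⊗[A] N →ₗ[S] S ⊗[A] (N ⧸ (F n).comap (g n)) :=
    (Submodule.mkQ _).baseChange S
  -- By flatness this kernel is `S ⊗ F n`, viewed inside `S ⊗ M`.
  let FS (n : ℕ) : Submodule S (S ⊗[A] M) := LinearMap.ker ((F n).mkQ.baseChange S)
  have hcomm (n : ℕ) (x : S ⊗[A] N) :
      (F n).mkQ.baseChange S ((g n).baseChange S x) = (gbar n).baseChange S (q n x) := by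
    simp only [q, ← LinearMap.comp_apply, ← LinearMap.baseChange_comp]
    rfl
  have hq (n : ℕ) : Function.Surjective (q n) :=
    LinearMap.lTensor_surjective S (Submodule.mkQ_surjective _)
  -- Projectivity of the `n`-th quotient splits the surjection from `S ⊗ N` onto it.
  choose σ hσ using fun n ↦ Module.projective_lifting_property (q n) LinearMap.id (hq n)
  replace hσ (n) (x) : q n (σ n x) = x := LinearMap.congr_fun (hσ n) x
  have hFS {n : ℕ} {m : M} (hm : m ∈ F n) (s : S) : s ⊗ₜ[A] m ∈ FS n := by
    simp [FS, (Submodule.Quotient.mk_eq_zero _).mpr hm]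
  have hFSm : Monotone FS := by
    intro i j hij x hx
    have : (F j).mkQ = (Submodule.factor (hF hij)) ∘ₗ (F i).mkQ := by ext; rfl
    simp only [FS, LinearMap.mem_ker] at hx ⊢
    rw [this, LinearMap.baseChange_comp, LinearMap.comp_apply, hx, map_zero]
  have hFSr (n : ℕ) (T : Submodule S (S ⊗[A] M)) (hT : ∀ (s : S), ∀ m ∈ F n, s ⊗ₜ[A] m ∈ T) :
      FS n ≤ T := by
    intro x hx
    obtain ⟨y, rfl⟩ := (lTensor_exact S (LinearMap.exact_subtype_mkQ (F n))
      (Submodule.mkQ_surjective _) x).mp hx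
    clear hx
    induction y with
    | zero => simp
    | add y z hy hz => rw [map_add]; exact Submodule.add_mem _ hy hz
    | tmul s m => exact hT s m m.2
  refine projective_of_filtration (fun n ↦ S ⊗[A] (N ⧸ (F n).comap (g n)))
    (fun n ↦ (g n).baseChange S ∘ₗ σ n) FS hFSm ?_ ?_ ?_ ?_ ?_
  · rw [← le_bot_iff]
    refine hFSr 0 _ fun s m hm ↦ ?_
    rw [h0, Submodule.mem_bot] at hm
    simp [hm]
  · rw [← top_le_iff]
    intro x _
    induction x with
    | zero => exact Submodule.zero_mem _
    | add y z hy hz => exact Submodule.add_mem _ (hy trivial) (hz trivial)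
    | tmul s m =>
      obtain ⟨n, hn⟩ := (Submodule.mem_iSup_of_directed F hF.directed_le).mp
        (htop ▸ Submodule.mem_top : m ∈ ⨆ n, F n)
      exact Submodule.mem_iSup_of_mem n (hFS hn s)
  · intro n x
    simp only [LinearMap.comp_apply]
    generalize σ n x = y
    induction y with
    | zero => simp
    | add y z hy hz => rw [map_add]; exact Submodule.add_mem _ hy hz
    | tmul s m =>
      exact hFS (hsucc n ▸ Submodule.mem_sup_right ⟨m, rfl⟩) s
  · refine fun n ↦ hFSr (n + 1) _ fun s m hm ↦ ?_
    rw [hsucc] at hm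
    obtain ⟨f, hf, _, ⟨y, rfl⟩, rfl⟩ := Submodule.mem_sup.mp hm
    rw [tmul_add]
    refine Submodule.add_mem _ (Submodule.mem_sup_left (hFS hf s)) ?_
    -- `s ⊗ y` differs from its projection to the image of the splitting by an element of `ker q`.
    have hk : (g n).baseChange S (s ⊗ₜ y - σ n (q n (s ⊗ₜ y))) ∈ FS n := by
      simp only [FS, LinearMap.mem_ker]
      rw [hcomm, map_sub, hσ, sub_self, map_zero]
    rw [map_sub, LinearMap.baseChange_tmul] at hk
    rw [← sub_add_cancel (s ⊗ₜ[A] (g n) y) ((g n).baseChange S (σ n (q n (s ⊗ₜ y))))]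
    exact Submodule.add_mem _ (Submodule.mem_sup_left hk)
      (Submodule.mem_sup_right ⟨q n (s ⊗ₜ y), rfl⟩)
  · intro n x hx
    simp only [FS, LinearMap.mem_ker, LinearMap.comp_apply] at hx
    rw [hcomm, hσ] at hx
    exact (injective_iff_map_eq_zero _).mp
      (Module.Flat.lTensor_preserves_injective_linearMap (M := S) _ (gbar_inj n)) x hx

open TensorProduct in
theorem projective_away_mul {A : Type} [CommRing A] (M : Type) [AddCommGroup M] [Module A M]
    (a b c : A) (hc : c = a * b)
    (h : Module.Projective (Localization.Away a) (Localization.Away a ⊗[A] M)) :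
    Module.Projective (Localization.Away c) (Localization.Away c ⊗[A] M) := by
  have hu : IsUnit (algebraMap A (Localization.Away c) a) := by
    have := IsLocalization.Away.algebraMap_isUnit (S := Localization.Away c) c
    rw [hc, map_mul] at this
    exact hc ▸ isUnit_of_mul_isUnit_left this
  let : Algebra (Localization.Away a) (Localization.Away c) :=
    (IsLocalization.Away.lift a hu).toAlgebra
  have : IsScalarTower A (Localization.Away a) (Localization.Away c) :=
    IsScalarTower.of_algebraMap_eq fun x ↦ (IsLocalization.Away.lift_eq a hu x).symm
  exact Module.Projective.of_equiv' (AlgebraTensorModule.cancelBaseChange A (Localization.Away a)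
    (Localization.Away c) (Localization.Away c) M)

open TensorProduct in
theorem exists_common_projective_away {A : Type} [CommRing A] (Q : ℕ → Type)
    [∀ n, AddCommGroup (Q n)] [∀ n, Module A (Q n)] (hQ : ∀ n, GenericallyProjective A (Q n))
    (k : ℕ) : ∃ a : A, (∀ p ∈ minimalPrimes A, a ∉ p) ∧ ∀ n < k,
      Module.Projective (Localization.Away a) (Localization.Away a ⊗[A] Q n) := by
  induction k with
  | zero => exact ⟨1, fun p hp ↦ p.ne_top_iff_one.mp hp.1.1.ne_top, by simp⟩
  | succ k ih =>
    obtain ⟨a, ha, ha'⟩ := ih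
    obtain ⟨b, hb, hb'⟩ := hQ k
    refine ⟨a * b, fun p hp h ↦ (hp.1.1.mem_or_mem h).elim (ha p hp) (hb p hp), fun n hn ↦ ?_⟩
    obtain hn | rfl := Nat.lt_succ_iff_lt_or_eq.mp hn
    · exact projective_away_mul _ a b _ rfl (ha' n hn)
    · exact projective_away_mul _ b a _ (mul_comm a b) hb'

/-- The case of no variables: the free locus is open and contains all minimal primes. -/
theorem genericallyProjective_of_finite (A M : Type) [CommRing A] [IsNoetherianRing A]
    [IsReduced A] [AddCommGroup M] [Module A M] [Module.Finite A M] :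
    GenericallyProjective A M := by
  have : Module.FinitePresentation A M := Module.finitePresentation_of_finite A M
  obtain ⟨I, hI⟩ := (PrimeSpectrum.isClosed_iff_zeroLocus_ideal _).mp
    (Module.isOpen_freeLocus (R := A) (M := M)).isClosed_compl
  have hmin (p : Ideal A) (hp : p ∈ minimalPrimes A) : ¬ I ≤ p := by
    intro hle
    have := hp.1.1
    have hp' : (⟨p, hp.1.1⟩ : PrimeSpectrum A) ∈ (Module.freeLocus A M)ᶜ := hI ▸ hle
    refine hp' ?_
    let : Field (Localization.AtPrime p) := IsField.toField <| by
      have := Ring.KrullDimLE.of_isLocalization p hp (Localization.AtPrime p)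
      exact Ring.KrullDimLE.isField_of_isReduced
    exact Module.Free.of_divisionRing (Localization.AtPrime p) (LocalizedModule p.primeCompl M)
  obtain ⟨a, haI, ha⟩ : ∃ a ∈ I, ∀ p ∈ minimalPrimes A, a ∉ p := by
    by_contra! h
    have := (I.subset_union_prime_finite (minimalPrimes.finite_of_isNoetherianRing A)
      (f := id) ⊥ ⊥ fun p hp _ _ ↦ hp.1.1).1 (fun a ha ↦ by simpa using h a ha)
    obtain ⟨p, hp, hle⟩ := this
    exact hmin p hp hle
  refine ⟨a, ha, ?_⟩
  have hsub : (PrimeSpectrum.basicOpen a : Set (PrimeSpectrum A)) ⊆ Module.freeLocus A M := by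
    intro p hp
    by_contra hp'
    rw [← Set.mem_compl_iff, hI] at hp'
    exact hp (hp' haI)
  have := Module.basicOpen_subset_freeLocus_iff.mp hsub
  exact Module.Projective.of_equiv' (IsLocalizedModule.isBaseChange (Submonoid.powers a)
    (Localization.Away a) (LocalizedModule.mkLinearMap (Submonoid.powers a) M)).equiv.symm

open Polynomial TensorProduct in
/-- The induction step: generic projectivity for finite `B`-modules implies it for finite
`B[X]`-modules. -/
theorem genericallyProjective_polynomial (A B : Type) [CommRing A] [CommRing B] [Algebra A B]
    [IsNoetherianRing B]
    (hB : ∀ (N : Type) [AddCommGroup N] [Module A N] [Module B N] [IsScalarTower A B N]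
      [Module.Finite B N], GenericallyProjective A N)
    (M : Type) [AddCommGroup M] [Module A M] [Module B[X] M] [IsScalarTower A B[X] M]
    [Module.Finite B[X] M] : GenericallyProjective A M := by
  let : Module B M := Module.compHom M (C : B →+* B[X])
  have : IsScalarTower B B[X] M := IsScalarTower.of_algebraMap_smul fun _ _ ↦ rfl
  have : IsScalarTower A B M := IsScalarTower.of_algebraMap_smul fun a m ↦ by
    rw [← algebraMap_smul B[X] a m]
    rfl
  obtain ⟨s, hs⟩ := Module.Finite.fg_top (R := B[X]) (M := M)
  let N : Submodule B M := Submodule.span B s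
  have : Module.Finite B N := Module.Finite.span_finset B s
  let x : Module.End B M := Algebra.lsmul B B M (X : B[X])
  -- `F n` is the sum of the `X ^ i N` with `i < n`.
  let g (n : ℕ) : N →ₗ[B] M := (x ^ n) ∘ₗ N.subtype
  let F (n : ℕ) : Submodule B M := Nat.rec ⊥ (fun n Fn ↦ Fn ⊔ LinearMap.range (g n)) n
  have hsucc (n : ℕ) : F (n + 1) = F n ⊔ LinearMap.range (g n) := rfl
  have hx (n : ℕ) (m : M) (hm : m ∈ F n) : x m ∈ F (n + 1) := by
    induction n generalizing m with
    | zero =>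
      obtain rfl : m = 0 := hm
      simp
    | succ n ih =>
      rw [hsucc] at hm
      obtain ⟨f, hf, _, ⟨y, rfl⟩, rfl⟩ := Submodule.mem_sup.mp hm
      rw [map_add, hsucc (n + 1)]
      refine Submodule.add_mem _ (Submodule.mem_sup_left (ih f hf))
        (Submodule.mem_sup_right ⟨y, ?_⟩)
      simp [g, pow_succ']
  have htop : ⨆ n, F n = ⊤ := by
    have hxU (m : M) (hm : m ∈ ⨆ n, F n) : x m ∈ ⨆ n, F n := by
      refine Submodule.iSup_induction F (motive := fun m ↦ x m ∈ ⨆ n, F n) hm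
        (fun n m hm ↦ Submodule.mem_iSup_of_mem (n + 1) (hx n m hm)) (by simp) fun y z hy hz ↦ ?_
      rw [map_add]
      exact Submodule.add_mem _ hy hz
    rw [← top_le_iff]
    intro m _
    have hm : m ∈ Submodule.span B[X] (s : Set M) := hs ▸ Submodule.mem_top
    induction hm using Submodule.span_induction with
    | zero => exact Submodule.zero_mem _
    | add y z _ _ hy hz => exact Submodule.add_mem _ (hy trivial) (hz trivial)
    | mem m hm =>
      refine Submodule.mem_iSup_of_mem 1 (Submodule.mem_sup_right ⟨⟨m, Submodule.subset_span hm⟩, ?_⟩)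
      simp [g]
    | smul p m _ hm =>
      replace hm := hm trivial
      rename_i h
      clear h
      induction p using Polynomial.induction_on' with
      | add p q hp hq => rw [add_smul]; exact Submodule.add_mem _ hp hq
      | monomial n b =>
        have hn : (x ^ n) m ∈ ⨆ n, F n := by
          induction n with
          | zero => simpa
          | succ n ih => rw [pow_succ']; exact hxU _ ih
        have : monomial n b • m = b • (x ^ n) m := by
          rw [← Polynomial.C_mul_X_pow_eq_monomial, mul_smul, ← map_pow]
          rfl
        rw [this]
        exact Submodule.smul_mem _ _ hn
  -- The kernels of `N → F (n + 1) / F n` increase with `n`, hence stabilise.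
  let K : ℕ →o Submodule B N := ⟨fun n ↦ (F n).comap (g n), monotone_nat_of_le_succ fun n y hy ↦ by
    have := hx n _ hy
    simpa [g, pow_succ'] using this⟩
  obtain ⟨k, hk⟩ := monotone_stabilizes_iff_noetherian.mpr (inferInstance : IsNoetherian B N) K
  obtain ⟨a, ha, hproj⟩ := exists_common_projective_away (A := A) (fun n ↦ N ⧸ K n)
    (fun n ↦ hB _) (k + 1)
  have hproj' (n : ℕ) :
      Module.Projective (Localization.Away a) (Localization.Away a ⊗[A] (N ⧸ K n)) := by
    obtain hn | hn := lt_or_ge n (k + 1)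
    · exact hproj n hn
    · rw [← hk n (by lia)]
      exact hproj k (by lia)
  refine ⟨a, ha, projective_baseChange_of_filtration (fun n ↦ (F n).restrictScalars A)
    (fun n ↦ (g n).restrictScalars A) rfl ?_ (fun n ↦ ?_) fun n ↦ ?_⟩
  · rw [← Submodule.restrictScalars_iSup, htop, Submodule.restrictScalars_top]
  · rw [hsucc, Submodule.restrictScalars_sup]
    rfl
  · have := hproj' n
    exact Module.Projective.of_equiv' ((Submodule.Quotient.restrictScalarsEquiv A (K n)).symm.baseChange
      A (Localization.Away a) _ _)

theorem genericallyProjective_mvPolynomial (A : Type) [CommRing A] [IsNoetherianRing A]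
    [IsReduced A] (r : ℕ) (M : Type) [AddCommGroup M] [Module A M]
    [Module (MvPolynomial (Fin r) A) M] [IsScalarTower A (MvPolynomial (Fin r) A) M]
    [Module.Finite (MvPolynomial (Fin r) A) M] : GenericallyProjective A M := by
  induction r generalizing M with
  | zero =>
    have : Module.Finite A (MvPolynomial (Fin 0) A) :=
      Module.Finite.equiv (MvPolynomial.isEmptyAlgEquiv A (Fin 0)).symm.toLinearEquiv
    have : Module.Finite A M := Module.Finite.trans (MvPolynomial (Fin 0) A) M
    exact genericallyProjective_of_finite A M
  | succ r ih =>
    let e := (MvPolynomial.finSuccEquiv A r).symm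
    let : Module (Polynomial (MvPolynomial (Fin r) A)) M := Module.compHom M e.toRingHom
    have : IsScalarTower A (Polynomial (MvPolynomial (Fin r) A)) M :=
      IsScalarTower.of_algebraMap_smul fun a m ↦ by
        change e (algebraMap _ _ a) • m = _
        rw [e.commutes, algebraMap_smul]
    have : Module.Finite (Polynomial (MvPolynomial (Fin r) A)) M := by
      let σ : MvPolynomial (Fin (r + 1)) A →+* Polynomial (MvPolynomial (Fin r) A) := e.symm
      have : RingHomSurjective σ := ⟨e.symm.surjective⟩
      let f : M →ₛₗ[σ] M :=
        { toFun := id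
          map_add' := fun _ _ ↦ rfl
          map_smul' := fun p m ↦ by
            change p • m = e (e.symm p) • m
            rw [e.apply_symm_apply] }
      exact Module.Finite.of_surjective f Function.surjective_id
    exact genericallyProjective_polynomial A (MvPolynomial (Fin r) A) (fun N _ _ _ _ _ ↦ ih N) M

theorem generic_projectivity_of_graded_module
    (A : Type) [CommRing A] [IsNoetherianRing A] [IsReduced A]
    (G : Type) [AddCommGroup G] [DecidableEq G]
    (r : ℕ) (w : Fin r → G) (ψ : G →+ ℤ) (hψ : ∀ i, 0 < ψ (w i))
    (M : Type) [AddCommGroup M] [Module (MvPolynomial (Fin r) A) M]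
    [Module A M] [IsScalarTower A (MvPolynomial (Fin r) A) M]
    [Module.Finite (MvPolynomial (Fin r) A) M]
    (ℳ : G → Submodule A M) [DirectSum.Decomposition ℳ]
    [SetLike.GradedSMul (weightedHomogeneousSubmodule A w) ℳ] :
    ∃ a : A, (∀ p ∈ minimalPrimes A, a ∉ p) ∧
      Module.Projective (Localization.Away a)
        (LocalizedModule (Submonoid.powers a) M) := by
  obtain ⟨a, ha, hproj⟩ := genericallyProjective_mvPolynomial A r M
  exact ⟨a, ha, Module.Projective.of_equiv' (IsLocalizedModule.isBaseChange (Submonoid.powers a)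
    (Localization.Away a) (LocalizedModule.mkLinearMap (Submonoid.powers a) M)).equiv⟩
end
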